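/- arXiv:1809.07966 — 2 statements merged into one kernel-verified Lean document; each statement's English description precedes it below -/
import Mathlib

section
/- Consider the simple Curie–Weiss model at inverse temperature β=1, i.e., the general Curie–Weiss model CW(ρ) with ρ = ½δ₁ + ½δ₋₁ (δ the Dirac point mass). Let W = n^{1/4}·m(X), and let Y be a random variable with density f_Y(y) = (√2/(3^{1/4}·Γ(1/4)))·e^{−y⁴/12}. Then there is a constant C>0 such that |P(W ≥ z)/P(Y ≥ z) − 1| ≤ C·n^{−1/2}·(1+z⁶) uniformly for z ∈ (0, n^{1/12}). -/
open MeasureTheory Real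

/-- The Gibbs measure of the general Curie–Weiss model `CW(ρ)` at inverse
temperature `β = 1`. -/
noncomputable def cwMeasure (ρ : Measure ℝ) [IsProbabilityMeasure ρ] (n : ℕ) :
    Measure (Fin n → ℝ) :=
  (Measure.pi fun _ : Fin n => ρ).withDensity fun x =>
    ENNReal.ofReal (Real.exp ((∑ i, x i) ^ 2 / (2 * n)) /
      ∫ y : Fin n → ℝ, Real.exp ((∑ i, y i) ^ 2 / (2 * n))
        ∂(Measure.pi fun _ : Fin n => ρ))

/-- The Rademacher measure `ρ = ½δ₁ + ½δ₋₁`. -/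
noncomputable def simpleRho : Measure ℝ :=
  ((1 : ENNReal) / 2) • Measure.dirac (1 : ℝ) + ((1 : ENNReal) / 2) • Measure.dirac (-1 : ℝ)

instance : IsProbabilityMeasure simpleRho := by
  constructor
  simp [simpleRho]
  exact ENNReal.inv_two_add_inv_two

/-- Tail probability `P(Y ≥ z)` of the random variable `Y` with density
`f_Y(y) = (√2/(3^{1/4} Γ(1/4))) e^{−y⁴/12}`. -/
noncomputable def tailW412 (z : ℝ) : ℝ :=
  ∫ y in Set.Ici z,
    Real.sqrt 2 / ((3 : ℝ) ^ ((1 : ℝ) / 4) * Real.Gamma (1 / 4)) * Real.exp (-(y ^ 4) / 12)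

lemma log_lower {x : ℝ} (h0 : 0 ≤ x) (h1 : x < 1) :
    2 * x + 2 / 3 * x ^ 3 ≤ log (1 + x) - log (1 - x) := by
  have h := hasSum_log_sub_log_of_abs_lt_one (x := x) (by rw [abs_of_nonneg h0]; exact h1)
  have := sum_le_hasSum (Finset.range 2) (fun k _ => by positivity) h
  norm_num [Finset.sum_range_succ] at this
  linarith

lemma log_upper {x : ℝ} (h0 : 0 ≤ x) (h1 : x ≤ 1 / 2) :
    log (1 + x) - log (1 - x) ≤ 2 * x + 2 / 3 * x ^ 3 + 8 / 15 * x ^ 5 := by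
  have hd : ∀ y ∈ Set.Icc (0:ℝ) (1/2), HasDerivAt
      (fun x : ℝ => 2 * x + 2 / 3 * x ^ 3 + 8 / 15 * x ^ 5 - (log (1 + x) - log (1 - x)))
      (2 + 2 * y ^ 2 + 8 / 3 * y ^ 4 - (1 / (1 + y) + 1 / (1 - y))) y := by
    intro y hy
    have a1 : HasDerivAt (fun x : ℝ => log (1 + x)) (1 / (1 + y)) y :=
      HasDerivAt.log ((hasDerivAt_id y).const_add 1) (by linarith [hy.1])
    have a2 : HasDerivAt (fun x : ℝ => log (1 - x)) ((-1) / (1 - y)) y :=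
      HasDerivAt.log ((hasDerivAt_id y).const_sub 1) (by linarith [hy.2])
    have a3 := (((hasDerivAt_id y).const_mul 2).add ((hasDerivAt_pow 3 y).const_mul (2/3))).add
      ((hasDerivAt_pow 5 y).const_mul (8/15))
    convert! a3.sub (a1.sub a2) using 1
    norm_num
    ring
  have hm := monotoneOn_of_deriv_nonneg (convex_Icc (0:ℝ) (1/2))
    (fun y hy => (hd y hy).continuousAt.continuousWithinAt)
    (fun y hy => (hd y (interior_subset hy)).differentiableAt.differentiableWithinAt)
    (fun y hy => by
      have hy := interior_subset hy
      rw [(hd y hy).deriv]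
      obtain ⟨b0, b1⟩ := hy
      have e : 1 / (1 + y) + 1 / (1 - y) = 2 / (1 - y ^ 2) := by
        have : 1 + y ≠ 0 := by linarith
        have : 1 - y ≠ 0 := by linarith
        have : 1 - y ^ 2 ≠ 0 := by nlinarith
        field_simp
        ring
      rw [e, sub_nonneg, div_le_iff₀ (by nlinarith)]
      have : 0 ≤ y ^ 4 * (1 / 4 - y ^ 2) := mul_nonneg (by positivity) (by nlinarith)
      nlinarith)
  have := hm (Set.left_mem_Icc.2 (by norm_num)) (⟨h0, h1⟩ : x ∈ Set.Icc (0:ℝ) (1/2)) h0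
  simp at this
  linarith

noncomputable def bb (n k : ℕ) : ℝ :=
  (n.choose k : ℝ) * Real.exp ((2 * (k : ℝ) - n) ^ 2 / (2 * n))

lemma bb_pos {n k : ℕ} (h : k ≤ n) : 0 < bb n k := by
  have := Nat.choose_pos h
  unfold bb
  positivity

lemma bb_symm {n k : ℕ} (h : k ≤ n) : bb n (n - k) = bb n k := by
  unfold bb
  rw [Nat.choose_symm h, Nat.cast_sub h]
  congr 3
  ring

lemma bb_step {n k : ℕ} (h : k < n) (hk : n ≤ 2 * k + 1) (t : ℝ) (ht : t = 2 * k + 1 - n) :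
    log (bb n (k + 1)) - log (bb n k) =
      2 * t / n - (log (1 + t / (n + 1)) - log (1 - t / (n + 1))) := by
  have hn : (0:ℝ) < n := by exact_mod_cast (by omega : 0 < n)
  have h' : (k:ℝ) + 1 ≤ n := by exact_mod_cast h
  have hk' : (n:ℝ) ≤ 2 * k + 1 := by exact_mod_cast hk
  have c1 : (0:ℝ) < n.choose k := by exact_mod_cast Nat.choose_pos h.le
  have c2 : (0:ℝ) < n.choose (k+1) := by exact_mod_cast Nat.choose_pos h
  have hc : (n.choose (k+1) : ℝ) * (k + 1) = n.choose k * (n - k) := by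
    have := Nat.choose_succ_right_eq n k
    rw [← Nat.cast_sub h.le]
    exact_mod_cast this
  have hl : log (n.choose (k+1)) + log (k + 1 : ℝ) = log (n.choose k) + log (n - k : ℝ) := by
    rw [← log_mul c2.ne' (by positivity), ← log_mul c1.ne' (by linarith), hc]
  have e1 : 1 + t / (n + 1) = (2 / (n + 1)) * (k + 1 : ℝ) := by
    rw [ht]; field_simp; ring
  have e2 : 1 - t / (n + 1) = (2 / (n + 1)) * (n - k : ℝ) := by
    rw [ht]; field_simp; ring
  rw [e1, e2, log_mul (by positivity) (by positivity), log_mul (by positivity) (by linarith)]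
  unfold bb
  rw [log_mul c2.ne' (exp_ne_zero _), log_mul c1.ne' (exp_ne_zero _), log_exp, log_exp]
  have e3 : (2 * ((k + 1 : ℕ) : ℝ) - n) ^ 2 / (2 * n) - (2 * (k : ℝ) - n) ^ 2 / (2 * n)
      = 2 * t / n := by
    rw [ht]; push_cast; field_simp; ring
  linarith

lemma incr_upper {N t : ℝ} (hN : 1 ≤ N) (ht : 0 ≤ t) (htN : t ≤ N) :
    2 * t / N - (2 * (t / (N + 1)) + 2 / 3 * (t / (N + 1)) ^ 3) ≤
      -((t + 1) ^ 4 - (t - 1) ^ 4) / (12 * N ^ 3) + 2 * ((t + 1) ^ 2 - (t - 1) ^ 2) / N ^ 2 := by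
  have hN0 : 0 < N := by linarith
  have a1 : 2 * t / N - 2 * (t / (N + 1)) ≤ 2 * t / N ^ 2 := by
    have : 2 * t / N - 2 * (t / (N + 1)) = 2 * t / (N * (N + 1)) := by field_simp; ring
    rw [this]
    gcongr
    nlinarith
  have a2 : t / N ^ 3 ≤ t / N ^ 2 := by
    gcongr
    · norm_num
  have a3 : t ^ 3 / N ^ 3 - t ^ 3 / (N + 1) ^ 3 ≤ 3 * t / N ^ 2 := by
    have e : t ^ 3 / N ^ 3 - t ^ 3 / (N + 1) ^ 3 =
        t ^ 3 * (3 * N ^ 2 + 3 * N + 1) / (N ^ 3 * (N + 1) ^ 3) := by field_simp; ring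
    rw [e, div_le_div_iff₀ (by positivity) (by positivity)]
    have h3 : t ^ 3 ≤ t * N ^ 2 := by
      have : t ^ 2 ≤ N ^ 2 := by gcongr
      nlinarith
    calc t ^ 3 * (3 * N ^ 2 + 3 * N + 1) * N ^ 2
        ≤ (t * N ^ 2) * (3 * N ^ 2 + 3 * N + 1) * N ^ 2 := by gcongr
      _ = t * N ^ 3 * (N * (3 * N ^ 2 + 3 * N + 1)) := by ring
      _ ≤ t * N ^ 3 * (3 * (N + 1) ^ 3) := by
          refine mul_le_mul_of_nonneg_left ?_ (by positivity)
          nlinarith [sq_nonneg N]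
      _ = 3 * t * (N ^ 3 * (N + 1) ^ 3) := by ring
  have e1 : -((t + 1) ^ 4 - (t - 1) ^ 4) / (12 * N ^ 3) =
      -(2/3) * (t ^ 3 / N ^ 3) - 2/3 * (t / N ^ 3) := by field_simp; ring
  have e2 : 2 * ((t + 1) ^ 2 - (t - 1) ^ 2) / N ^ 2 = 8 * (t / N ^ 2) := by field_simp; ring
  rw [e1, e2, div_pow]
  have e3 : 2 * t / N ^ 2 = 2 * (t / N ^ 2) := by ring
  have e4 : 3 * t / N ^ 2 = 3 * (t / N ^ 2) := by ring
  rw [e3] at a1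
  rw [e4] at a3
  have : 0 ≤ t / N ^ 2 := by positivity
  linarith

lemma incr_lower {N t : ℝ} (hN : 1 ≤ N) (ht : 0 ≤ t) :
    -((t + 1) ^ 4 - (t - 1) ^ 4) / (12 * N ^ 3) - ((t + 1) ^ 6 - (t - 1) ^ 6) / N ^ 5 ≤
    2 * t / N - (2 * (t / (N + 1)) + 2 / 3 * (t / (N + 1)) ^ 3 + 8 / 15 * (t / (N + 1)) ^ 5) := by
  have hN0 : 0 < N := by linarith
  have a0 : t / (N + 1) ≤ t / N := by gcongr; linarith
  have a3 : (t / (N + 1)) ^ 3 ≤ (t / N) ^ 3 := by gcongr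
  have a5 : (t / (N + 1)) ^ 5 ≤ (t / N) ^ 5 := by gcongr
  have e1 : -((t + 1) ^ 4 - (t - 1) ^ 4) / (12 * N ^ 3) =
      -(2/3) * (t / N) ^ 3 - 2/3 * (t / N ^ 3) := by field_simp; ring
  have e2 : ((t + 1) ^ 6 - (t - 1) ^ 6) / N ^ 5 =
      12 * (t / N) ^ 5 + (40 * t ^ 3 + 12 * t) / N ^ 5 := by field_simp; ring
  rw [e1, e2]
  have : 0 ≤ (40 * t ^ 3 + 12 * t) / N ^ 5 := by positivity
  have : 0 ≤ t / N ^ 3 := by positivity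
  have : 0 ≤ (t / N) ^ 5 := by positivity
  have e5 : 2 * t / N = 2 * (t / N) := by ring
  rw [e5]
  linarith

lemma bb_upper {n m q : ℕ} (hn : 1 ≤ n) (hm : m = (n + 1) / 2) (hq : q = n / 2) :
    ∀ j : ℕ, j ≤ q → log (bb n (m + j)) - log (bb n m) ≤
      -(2 * ((m:ℝ) + j) - n) ^ 4 / (12 * n ^ 3) + 2 * (2 * ((m:ℝ) + j) - n) ^ 2 / n ^ 2 := by
  have hN : (1:ℝ) ≤ n := by exact_mod_cast hn
  intro j
  induction j with
  | zero =>
    intro _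
    simp only [sub_self, Nat.cast_zero, add_zero]
    have h0 : 0 ≤ 2 * (m:ℝ) - n := by
      have : n ≤ 2 * m := by omega
      have : (n:ℝ) ≤ 2 * m := by exact_mod_cast this
      linarith
    have h1 : 2 * (m:ℝ) - n ≤ 1 := by
      have : 2 * m ≤ n + 1 := by omega
      have : 2 * (m:ℝ) ≤ n + 1 := by exact_mod_cast this
      linarith
    set s := 2 * (m:ℝ) - n
    have : s ^ 4 / (12 * (n:ℝ) ^ 3) ≤ 2 * s ^ 2 / n ^ 2 := by
      have h2 : s ^ 4 ≤ s ^ 2 := pow_le_pow_of_le_one h0 h1 (by norm_num)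
      have h3 : (n:ℝ) ^ 2 ≤ 12 * n ^ 3 := by nlinarith [sq_nonneg (n:ℝ)]
      have h4 : s ^ 4 ≤ 2 * s ^ 2 := by nlinarith [sq_nonneg s]
      gcongr
    rw [neg_div]
    linarith
  | succ j ih =>
    intro hj
    have ih := ih (by omega)
    set t : ℝ := 2 * ((m + j : ℕ) : ℝ) + 1 - n with ht
    have hs := bb_step (n := n) (k := m + j) (by omega) (by omega) t ht
    have ht0 : 0 ≤ t := by
      have : n ≤ 2 * (m + j) + 1 := by omega
      have : (n:ℝ) ≤ 2 * ((m + j : ℕ) : ℝ) + 1 := by exact_mod_cast this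
      linarith
    have htn : t ≤ n := by
      have : 2 * (m + j) + 1 ≤ n + n := by omega
      have : 2 * ((m + j : ℕ) : ℝ) + 1 ≤ n + n := by exact_mod_cast this
      linarith
    have hx : t / (n + 1) < 1 := by rw [div_lt_one (by positivity)]; linarith
    have hl := log_lower (by positivity) hx
    have hi := incr_upper hN ht0 htn
    have e1 : 2 * ((m:ℝ) + ((j + 1 : ℕ) : ℝ)) - n = t + 1 := by rw [ht]; push_cast; ring
    have e2 : 2 * ((m:ℝ) + j) - n = t - 1 := by rw [ht]; push_cast; ring
    rw [e1]
    rw [e2] at ih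
    rw [← Nat.add_assoc]
    have e3 : -((t + 1) ^ 4 - (t - 1) ^ 4) / (12 * (n:ℝ) ^ 3) =
      -(t + 1) ^ 4 / (12 * (n:ℝ) ^ 3) - (-(t - 1) ^ 4 / (12 * (n:ℝ) ^ 3)) := by ring
    have e4 : 2 * ((t + 1) ^ 2 - (t - 1) ^ 2) / (n:ℝ) ^ 2 =
      2 * (t + 1) ^ 2 / (n:ℝ) ^ 2 - 2 * (t - 1) ^ 2 / (n:ℝ) ^ 2 := by ring
    linarith

lemma bb_lower {n m q : ℕ} (hn : 1 ≤ n) (hm : m = (n + 1) / 2) (hq : q = n / 2) :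
    ∀ j : ℕ, j ≤ q → 2 * (2 * ((m:ℝ) + j) - n) ≤ n →
      -(2 * ((m:ℝ) + j) - n) ^ 4 / (12 * n ^ 3) - (2 * ((m:ℝ) + j) - n) ^ 6 / n ^ 5 ≤
      log (bb n (m + j)) - log (bb n m) := by
  have hN : (1:ℝ) ≤ n := by exact_mod_cast hn
  intro j
  induction j with
  | zero =>
    intro _ _
    simp only [sub_self, Nat.cast_zero, add_zero]
    set s := 2 * (m:ℝ) - n
    have h1 : 0 ≤ s ^ 4 / (12 * (n:ℝ) ^ 3) := by positivity
    have h2 : 0 ≤ s ^ 6 / (n:ℝ) ^ 5 := by positivity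
    rw [neg_div]
    linarith
  | succ j ih =>
    intro hj hh
    set t : ℝ := 2 * ((m + j : ℕ) : ℝ) + 1 - n with ht
    have e1 : 2 * ((m:ℝ) + ((j + 1 : ℕ) : ℝ)) - n = t + 1 := by rw [ht]; push_cast; ring
    have e2 : 2 * ((m:ℝ) + j) - n = t - 1 := by rw [ht]; push_cast; ring
    rw [e1] at hh
    have ih := ih (by omega) (by rw [e2]; linarith)
    have hs := bb_step (n := n) (k := m + j) (by omega) (by omega) t ht
    have ht0 : 0 ≤ t := by
      have : n ≤ 2 * (m + j) + 1 := by omega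
      have : (n:ℝ) ≤ 2 * ((m + j : ℕ) : ℝ) + 1 := by exact_mod_cast this
      linarith
    have hx : t / (n + 1) ≤ 1 / 2 := by rw [div_le_iff₀ (by positivity)]; linarith
    have hl := log_upper (by positivity) hx
    have hi := incr_lower hN ht0
    rw [e1]
    rw [e2] at ih
    rw [← Nat.add_assoc]
    have e3 : -((t + 1) ^ 4 - (t - 1) ^ 4) / (12 * (n:ℝ) ^ 3) =
      -(t + 1) ^ 4 / (12 * (n:ℝ) ^ 3) - (-(t - 1) ^ 4 / (12 * (n:ℝ) ^ 3)) := by ring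
    have e4 : ((t + 1) ^ 6 - (t - 1) ^ 6) / (n:ℝ) ^ 5 =
      (t + 1) ^ 6 / (n:ℝ) ^ 5 - (t - 1) ^ 6 / (n:ℝ) ^ 5 := by ring
    linarith

noncomputable def gg (y : ℝ) : ℝ := Real.exp (-(y ^ 4) / 12)

lemma gg_pos (y : ℝ) : 0 < gg y := exp_pos _

lemma gg_cont : Continuous gg := by unfold gg; fun_prop

lemma abs_exp_sub_one_le' {E M : ℝ} (hM : 0 ≤ M) (h : E ≤ M) : |exp E - 1| ≤ exp M * |E| := by
  have h1 : 1 ≤ exp M := one_le_exp hM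
  rcases le_total 0 E with h0 | h0
  · have h2 : 1 ≤ exp E := one_le_exp h0
    rw [abs_of_nonneg (by linarith), abs_of_nonneg h0]
    have h3 : 1 - E ≤ exp (-E) := by linarith [add_one_le_exp (-E)]
    have h4 : exp E * (1 - E) ≤ 1 := by
      calc exp E * (1 - E) ≤ exp E * exp (-E) := by gcongr
        _ = 1 := by rw [← exp_add]; simp
    have h5 : exp E ≤ exp M := exp_le_exp.2 h
    nlinarith
  · have h2 : exp E ≤ 1 := exp_le_one_iff.2 h0
    rw [abs_of_nonpos (by linarith), abs_of_nonpos h0]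
    nlinarith [add_one_le_exp E]

lemma key_bound {r w y D E : ℝ} (hr : 1 ≤ r) (hw0 : 0 ≤ w) (hwy : w ≤ y)
    (hE : E = D + y ^ 4 / 12)
    (hlo : 2 * w ≤ r → -(w ^ 4 / 12) - w ^ 6 / r ^ 2 ≤ D)
    (hEu : E ≤ 2 / 3 * (y ^ 3 / r ^ 3) + 2 * (w ^ 2 / r ^ 2)) (hE20 : E ≤ 20) :
    |exp E - 1| ≤ 64 * exp 20 / r ^ 2 * (1 + y ^ 6) := by
  have hy0 : 0 ≤ y := hw0.trans hwy
  have hr0 : 0 < r := by linarith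
  have hy6 : 0 ≤ y ^ 6 := by positivity
  have hr2 : 0 < r ^ 2 := by positivity
  rcases le_or_gt (2 * w) r with hc | hc
  · have hlo := hlo hc
    have hEl : -(y ^ 6 / r ^ 2) ≤ E := by
      have : w ^ 6 / r ^ 2 ≤ y ^ 6 / r ^ 2 := by gcongr
      have : w ^ 4 ≤ y ^ 4 := by gcongr
      linarith
    have hEu2 : E ≤ 3 * ((1 + y ^ 6) / r ^ 2) := by
      have a : y ^ 3 / r ^ 3 ≤ (1 + y ^ 6) / r ^ 2 := by
        gcongr ?_ / ?_
        · nlinarith [sq_nonneg (y ^ 3 - 1)]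
        · exact pow_le_pow_right₀ hr (by norm_num)
      have b : w ^ 2 / r ^ 2 ≤ (1 + y ^ 6) / r ^ 2 := by
        gcongr ?_ / _
        calc w ^ 2 ≤ y ^ 2 := by gcongr
          _ ≤ 1 + y ^ 6 := by
            rcases le_total (y ^ 2) 1 with h | h
            · linarith
            · nlinarith [sq_nonneg (y ^ 2)]
      have : 0 ≤ (1 + y ^ 6) / r ^ 2 := by positivity
      linarith
    have habs : |E| ≤ 3 * ((1 + y ^ 6) / r ^ 2) := by
      rw [abs_le]
      refine ⟨?_, hEu2⟩
      have e : (1 + y ^ 6) / r ^ 2 = 1 / r ^ 2 + y ^ 6 / r ^ 2 := by ring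
      have : 0 ≤ 1 / r ^ 2 := by positivity
      have : 0 ≤ y ^ 6 / r ^ 2 := by positivity
      rw [e]
      linarith
    calc |exp E - 1| ≤ exp 20 * |E| := abs_exp_sub_one_le' (by norm_num) hE20
      _ ≤ exp 20 * (3 * ((1 + y ^ 6) / r ^ 2)) := by gcongr
      _ = 3 * (exp 20 / r ^ 2 * (1 + y ^ 6)) := by ring
      _ ≤ 64 * (exp 20 / r ^ 2 * (1 + y ^ 6)) := by
        have : 0 ≤ exp 20 / r ^ 2 * (1 + y ^ 6) := by positivity
        linarith
      _ = _ := by ring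
  · have hwr2 : r / 2 ≤ w := by linarith
    have hb : r ^ 2 ≤ 64 * (1 + y ^ 6) := by
      have : (r / 2) ^ 6 ≤ y ^ 6 := by
        gcongr
        linarith
      have h62 : r ^ 2 ≤ r ^ 6 := pow_le_pow_right₀ hr (by norm_num)
      have : (r / 2) ^ 6 = r ^ 6 / 64 := by ring
      linarith
    have hex : |exp E - 1| ≤ exp 20 := by
      have a : exp E ≤ exp 20 := exp_le_exp.2 hE20
      have b : 0 < exp E := exp_pos E
      have c : (1:ℝ) ≤ exp 20 := one_le_exp (by norm_num)
      rw [abs_le]; constructor <;> linarith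
    calc |exp E - 1| ≤ exp 20 := hex
      _ = exp 20 / r ^ 2 * r ^ 2 := by field_simp
      _ ≤ exp 20 / r ^ 2 * (64 * (1 + y ^ 6)) := by gcongr
      _ = _ := by ring

lemma pointwise {n m q : ℕ} (hn : 1 ≤ n) (hm : m = (n + 1) / 2) (hq : q = n / 2)
    {r : ℝ} (hr : 1 ≤ r) (hrn : r ^ 4 = n) {j : ℕ} (hj : j ≤ q) {y : ℝ}
    (h1 : 2 * ((m:ℝ) + j) - n ≤ y * r ^ 3) (h2 : y * r ^ 3 ≤ 2 * ((m:ℝ) + j) - n + 2) :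
    |bb n (m + j) / bb n m - gg y| ≤ 64 * exp 20 / r ^ 2 * ((1 + y ^ 6) * gg y) := by
  have hr0 : 0 < r := by linarith
  have hu := bb_upper hn hm hq j hj
  have hlo := bb_lower hn hm hq j hj
  have hp1 : 0 < bb n m := bb_pos (by omega)
  have hp2 : 0 < bb n (m + j) := bb_pos (by omega)
  have hs0 : 0 ≤ 2 * ((m:ℝ) + j) - n := by
    have : n ≤ 2 * (m + j) := by omega
    have : (n:ℝ) ≤ 2 * ((m + j : ℕ) : ℝ) := by exact_mod_cast this
    push_cast at this
    linarith
  have hsn : 2 * ((m:ℝ) + j) - n ≤ n := by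
    have : 2 * (m + j) ≤ n + n := by omega
    have : 2 * ((m + j : ℕ) : ℝ) ≤ n + n := by exact_mod_cast this
    push_cast at this
    linarith
  set s := 2 * ((m:ℝ) + j) - n with hs
  set D := log (bb n (m + j)) - log (bb n m) with hD
  rw [← hrn] at hu hlo hsn
  obtain ⟨w, hw⟩ : ∃ w, s = w * r ^ 3 := ⟨s / r ^ 3, by field_simp⟩
  rw [hw] at hu hlo hsn hs0 h1 h2
  have hr3 : 0 < r ^ 3 := by positivity
  have hw0 : 0 ≤ w := nonneg_of_mul_nonneg_left hs0 hr3
  have hwr : w ≤ r := by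
    have : w * r ^ 3 ≤ r * r ^ 3 := by linarith [show r * r ^ 3 = r ^ 4 by ring]
    exact le_of_mul_le_mul_right this hr3
  have hwy : w ≤ y := le_of_mul_le_mul_right h1 hr3
  have hy0 : 0 ≤ y := hw0.trans hwy
  have hyw : y - w ≤ 2 / r ^ 3 := by
    rw [le_div_iff₀ hr3]; linarith
  have hy3 : y ≤ 3 * r := by
    have : 2 / r ^ 3 ≤ 2 := by
      rw [div_le_iff₀ hr3]
      have := one_le_pow₀ hr (n := 3)
      linarith
    linarith
  have e1 : -(w * r ^ 3) ^ 4 / (12 * (r ^ 4) ^ 3) = - (w ^ 4 / 12) := by field_simp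
  have e2 : 2 * (w * r ^ 3) ^ 2 / (r ^ 4) ^ 2 = 2 * (w ^ 2 / r ^ 2) := by field_simp
  have e3 : (w * r ^ 3) ^ 6 / (r ^ 4) ^ 5 = w ^ 6 / r ^ 2 := by field_simp
  rw [e1, e2] at hu
  rw [e1, e3] at hlo
  set E := D + y ^ 4 / 12 with hE
  have hratio : bb n (m + j) / bb n m = exp E * gg y := by
    unfold gg
    rw [← exp_add, hE, show D + y ^ 4 / 12 + -y ^ 4 / 12 = D by ring, hD,
      exp_sub, exp_log hp1, exp_log hp2]
  have hy4 : y ^ 4 - w ^ 4 ≤ 8 * (y ^ 3 / r ^ 3) := by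
    have h3 : y ^ 4 - w ^ 4 ≤ 4 * y ^ 3 * (y - w) := by
      have a : w * y ^ 2 ≤ y ^ 3 := by nlinarith [sq_nonneg y]
      have b : w ^ 2 * y ≤ y ^ 3 := by nlinarith [mul_nonneg hw0 hy0]
      have c : w ^ 3 ≤ y ^ 3 := by gcongr
      have e : y ^ 4 - w ^ 4 = (y ^ 3 + w * y ^ 2 + w ^ 2 * y + w ^ 3) * (y - w) := by ring
      rw [e]
      apply mul_le_mul_of_nonneg_right _ (by linarith)
      linarith
    calc y ^ 4 - w ^ 4 ≤ 4 * y ^ 3 * (y - w) := h3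
      _ ≤ 4 * y ^ 3 * (2 / r ^ 3) := by gcongr
      _ = 8 * (y ^ 3 / r ^ 3) := by ring
  have hEu : E ≤ 2 / 3 * (y ^ 3 / r ^ 3) + 2 * (w ^ 2 / r ^ 2) := by linarith
  have hE20 : E ≤ 20 := by
    have a : y ^ 3 / r ^ 3 ≤ 27 := by
      rw [div_le_iff₀ hr3]
      calc y ^ 3 ≤ (3 * r) ^ 3 := by gcongr
        _ = 27 * r ^ 3 := by ring
    have b : w ^ 2 / r ^ 2 ≤ 1 := by
      rw [div_le_one (by positivity)]
      gcongr
    linarith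
  have key : |exp E - 1| ≤ 64 * exp 20 / r ^ 2 * (1 + y ^ 6) := by
    refine key_bound hr hw0 hwy hE (fun h => hlo ?_) hEu hE20
    have := mul_le_mul_of_nonneg_right h hr3.le
    linarith [show r * r ^ 3 = r ^ 4 by ring]
  rw [hratio, show exp E * gg y - gg y = (exp E - 1) * gg y by ring, abs_mul,
    abs_of_pos (gg_pos y), ← mul_assoc]
  exact mul_le_mul_of_nonneg_right key (gg_pos y).le

noncomputable def GG (z : ℝ) : ℝ := ∫ y in Set.Ioi z, gg y

lemma int_pow (k : ℕ) {z : ℝ} (hz : 0 ≤ z) :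
    IntegrableOn (fun y => y ^ k * gg y) (Set.Ioi z) := by
  have := integrableOn_rpow_mul_exp_neg_mul_rpow (p := 4) (s := k) (b := 1 / 12)
    (by have : (0:ℝ) ≤ k := by positivity
        linarith) (by norm_num) (by norm_num)
  have h2 := this.mono_set (Set.Ioi_subset_Ioi hz)
  refine h2.congr_fun (fun y _ => ?_) measurableSet_Ioi
  simp only [gg, rpow_natCast]
  congr 2
  rw [show (4:ℝ) = ((4:ℕ):ℝ) by norm_num, rpow_natCast]
  ring

lemma int_gg {z : ℝ} (hz : 0 ≤ z) : IntegrableOn gg (Set.Ioi z) := by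
  simpa using int_pow 0 hz

lemma int_phi {z : ℝ} (hz : 0 ≤ z) :
    IntegrableOn (fun y => (1 + y ^ 6) * gg y) (Set.Ioi z) := by
  refine ((int_gg hz).add (int_pow 6 hz)).congr_fun (fun y _ => ?_) measurableSet_Ioi
  simp; ring

lemma gg_anti {a b : ℝ} (ha : 0 ≤ a) (h : a ≤ b) : gg b ≤ gg a := by
  unfold gg
  apply exp_le_exp.2
  have : a ^ 4 ≤ b ^ 4 := by gcongr
  linarith

lemma four_cubes {z p u : ℝ} (hz : 0 ≤ z) (h1 : z ≤ p) (h2 : p ≤ u) :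
    p ^ 3 + p ^ 2 * z + p * z ^ 2 + z ^ 3 ≤ 4 * u ^ 3 := by
  have hp : 0 ≤ p := hz.trans h1
  have hu : 0 ≤ u := hp.trans h2
  have hzu : z ≤ u := h1.trans h2
  have b1 : p ^ 3 ≤ u ^ 3 := by gcongr
  have b4 : z ^ 3 ≤ u ^ 3 := by gcongr
  have b2 : p ^ 2 * z ≤ u ^ 2 * u := by gcongr
  have b3 : p * z ^ 2 ≤ u * u ^ 2 := by gcongr
  nlinarith

lemma hazard {z : ℝ} (hz : 0 ≤ z) : gg z ≤ exp (1 / 3) * (1 + z) ^ 3 * GG z := by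
  set d := 1 / (1 + z) ^ 3 with hd
  have hd0 : 0 < d := by positivity
  have hd1 : d ≤ 1 := by
    rw [hd, div_le_one (by positivity)]
    exact one_le_pow₀ (by linarith)
  have h1 : d * gg (z + d) ≤ GG z := by
    have a : ∫ y in Set.Ioc z (z + d), gg (z + d) = d * gg (z + d) := by
      simp [hd0.le]
    rw [← a]
    calc ∫ y in Set.Ioc z (z + d), gg (z + d) ≤ ∫ y in Set.Ioc z (z + d), gg y := by
          apply setIntegral_mono_on (by simp) ((int_gg hz).mono_set Set.Ioc_subset_Ioi_self)
            measurableSet_Ioc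
          intro y hy
          exact gg_anti (hz.trans hy.1.le) hy.2
      _ ≤ GG z := by
          apply setIntegral_mono_set (int_gg hz)
          · exact Filter.Eventually.of_forall fun y => (gg_pos y).le
          · exact Set.Ioc_subset_Ioi_self.eventuallyLE
  have h2 : gg z ≤ exp (1 / 3) * gg (z + d) := by
    unfold gg
    rw [← exp_add]
    apply exp_le_exp.2
    have : (z + d) ^ 4 - z ^ 4 ≤ 4 := by
      have e : (z + d) ^ 4 - z ^ 4 = d * ((z+d)^3 + (z+d)^2 * z + (z + d) * z ^ 2 + z ^ 3) := by ring
      have b1 := four_cubes hz (by linarith : z ≤ z + d) (by linarith : z + d ≤ 1 + z)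
      rw [e]
      calc _ ≤ d * (4 * (1 + z) ^ 3) := by
            apply mul_le_mul_of_nonneg_left _ hd0.le
            linarith
        _ = 4 := by rw [hd]; field_simp
    linarith
  have h3 : gg (z + d) ≤ (1 + z) ^ 3 * GG z := by
    calc gg (z + d) = (1 + z) ^ 3 * (d * gg (z + d)) := by rw [hd]; field_simp
      _ ≤ _ := by gcongr
  calc gg z ≤ _ := h2
    _ ≤ exp (1 / 3) * ((1 + z) ^ 3 * GG z) := by gcongr
    _ = _ := by ring

lemma GG_pos {z : ℝ} (hz : 0 ≤ z) : 0 < GG z := by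
  have h := hazard hz
  have := gg_pos z
  by_contra hh
  have : exp (1 / 3) * (1 + z) ^ 3 * GG z ≤ 0 :=
    mul_nonpos_of_nonneg_of_nonpos (by positivity) (not_lt.1 hh)
  linarith

lemma moment {z : ℝ} (hz : 0 ≤ z) :
    ∫ y in Set.Ioi z, (y ^ 6 - 9 * y ^ 2) * gg y = 3 * z ^ 3 * gg z := by
  have hd : ∀ y ∈ Set.Ici z, HasDerivAt (fun y => -3 * y ^ 3 * gg y)
      ((y ^ 6 - 9 * y ^ 2) * gg y) y := by
    intro y _
    have h1 : HasDerivAt gg (gg y * (-(4 * y ^ 3) / 12)) y := by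
      have := ((hasDerivAt_pow 4 y).neg.div_const 12).exp
      simp only [Nat.cast_ofNat, Nat.add_one_sub_one] at this
      exact this
    have h2 := ((hasDerivAt_pow 3 y).const_mul (-3)).mul h1
    convert! h2 using 1
    norm_num
    ring
  have hi : IntegrableOn (fun y => (y ^ 6 - 9 * y ^ 2) * gg y) (Set.Ioi z) := by
    refine ((int_pow 6 hz).sub ((int_pow 2 hz).const_mul 9)).congr_fun (fun y _ => ?_)
      measurableSet_Ioi
    simp; ring
  have ht : Filter.Tendsto (fun y => -3 * y ^ 3 * gg y) Filter.atTop (nhds 0) := by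
    have h0 : Filter.Tendsto (fun y : ℝ => 36 * y⁻¹) Filter.atTop (nhds 0) := by
      simpa using tendsto_inv_atTop_zero.const_mul (36:ℝ)
    refine squeeze_zero_norm' ?_ h0
    filter_upwards [Filter.eventually_gt_atTop 0] with y hy
    have : gg y ≤ 12 / y ^ 4 := by
      unfold gg
      rw [neg_div, exp_neg, inv_eq_one_div, div_le_div_iff₀ (exp_pos _) (by positivity)]
      linarith [add_one_le_exp (y ^ 4 / 12)]
    rw [norm_mul, norm_mul, norm_of_nonneg (gg_pos y).le, norm_of_nonneg (by positivity : 0 ≤ y ^ 3)]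
    calc ‖(-3:ℝ)‖ * y ^ 3 * gg y ≤ 3 * y ^ 3 * (12 / y ^ 4) := by
          norm_num
          gcongr
      _ = 36 * y⁻¹ := by field_simp; norm_num
  rw [integral_Ioi_of_hasDerivAt_of_tendsto' hd hi ht]
  ring

lemma phi_tail : ∃ C : ℝ, 0 < C ∧ ∀ z : ℝ, 0 ≤ z →
    ∫ y in Set.Ioi z, (1 + y ^ 6) * gg y ≤ C * (1 + z ^ 6) * GG z := by
  refine ⟨55 + 48 * exp (1 / 3), by positivity, fun z hz => ?_⟩
  have hi : IntegrableOn (fun y => (y ^ 6 - 9 * y ^ 2) * gg y) (Set.Ioi z) := by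
    refine ((int_pow 6 hz).sub ((int_pow 2 hz).const_mul 9)).congr_fun (fun y _ => ?_)
      measurableSet_Ioi
    simp; ring
  have h1 : ∫ y in Set.Ioi z, (1 + y ^ 6) * gg y ≤
      ∫ y in Set.Ioi z, (2 * ((y ^ 6 - 9 * y ^ 2) * gg y) + 55 * gg y) := by
    apply setIntegral_mono_on (int_phi hz) ((hi.const_mul 2).add ((int_gg hz).const_mul 55))
      measurableSet_Ioi
    intro y _
    have : 1 + y ^ 6 ≤ 2 * (y ^ 6 - 9 * y ^ 2) + 55 := by
      have : 0 ≤ y ^ 2 := sq_nonneg y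
      have : 0 ≤ (y ^ 2 + 6) * (y ^ 2 - 3) ^ 2 := by positivity
      nlinarith
    have := mul_le_mul_of_nonneg_right this (gg_pos y).le
    change _ ≤ 2 * ((y ^ 6 - 9 * y ^ 2) * gg y) + 55 * gg y
    linarith
  rw [integral_add (hi.const_mul 2) ((int_gg hz).const_mul 55), integral_const_mul,
    integral_const_mul, moment hz] at h1
  have hh := hazard hz
  have hG := GG_pos hz
  have hz6 : z ^ 3 * (1 + z) ^ 3 ≤ 8 * (1 + z ^ 6) := by
    rcases le_total z 1 with h | h
    · have a : z ^ 3 ≤ 1 := pow_le_one₀ hz h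
      have b : (1 + z) ^ 3 ≤ 2 ^ 3 := by gcongr; linarith
      have c : 0 ≤ z ^ 6 := by positivity
      have d : 0 ≤ z ^ 3 := by positivity
      nlinarith
    · calc z ^ 3 * (1 + z) ^ 3 ≤ z ^ 3 * (z + z) ^ 3 := by gcongr
        _ = 8 * z ^ 6 := by ring
        _ ≤ _ := by linarith
  have h2 : z ^ 3 * gg z ≤ 8 * exp (1 / 3) * (1 + z ^ 6) * GG z := by
    calc z ^ 3 * gg z ≤ z ^ 3 * (exp (1 / 3) * (1 + z) ^ 3 * GG z) := by gcongr
      _ = exp (1 / 3) * GG z * (z ^ 3 * (1 + z) ^ 3) := by ring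
      _ ≤ exp (1 / 3) * GG z * (8 * (1 + z ^ 6)) := by gcongr
      _ = _ := by ring
  have h3 : 0 ≤ z ^ 6 * GG z := by positivity
  change _ ≤ _ + 55 * GG z at h1
  nlinarith

lemma GG_zero : GG 0 = (12:ℝ) ^ ((1:ℝ) / 4) * Gamma (1 / 4) / 4 := by
  have h := integral_exp_neg_mul_rpow (p := 4) (b := 1 / 12) (by norm_num) (by norm_num)
  have e : GG 0 = ∫ x in Set.Ioi (0:ℝ), rexp (-(1 / 12) * x ^ (4:ℝ)) := by
    unfold GG gg
    congr 1
    ext y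
    congr 1
    rw [show (4:ℝ) = ((4:ℕ):ℝ) by norm_num, rpow_natCast]
    ring
  rw [e, h, Gamma_add_one (by norm_num), one_div, inv_rpow (by norm_num), ← rpow_neg (by norm_num)]
  norm_num
  ring

lemma tail_eq (z : ℝ) : tailW412 z = GG z / (2 * GG 0) := by
  unfold tailW412
  rw [integral_Ici_eq_integral_Ioi, integral_const_mul, GG_zero]
  change _ * GG z = _
  have h12 : (12:ℝ) ^ ((1:ℝ) / 4) = √2 * 3 ^ ((1:ℝ) / 4) := by
    rw [show (12:ℝ) = 4 * 3 by norm_num, mul_rpow (by norm_num) (by norm_num), sqrt_eq_rpow,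
      show (4:ℝ) = 2 ^ (2:ℝ) by norm_num, ← rpow_mul (by norm_num)]
    norm_num
  have hG : 0 < Gamma (1 / 4) := Gamma_pos_of_pos (by norm_num)
  have h3 : (0:ℝ) < 3 ^ ((1:ℝ) / 4) := by positivity
  rw [h12]
  have h2 : √2 * √2 = 2 := mul_self_sqrt (by norm_num)
  have : 0 < √2 := by positivity
  field_simp
  rw [sq, h2]
  ring

noncomputable def ww (n m : ℕ) (r : ℝ) (j : ℕ) : ℝ := (2 * ((m:ℝ) + j) - n) / r ^ 3

lemma ww_succ (n m : ℕ) (r : ℝ) (j : ℕ) : ww n m r (j + 1) = ww n m r j + 2 / r ^ 3 := by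
  unfold ww; push_cast; ring

lemma phi_cont : Continuous (fun y => (1 + y ^ 6) * gg y) := by
  have := gg_cont
  fun_prop

lemma cell {n m q : ℕ} (hn : 1 ≤ n) (hm : m = (n + 1) / 2) (hq : q = n / 2)
    {r : ℝ} (hr : 1 ≤ r) (hrn : r ^ 4 = n) {j : ℕ} (hj : j ≤ q) :
    |2 / r ^ 3 * (bb n (m + j) / bb n m) - ∫ y in (ww n m r j)..(ww n m r (j + 1)), gg y| ≤
      64 * exp 20 / r ^ 2 * ∫ y in (ww n m r j)..(ww n m r (j + 1)), (1 + y ^ 6) * gg y := by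
  have hr3 : 0 < r ^ 3 := by positivity
  have hle : ww n m r j ≤ ww n m r (j + 1) := by
    rw [ww_succ]
    have : 0 < 2 / r ^ 3 := by positivity
    linarith
  have e : 2 / r ^ 3 * (bb n (m + j) / bb n m) =
      ∫ y in (ww n m r j)..(ww n m r (j + 1)), bb n (m + j) / bb n m := by
    rw [intervalIntegral.integral_const, ww_succ]
    simp
  rw [e, ← intervalIntegral.integral_sub (by simp) (gg_cont.intervalIntegrable _ _),
    ← intervalIntegral.integral_const_mul]
  refine (intervalIntegral.abs_integral_le_integral_abs hle).trans ?_
  apply intervalIntegral.integral_mono_on hle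
  · exact ((continuous_const.sub gg_cont).abs).intervalIntegrable _ _
  · exact (continuous_const.mul phi_cont).intervalIntegrable _ _
  · intro y hy
    rw [ww_succ] at hy
    obtain ⟨h1, h2⟩ := hy
    apply pointwise hn hm hq hr hrn hj
    · unfold ww at h1
      rwa [div_le_iff₀ hr3] at h1
    · unfold ww at h2
      rwa [← add_div, le_div_iff₀ hr3] at h2

lemma cells {n m q : ℕ} (hn : 1 ≤ n) (hm : m = (n + 1) / 2) (hq : q = n / 2)
    {r : ℝ} (hr : 1 ≤ r) (hrn : r ^ 4 = n) {j0 : ℕ} (hj : j0 ≤ q + 1) :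
    |2 / r ^ 3 * (∑ j ∈ Finset.Ico j0 (q + 1), bb n (m + j) / bb n m)
        - ∫ y in (ww n m r j0)..(ww n m r (q + 1)), gg y| ≤
      64 * exp 20 / r ^ 2 * ∫ y in (ww n m r j0)..(ww n m r (q + 1)), (1 + y ^ 6) * gg y := by
  rw [← intervalIntegral.sum_integral_adjacent_intervals_Ico hj
      (fun k _ => gg_cont.intervalIntegrable _ _),
    ← intervalIntegral.sum_integral_adjacent_intervals_Ico hj
      (fun k _ => phi_cont.intervalIntegrable _ _), Finset.mul_sum, Finset.mul_sum,
    ← Finset.sum_sub_distrib]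
  refine (Finset.abs_sum_le_sum_abs _ _).trans (Finset.sum_le_sum fun j hj => ?_)
  apply cell hn hm hq hr hrn
  have := (Finset.mem_Ico.1 hj).2
  omega

lemma ww_mono (n m : ℕ) {r : ℝ} (hr : 1 ≤ r) : Monotone (ww n m r) := by
  apply monotone_nat_of_le_succ
  intro j
  rw [ww_succ]
  have : 0 < 2 / r ^ 3 := by positivity
  linarith

lemma main_est : ∃ C : ℝ, 0 < C ∧ ∀ n m q : ℕ, 1 ≤ n → m = (n + 1) / 2 → q = n / 2 →
    ∀ r : ℝ, 1 ≤ r → r ^ 4 = n → ∀ z : ℝ, 0 ≤ z → ∀ j0 : ℕ, j0 ≤ q + 1 →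
    z ≤ ww n m r j0 → ww n m r j0 ≤ z + 2 / r ^ 3 →
    |2 / r ^ 3 * (∑ j ∈ Finset.Ico j0 (q + 1), bb n (m + j) / bb n m) - GG z| ≤
      C / r ^ 2 * (1 + z ^ 6) * GG z := by
  obtain ⟨C, hC, hphi⟩ := phi_tail
  refine ⟨(64 * exp 20 + 1) * C + 16 * exp (1 / 3), by positivity, ?_⟩
  intro n m q hn hm hq r hr hrn z hz j0 hj hz1 hz2
  have hr0 : 0 < r := by linarith
  have hG := GG_pos hz
  have hcells := cells hn hm hq hr hrn hj
  set A := ww n m r j0 with hA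
  set B := ww n m r (q + 1) with hB
  have hAB : A ≤ B := ww_mono n m hr hj
  have hA0 : 0 ≤ A := hz.trans hz1
  have hB0 : 0 ≤ B := hA0.trans hAB
  have hBr : r ≤ B := by
    rw [hB]
    unfold ww
    rw [le_div_iff₀ (by positivity), show r * r ^ 3 = r ^ 4 by ring, hrn]
    have : n + n ≤ 2 * (m + (q + 1)) := by omega
    have : (n:ℝ) + n ≤ 2 * ((m:ℝ) + ((q + 1 : ℕ) : ℝ)) := by exact_mod_cast this
    linarith
  have s1 : GG z = (∫ y in z..A, gg y) + GG A :=
    (intervalIntegral.integral_interval_add_Ioi (int_gg hz) (int_gg hA0)).symm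
  have s2 : GG A = (∫ y in A..B, gg y) + GG B :=
    (intervalIntegral.integral_interval_add_Ioi (int_gg hA0) (int_gg hB0)).symm
  have p1 : ∫ y in A..B, (1 + y ^ 6) * gg y ≤ ∫ y in Set.Ioi z, (1 + y ^ 6) * gg y := by
    rw [intervalIntegral.integral_of_le hAB]
    apply setIntegral_mono_set (int_phi hz)
    · exact Filter.Eventually.of_forall fun y => by have := gg_pos y; positivity
    · exact (Set.Ioc_subset_Ioi_self.trans (Set.Ioi_subset_Ioi hz1)).eventuallyLE
  have p2 : r ^ 2 * GG B ≤ ∫ y in Set.Ioi z, (1 + y ^ 6) * gg y := by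
    unfold GG
    rw [← integral_const_mul]
    calc ∫ y in Set.Ioi B, r ^ 2 * gg y ≤ ∫ y in Set.Ioi B, (1 + y ^ 6) * gg y := by
          apply setIntegral_mono_on ((int_gg hB0).const_mul _) (int_phi hB0) measurableSet_Ioi
          intro y hy
          have hy : r ≤ y := hBr.trans (le_of_lt hy)
          apply mul_le_mul_of_nonneg_right _ (gg_pos y).le
          calc r ^ 2 ≤ r ^ 6 := pow_le_pow_right₀ hr (by norm_num)
            _ ≤ y ^ 6 := by gcongr
            _ ≤ _ := by linarith
      _ ≤ _ := by
          apply setIntegral_mono_set (int_phi hz)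
          · exact Filter.Eventually.of_forall fun y => by have := gg_pos y; positivity
          · exact (Set.Ioi_subset_Ioi (hz1.trans hAB)).eventuallyLE
  have p3 : ∫ y in z..A, gg y ≤ 2 / r ^ 3 * gg z := by
    calc ∫ y in z..A, gg y ≤ ∫ y in z..A, gg z := by
          apply intervalIntegral.integral_mono_on hz1 (gg_cont.intervalIntegrable _ _) (by simp)
          intro y hy
          exact gg_anti hz hy.1
      _ = (A - z) * gg z := by simp
      _ ≤ 2 / r ^ 3 * gg z := by
          apply mul_le_mul_of_nonneg_right _ (gg_pos z).le
          linarith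
  have p3' : 0 ≤ ∫ y in z..A, gg y :=
    intervalIntegral.integral_nonneg hz1 fun y _ => (gg_pos y).le
  have hGB : 0 < GG B := GG_pos hB0
  have hph := hphi z hz
  have q1 : 64 * exp 20 / r ^ 2 * (∫ y in A..B, (1 + y ^ 6) * gg y) ≤
      64 * exp 20 / r ^ 2 * (C * (1 + z ^ 6) * GG z) := by
    gcongr
    exact p1.trans hph
  have q2 : GG B ≤ 1 / r ^ 2 * (C * (1 + z ^ 6) * GG z) := by
    rw [one_div, ← div_eq_inv_mul, le_div_iff₀ (by positivity)]
    linarith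
  have q3 : 2 / r ^ 3 * gg z ≤ 16 * exp (1 / 3) / r ^ 2 * ((1 + z ^ 6) * GG z) := by
    have hz6 : (1 + z) ^ 3 ≤ 8 * (1 + z ^ 6) := by
      rcases le_total z 1 with h | h
      · have b : (1 + z) ^ 3 ≤ 2 ^ 3 := by gcongr; linarith
        have c : 0 ≤ z ^ 6 := by positivity
        linarith
      · calc (1 + z) ^ 3 ≤ (z + z) ^ 3 := by gcongr
          _ = 8 * z ^ 3 := by ring
          _ ≤ 8 * z ^ 6 := by
              have := pow_le_pow_right₀ h (show 3 ≤ 6 by norm_num)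
              linarith
          _ ≤ _ := by linarith
    have h23 : 2 / r ^ 3 ≤ 2 / r ^ 2 := by
      gcongr
      norm_num
    calc 2 / r ^ 3 * gg z ≤ 2 / r ^ 2 * (exp (1 / 3) * (1 + z) ^ 3 * GG z) :=
          mul_le_mul h23 (hazard hz) (gg_pos z).le (by positivity)
      _ ≤ 2 / r ^ 2 * (exp (1 / 3) * (8 * (1 + z ^ 6)) * GG z) := by gcongr
      _ = _ := by ring
  have e : ((64 * exp 20 + 1) * C + 16 * exp (1 / 3)) / r ^ 2 * (1 + z ^ 6) * GG z =
     64 * exp 20 / r ^ 2 * (C * (1 + z ^ 6) * GG z) + 1 / r ^ 2 * (C * (1 + z ^ 6) * GG z)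
     + 16 * exp (1 / 3) / r ^ 2 * ((1 + z ^ 6) * GG z) := by ring
  rw [e, abs_le]
  rw [abs_le] at hcells
  constructor <;> linarith [hcells.1, hcells.2]

lemma total_sum {n m q : ℕ} (hm : m = (n + 1) / 2) (hq : q = n / 2) :
    |(∑ k ∈ Finset.range (n + 1), bb n k) - 2 * ∑ j ∈ Finset.Ico 0 (q + 1), bb n (m + j)|
      ≤ bb n m := by
  have hpos : 0 < bb n m := bb_pos (by omega)
  have h1 : ∑ k ∈ Finset.range (n + 1), bb n k =
      ∑ k ∈ Finset.range m, bb n k + ∑ j ∈ Finset.range (q + 1), bb n (m + j) := by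
    rw [show n + 1 = m + (q + 1) by omega, Finset.sum_range_add]
  have h2 : ∑ k ∈ Finset.range m, bb n k = ∑ j ∈ Finset.range m, bb n (q + 1 + j) := by
    rw [← Finset.sum_range_reflect]
    apply Finset.sum_congr rfl
    intro j hj
    have hj := Finset.mem_range.1 hj
    rw [← bb_symm (show m - 1 - j ≤ n by omega)]
    congr 1
    omega
  rw [h1, h2, ← Finset.range_eq_Ico]
  rcases Nat.even_or_odd' n with ⟨c, hc | hc⟩
  · obtain rfl : m = q := by omega
    have h3 : ∑ j ∈ Finset.range (m + 1), bb n (m + j) =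
        ∑ j ∈ Finset.range m, bb n (m + 1 + j) + bb n m := by
      rw [Finset.sum_range_succ']
      simp [Nat.add_assoc, Nat.add_comm 1]
    rw [h3, abs_le]
    constructor <;> linarith
  · obtain rfl : m = q + 1 := by omega
    rw [abs_le]
    constructor <;> linarith

set_option maxHeartbeats 1000000 in
lemma det_est : ∃ C : ℝ, 0 < C ∧ ∀ n m q : ℕ, 1 ≤ n → m = (n + 1) / 2 → q = n / 2 →
    ∀ r : ℝ, 1 ≤ r → r ^ 4 = n → ∀ z : ℝ, 0 ≤ z → ∀ j0 : ℕ, j0 ≤ q + 1 →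
    z ≤ ww n m r j0 → ww n m r j0 ≤ z + 2 / r ^ 3 →
    |(∑ j ∈ Finset.Ico j0 (q + 1), bb n (m + j)) / (∑ k ∈ Finset.range (n + 1), bb n k)
      / tailW412 z - 1| ≤ C / r ^ 2 * (1 + z ^ 6) := by
  obtain ⟨C, hC, hmain⟩ := main_est
  have hG0 := GG_pos (le_refl 0)
  set D := 2 * C * GG 0 + 2 with hD
  have hDpos : 0 < D := by positivity
  set R := D / GG 0 + 1 with hR
  have hRpos : 0 < R := by positivity
  -- lower bound for the total mass
  set c := min (GG 0) (2 / R ^ 3) with hc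
  have hcpos : 0 < c := by
    rw [hc]
    exact lt_min hG0 (by positivity)
  refine ⟨(2 * GG 0 * C + D) / c, by positivity, ?_⟩
  intro n m q hn hm hq r hr hrn z hz j0 hj hz1 hz2
  have hr0 : 0 < r := by linarith
  have hG := GG_pos hz
  have hb : 0 < bb n m := bb_pos (by omega)
  have h1 := hmain n m q hn hm hq r hr hrn z hz j0 hj hz1 hz2
  have hw0 : 0 ≤ ww n m r 0 ∧ ww n m r 0 ≤ 0 + 2 / r ^ 3 := by
    unfold ww
    have a : n ≤ 2 * m := by omega
    have a : (n:ℝ) ≤ 2 * m := by exact_mod_cast a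
    have b : 2 * m ≤ n + 1 := by omega
    have b : 2 * (m:ℝ) ≤ n + 1 := by exact_mod_cast b
    constructor
    · apply div_nonneg _ (by positivity)
      push_cast; linarith
    · rw [zero_add]
      gcongr
      push_cast; linarith
  have h2 := hmain n m q hn hm hq r hr hrn 0 le_rfl 0 (by omega) hw0.1 hw0.2
  have h3 := total_sum hm hq
  set S := ∑ k ∈ Finset.range (n + 1), bb n k with hS
  have hSb : bb n m ≤ S :=
    Finset.single_le_sum (f := bb n) (fun k hk => (bb_pos (by
      have := Finset.mem_range.1 hk
      omega)).le) (Finset.mem_range.2 (by omega))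
  have hSpos : 0 < S := by linarith
  simp only [← Finset.sum_div] at h1 h2
  set U := ∑ j ∈ Finset.Ico j0 (q + 1), bb n (m + j)
  set V := ∑ j ∈ Finset.Ico 0 (q + 1), bb n (m + j)
  set h := 2 / r ^ 3 with hh
  have hhpos : 0 < h := by positivity
  set u := h * (U / bb n m) with hu
  set v := h * (V / bb n m) with hv
  set T := h * (S / bb n m) with hT
  have hTv : |T - 2 * v| ≤ h := by
    have : T - 2 * v = h / bb n m * (S - 2 * V) := by rw [hT, hv]; ring
    rw [this, abs_mul, abs_of_pos (by positivity)]
    calc h / bb n m * |S - 2 * V| ≤ h / bb n m * bb n m := by gcongr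
      _ = h := by field_simp
  have hh2 : h ≤ 2 / r ^ 2 := by
    rw [hh]
    gcongr
    norm_num
  have hTG : |T - 2 * GG 0| ≤ D / r ^ 2 := by
    have e : D / r ^ 2 = 2 / r ^ 2 + 2 * (C / r ^ 2 * (1 + 0 ^ 6) * GG 0) := by rw [hD]; ring
    rw [e, abs_le]
    rw [abs_le] at hTv h2
    constructor <;> linarith [hTv.1, hTv.2, h2.1, h2.2]
  have hTh : h ≤ T := by
    have : 1 ≤ S / bb n m := by rwa [le_div_iff₀ hb, one_mul]
    rw [hT]
    nlinarith
  have hTc : c ≤ T := by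
    rcases le_total R r with hRr | hRr
    · refine (min_le_left _ _).trans ?_
      have : D / r ^ 2 ≤ GG 0 := by
        rw [div_le_iff₀ (by positivity)]
        have a : D / GG 0 ≤ r := by linarith
        rw [div_le_iff₀ hG0] at a
        have : r ≤ r ^ 2 := by nlinarith
        nlinarith
      linarith [(abs_le.1 hTG).1]
    · refine (min_le_right _ _).trans (le_trans ?_ hTh)
      rw [hh]
      gcongr
  have hTpos : 0 < T := lt_of_lt_of_le hcpos hTc
  have e1 : U / S / tailW412 z - 1 = (2 * GG 0 * (u - GG z) + GG z * (2 * GG 0 - T)) / (T * GG z) := by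
    rw [tail_eq]
    have : U / S = u / T := by rw [hu, hT]; field_simp
    rw [this]
    field_simp
    ring
  rw [e1, abs_div, abs_of_pos (mul_pos hTpos hG), div_le_iff₀ (by positivity)]
  have z6 : 0 ≤ z ^ 6 := by positivity
  calc |2 * GG 0 * (u - GG z) + GG z * (2 * GG 0 - T)|
      ≤ |2 * GG 0 * (u - GG z)| + |GG z * (2 * GG 0 - T)| := abs_add_le _ _
    _ = 2 * GG 0 * |u - GG z| + GG z * |T - 2 * GG 0| := by
        rw [abs_mul (2 * GG 0), abs_mul (GG z), abs_of_pos (by positivity : 0 < 2 * GG 0), abs_of_pos hG,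
          abs_sub_comm T]
    _ ≤ 2 * GG 0 * (C / r ^ 2 * (1 + z ^ 6) * GG z) + GG z * (D / r ^ 2 * (1 + z ^ 6)) := by
        gcongr
        refine hTG.trans ?_
        have : 0 ≤ D / r ^ 2 := by positivity
        nlinarith
    _ = (2 * GG 0 * C + D) / c / r ^ 2 * (1 + z ^ 6) * (c * GG z) := by
        field_simp
    _ ≤ (2 * GG 0 * C + D) / c / r ^ 2 * (1 + z ^ 6) * (T * GG z) := by gcongr

lemma lint_rho (f : ℝ → ENNReal) (hf : Measurable f) :
    ∫⁻ x, f x ∂simpleRho = (1 / 2) * f 1 + (1 / 2) * f (-1) := by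
  unfold simpleRho
  rw [lintegral_add_measure, lintegral_smul_measure, lintegral_smul_measure,
    lintegral_dirac' _ hf, lintegral_dirac' _ hf]
  simp

lemma lint_pi (n : ℕ) : ∀ f : ℝ → ENNReal, Measurable f →
    ∫⁻ x : Fin n → ℝ, f (∑ i, x i) ∂(Measure.pi fun _ : Fin n => simpleRho) =
      (1 / 2) ^ n * ∑ k ∈ Finset.range (n + 1), (n.choose k : ENNReal) * f (2 * (k:ℝ) - n) := by
  induction n with
  | zero =>
    intro f hf
    simp
  | succ n ih =>
    intro f hf
    have hmp := measurePreserving_piFinSuccAbove (fun _ : Fin (n + 1) => simpleRho) 0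
    have e1 : ∫⁻ x : Fin (n + 1) → ℝ, f (∑ i, x i) ∂(Measure.pi fun _ => simpleRho) =
        ∫⁻ p : ℝ × (Fin n → ℝ), f (p.1 + ∑ i, p.2 i)
          ∂(simpleRho.prod (Measure.pi fun _ => simpleRho)) := by
      have := hmp.lintegral_comp (f := fun p : ℝ × (Fin n → ℝ) => f (p.1 + ∑ i, p.2 i))
        (by fun_prop)
      rw [← this]
      congr 1
      ext x
      rw [Fin.sum_univ_succ]
      rfl
    rw [e1, lintegral_prod _ (by fun_prop)]
    have e2 : ∀ x : ℝ, ∫⁻ y : Fin n → ℝ, f (x + ∑ i, y i) ∂(Measure.pi fun _ => simpleRho) =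
        (1 / 2) ^ n * ∑ k ∈ Finset.range (n + 1), (n.choose k : ENNReal) * f (x + (2 * (k:ℝ) - n)) :=
      fun x => ih (fun s => f (x + s)) (by fun_prop)
    simp only [e2]
    rw [lint_rho _ (by fun_prop)]
    have e3 := Finset.sum_choose_succ_mul (fun k _ => f (2 * (k:ℝ) - (n + 1))) n
    push_cast
    rw [e3]
    have e4 : ∀ k : ℕ, (1:ℝ) + (2 * k - n) = 2 * ((k + 1 : ℕ) : ℝ) - (n + 1) := by
      intro k; push_cast; ring
    have e5 : ∀ k : ℕ, (-1:ℝ) + (2 * k - n) = 2 * (k : ℝ) - (n + 1) := by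
      intro k; ring
    simp only [e4, e5]
    ring

lemma Z_eq (n : ℕ) :
    ∫ y : Fin n → ℝ, Real.exp ((∑ i, y i) ^ 2 / (2 * n)) ∂(Measure.pi fun _ : Fin n => simpleRho)
      = (1 / 2) ^ n * ∑ k ∈ Finset.range (n + 1), bb n k := by
  rw [integral_eq_lintegral_of_nonneg_ae (Filter.Eventually.of_forall fun y => (exp_pos _).le)
    (Measurable.aestronglyMeasurable (by fun_prop))]
  rw [lint_pi n (fun t => ENNReal.ofReal (Real.exp (t ^ 2 / (2 * n)))) (by fun_prop)]
  rw [ENNReal.toReal_mul, ENNReal.toReal_sum (fun k _ =>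
    ENNReal.mul_ne_top (ENNReal.natCast_ne_top _) ENNReal.ofReal_ne_top)]
  congr 1
  · simp
  · apply Finset.sum_congr rfl
    intro k _
    rw [ENNReal.toReal_mul, ENNReal.toReal_ofReal (exp_pos _).le]
    simp [bb]

open Classical in
lemma prob_eq (n : ℕ) (c z : ℝ) :
    (cwMeasure simpleRho n {x | z ≤ c * ((∑ i, x i) / n)}).toReal =
      (∑ k ∈ Finset.range (n + 1), if z ≤ c * ((2 * (k:ℝ) - n) / n) then bb n k else 0) /
        ∑ k ∈ Finset.range (n + 1), bb n k := by
  have hms : MeasurableSet {x : Fin n → ℝ | z ≤ c * ((∑ i, x i) / n)} :=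
    measurableSet_le (by fun_prop) (by fun_prop)
  have hmt : MeasurableSet {t : ℝ | z ≤ c * (t / n)} :=
    measurableSet_le (by fun_prop) (by fun_prop)
  unfold cwMeasure
  rw [withDensity_apply _ hms, ← lintegral_indicator hms, Z_eq]
  set Z := (1 / 2) ^ n * ∑ k ∈ Finset.range (n + 1), bb n k with hZ
  have hSpos : 0 < ∑ k ∈ Finset.range (n + 1), bb n k :=
    Finset.sum_pos (fun k hk => bb_pos (by have := Finset.mem_range.1 hk; omega)) (by simp)
  have hZpos : 0 < Z := by positivity
  have h := lint_pi n (Set.indicator {t : ℝ | z ≤ c * (t / n)}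
    fun t => ENNReal.ofReal (Real.exp (t ^ 2 / (2 * n)) / Z))
    (Measurable.indicator (by fun_prop) hmt)
  refine (congrArg ENNReal.toReal ((lintegral_congr fun x => ?_).trans h)).trans ?_
  · simp only [Set.indicator, Set.mem_setOf_eq]
  rw [ENNReal.toReal_mul, ENNReal.toReal_sum]
  · have e : ∀ k ∈ Finset.range (n + 1), ((n.choose k : ENNReal) *
        (Set.indicator {t : ℝ | z ≤ c * (t / n)}
        (fun t => ENNReal.ofReal (Real.exp (t ^ 2 / (2 * n)) / Z)) (2 * (k:ℝ) - n))).toReal =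
        (if z ≤ c * ((2 * (k:ℝ) - n) / n) then bb n k else 0) / Z := by
      intro k _
      simp only [Set.indicator, Set.mem_setOf_eq]
      split_ifs
      · rw [ENNReal.toReal_mul, ENNReal.toReal_ofReal (by positivity)]
        simp [bb, mul_div_assoc]
      · simp
    rw [Finset.sum_congr rfl e, ← Finset.sum_div, hZ]
    simp only [one_div, ENNReal.toReal_pow, ENNReal.toReal_inv, ENNReal.toReal_ofNat]
    field_simp
  · intro k _
    apply ENNReal.mul_ne_top (ENNReal.natCast_ne_top _)
    simp only [Set.indicator]
    split_ifs <;> simp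

theorem stmt_4 :
    ∃ C : ℝ, 0 < C ∧ ∀ n : ℕ, 1 ≤ n → ∀ z : ℝ, 0 < z → z < (n : ℝ) ^ ((1 : ℝ) / 12) →
      |(cwMeasure simpleRho n
            {x | z ≤ (n : ℝ) ^ ((1 : ℝ) / 4) * ((∑ i, x i) / n)}).toReal
          / tailW412 z - 1|
        ≤ C * (n : ℝ) ^ (-(1 : ℝ) / 2) * (1 + z ^ 6) := by

  classical
  obtain ⟨C, hC, hdet⟩ := det_est
  refine ⟨C, hC, ?_⟩
  intro n hn z hz hzn
  have hN : (1:ℝ) ≤ n := by exact_mod_cast hn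
  rw [prob_eq]
  set r : ℝ := (n : ℝ) ^ ((1 : ℝ) / 4) with hrdef
  have hr : 1 ≤ r := one_le_rpow hN (by norm_num)
  have hr0 : 0 < r := by linarith
  have hrn : r ^ 4 = n := by
    rw [hrdef, ← rpow_natCast, ← rpow_mul (by positivity)]
    norm_num
  have hr2 : (n : ℝ) ^ (-(1 : ℝ) / 2) = 1 / r ^ 2 := by
    rw [hrdef, ← rpow_natCast, ← rpow_mul (by positivity), one_div, ← rpow_neg (by positivity)]
    norm_num
  have hzr : z < r := lt_of_lt_of_le hzn (rpow_le_rpow_of_exponent_le hN (by norm_num))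
  obtain ⟨m, hm⟩ : ∃ m, m = (n + 1) / 2 := ⟨_, rfl⟩
  obtain ⟨q, hq⟩ : ∃ q, q = n / 2 := ⟨_, rfl⟩
  have hr3 : 0 < r ^ 3 := by positivity
  have hwq : z ≤ ww n m r q := by
    unfold ww
    rw [le_div_iff₀ hr3]
    have : n + n = 2 * (m + q) := by omega
    have : (n:ℝ) + n = 2 * ((m:ℝ) + q) := by exact_mod_cast this
    have h2 : z * r ^ 3 ≤ r * r ^ 3 := by gcongr
    have h3 : r * r ^ 3 = n := by rw [← hrn]; ring
    linarith
  have hex : ∃ j, z ≤ ww n m r j := ⟨q, hwq⟩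
  obtain ⟨j0, hj0⟩ : ∃ j0, j0 = Nat.find hex := ⟨_, rfl⟩
  have hj1 : z ≤ ww n m r j0 := hj0 ▸ Nat.find_spec hex
  have hjq : j0 ≤ q := hj0 ▸ Nat.find_min' hex hwq
  have hjmin : ∀ j, z ≤ ww n m r j → j0 ≤ j := fun j h => hj0 ▸ Nat.find_min' hex h
  have hj2 : ww n m r j0 ≤ z + 2 / r ^ 3 := by
    rcases Nat.eq_zero_or_pos j0 with h0 | h0
    · rw [h0]
      have : ww n m r 0 ≤ 2 / r ^ 3 := by
        unfold ww
        have b : 2 * m ≤ n + 1 := by omega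
        have b : 2 * (m:ℝ) ≤ n + 1 := by exact_mod_cast b
        gcongr
        push_cast; linarith
      linarith
    · obtain ⟨i, rfl⟩ : ∃ i, j0 = i + 1 := ⟨j0 - 1, by omega⟩
      rw [ww_succ]
      have : ¬ z ≤ ww n m r i := fun h => by have := hjmin i h; omega
      linarith
  have hcond : ∀ s : ℝ, z ≤ r * (s / n) ↔ z ≤ s / r ^ 3 := by
    intro s
    have : r * (s / n) = s / r ^ 3 := by rw [← hrn]; field_simp
    rw [this]
  have hsum : (∑ k ∈ Finset.range (n + 1),
      if z ≤ r * ((2 * (k:ℝ) - n) / n) then bb n k else 0) =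
      ∑ j ∈ Finset.Ico j0 (q + 1), bb n (m + j) := by
    rw [show n + 1 = m + (q + 1) by omega, Finset.sum_range_add, Finset.sum_eq_zero, zero_add,
      ← Finset.sum_filter]
    · apply Finset.sum_congr _ (fun _ _ => rfl)
      ext j
      simp only [Finset.mem_filter, Finset.mem_range, Finset.mem_Ico]
      rw [hcond]
      have : (2 * ((m + j : ℕ) : ℝ) - n) / r ^ 3 = ww n m r j := by
        unfold ww; push_cast; rfl
      rw [this]
      constructor
      · rintro ⟨a, b⟩
        exact ⟨hjmin j b, a⟩
      · rintro ⟨a, b⟩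
        exact ⟨b, hj1.trans (ww_mono n m hr a)⟩
    · intro k hk
      have hk := Finset.mem_range.1 hk
      rw [if_neg]
      rw [hcond, not_le]
      have a : 2 * k ≤ n := by omega
      have a : 2 * (k:ℝ) ≤ n := by exact_mod_cast a
      have : (2 * (k:ℝ) - n) / r ^ 3 ≤ 0 := div_nonpos_of_nonpos_of_nonneg (by linarith) hr3.le
      linarith
  have hfin := hdet n m q hn hm hq r hr hrn z hz.le j0 (by omega) hj1 hj2
  rw [hr2, mul_one_div]
  convert hfin using 5
end

section
/- Consider the general Curie–Weiss model CW(ρ) at inverse temperature β=1, where ρ is a symmetric probability measure on ℝ with ∫x²dρ(x)=1, ρ([−L,L])=1 for some finite L, the function h(s)=s²/2 − log∫e^{sx}dρ(x) has s=0 as the unique root of h'(s)=0, and there is k≥2 with h^{(i)}(0)=0 for 0≤i≤2k−1 and h^{(2k)}(0)>0. Let W = n^{1/(2k)}·m(X) and let Y have density p(y) = c₁·exp(−h^{(2k)}(0)·y^{2k}/(2k)!). Then there is a constant C>0 depending only on ρ such that sup_{z∈ℝ} |P(W ≤ z) − P(Y ≤ z)| ≤ C·n^{−1/k}. -/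
open MeasureTheory Real

/-- `h(s) = s²/2 − log ∫ e^{sx} dρ(x)`. -/
noncomputable def hfun (ρ : Measure ℝ) (s : ℝ) : ℝ :=
  s ^ 2 / 2 - Real.log (∫ x, Real.exp (s * x) ∂ρ)

namespace CW
open ProbabilityTheory

/-- upper one-sided second moment -/
noncomputable def up (ν : Measure ℝ) (x : ℝ) : ℝ := ∫ y, (max (x - y) 0) ^ 2 ∂ν
/-- lower one-sided second moment -/
noncomputable def um (ν : Measure ℝ) (x : ℝ) : ℝ := ∫ y, (max (y - x) 0) ^ 2 ∂ν
/-- indicator of `t ≤ c` -/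
noncomputable def ind (c t : ℝ) : ℝ := if t ≤ c then 1 else 0
/-- clipped linear function -/
noncomputable def FF (c t : ℝ) : ℝ := min (t - c) 0

@[fun_prop]
lemma measurable_ind (c : ℝ) : Measurable (ind c) := by
  unfold ind
  exact Measurable.ite measurableSet_Iic measurable_const measurable_const
@[fun_prop]
lemma measurable_FF (c : ℝ) : Measurable (FF c) := by unfold FF; fun_prop
lemma ind_nonneg (c t : ℝ) : 0 ≤ ind c t := by unfold ind; split_ifs <;> norm_num
lemma ind_le (c t : ℝ) : ind c t ≤ 1 := by unfold ind; split_ifs <;> norm_num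
lemma FF_abs (c t : ℝ) : |FF c t| ≤ |t| + |c| := by
  unfold FF
  rcases le_total (t - c) 0 with h | h
  · rw [min_eq_left h]; exact abs_sub _ _
  · rw [min_eq_right h]; simp; positivity

lemma intg {α : Type*} [MeasurableSpace α] {μ : Measure α} [IsFiniteMeasure μ] {f : α → ℝ}
    (hf : Measurable f) {C : ℝ} (h : ∀ᵐ x ∂μ, |f x| ≤ C) : Integrable f μ :=
  Integrable.of_bound hf.aestronglyMeasurable C (by simpa using h)

lemma ae_prod {ν : Measure ℝ} [IsProbabilityMeasure ν] {L : ℝ} (hν : ∀ᵐ x ∂ν, |x| ≤ L) :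
    ∀ᵐ z ∂(ν.prod ν), |z.1| ≤ L ∧ |z.2| ≤ L := by
  have h1 := (Measure.quasiMeasurePreserving_fst (μ := ν) (ν := ν)).ae hν
  have h2 := (Measure.quasiMeasurePreserving_snd (μ := ν) (ν := ν)).ae hν
  filter_upwards [h1, h2] with z a b using ⟨a, b⟩

lemma ae_pi {ν : Measure ℝ} [IsProbabilityMeasure ν] {L : ℝ} (hν : ∀ᵐ x ∂ν, |x| ≤ L) (n : ℕ) :
    ∀ᵐ x ∂(Measure.pi fun _ : Fin n => ν), ∀ i, |x i| ≤ L := by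
  rw [ae_all_iff]
  intro i
  exact (measurePreserving_eval (fun _ : Fin n => ν) i).quasiMeasurePreserving.ae hν

lemma meas_up (ν : Measure ℝ) [IsProbabilityMeasure ν] : Measurable (up ν) := by
  unfold up
  have : StronglyMeasurable (fun z : ℝ × ℝ => (max (z.1 - z.2) 0) ^ 2) := by
    apply Measurable.stronglyMeasurable; fun_prop
  exact (this.integral_prod_right (ν := ν)).measurable

lemma meas_um (ν : Measure ℝ) [IsProbabilityMeasure ν] : Measurable (um ν) := by
  unfold um
  have : StronglyMeasurable (fun z : ℝ × ℝ => (max (z.2 - z.1) 0) ^ 2) := by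
    apply Measurable.stronglyMeasurable; fun_prop
  exact (this.integral_prod_right (ν := ν)).measurable

lemma max_sq_le {x y L : ℝ} (hx : |x| ≤ L) (hy : |y| ≤ L) : |(max (x - y) 0) ^ 2| ≤ 4 * L ^ 2 := by
  rw [abs_le] at hx hy
  have h1 : 0 ≤ max (x - y) 0 := le_max_right _ _
  have h2 : max (x - y) 0 ≤ 2 * L := max_le (by linarith) (by linarith)
  rw [abs_of_nonneg (by positivity)]
  nlinarith

lemma up_bd {ν : Measure ℝ} [IsProbabilityMeasure ν] {L : ℝ} (hν : ∀ᵐ x ∂ν, |x| ≤ L) {x : ℝ}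
    (hx : |x| ≤ L) : |up ν x| ≤ 4 * L ^ 2 := by
  unfold up
  have := norm_integral_le_of_norm_le_const (μ := ν) (f := fun y => (max (x - y) 0) ^ 2)
    (C := 4 * L ^ 2) (by filter_upwards [hν] with y hy using max_sq_le hx hy)
  simpa using this

lemma um_bd {ν : Measure ℝ} [IsProbabilityMeasure ν] {L : ℝ} (hν : ∀ᵐ x ∂ν, |x| ≤ L) {x : ℝ}
    (hx : |x| ≤ L) : |um ν x| ≤ 4 * L ^ 2 := by
  unfold um
  have := norm_integral_le_of_norm_le_const (μ := ν) (f := fun y => (max (y - x) 0) ^ 2)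
    (C := 4 * L ^ 2) (by filter_upwards [hν] with y hy using max_sq_le hy hx)
  simpa using this

lemma int_max {ν : Measure ℝ} [IsProbabilityMeasure ν] {L : ℝ} (hν : ∀ᵐ x ∂ν, |x| ≤ L) 
    {g : ℝ × ℝ → ℝ} (hg : Measurable g) (hg1 : ∀ z, |g z| ≤ 1) :
    Integrable (fun z : ℝ × ℝ => (max (z.1 - z.2) 0) ^ 2 * g z) (ν.prod ν) := by
  apply intg (C := 4 * L ^ 2 * 1) (by fun_prop)
  filter_upwards [ae_prod hν] with z hz
  rw [abs_mul]
  exact mul_le_mul (max_sq_le hz.1 hz.2) (hg1 z) (abs_nonneg _) (by positivity)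

lemma up_eq_prod {ν : Measure ℝ} [IsProbabilityMeasure ν] {L : ℝ} (hν : ∀ᵐ x ∂ν, |x| ≤ L) 
    {g : ℝ → ℝ} (hg : Measurable g) (hg1 : ∀ z, |g z| ≤ 1) :
    ∫ x, up ν x * g x ∂ν = ∫ z, (max (z.1 - z.2) 0) ^ 2 * g z.1 ∂(ν.prod ν) := by
  rw [integral_prod _ (int_max hν (g := fun z => g z.1) (by fun_prop) (fun z => hg1 _))]
  simp only [up, integral_mul_const]

lemma um_eq_prod {ν : Measure ℝ} [IsProbabilityMeasure ν] {L : ℝ} (hν : ∀ᵐ x ∂ν, |x| ≤ L) 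
    {g : ℝ → ℝ} (hg : Measurable g) (hg1 : ∀ z, |g z| ≤ 1) :
    ∫ x, um ν x * g x ∂ν = ∫ z, (max (z.1 - z.2) 0) ^ 2 * g z.2 ∂(ν.prod ν) := by
  rw [integral_prod_symm _ (int_max hν (g := fun z => g z.2) (by fun_prop) (fun z => hg1 _))]
  simp only [um, integral_mul_const]

lemma abs_ind_le (c t : ℝ) : |ind c t| ≤ 1 := by
  rw [abs_of_nonneg (ind_nonneg _ _)]; exact ind_le _ _


lemma FF_bd {c T L x : ℝ} (hx : |x| ≤ L) : |FF c (T + x)| ≤ |T| + L + |c| := by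
  have := FF_abs c (T + x)
  have := abs_add_le T x
  linarith

lemma steinD {ν : Measure ℝ} [IsProbabilityMeasure ν] {L : ℝ} (hν : ∀ᵐ x ∂ν, |x| ≤ L) (T c : ℝ) :
    ∫ x, (x - ∫ y, y ∂ν) * FF c (T + x) ∂ν
      = ∫ z, max (z.1 - z.2) 0 * (FF c (T + z.1) - FF c (T + z.2)) ∂(ν.prod ν) := by
  have hL : 0 ≤ L := by
    obtain ⟨x, hx⟩ := hν.exists
    exact (abs_nonneg x).trans hx
  have hFm : Measurable fun x => FF c (T + x) := (measurable_FF c).comp (by fun_prop)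
  set B := |T| + L + |c| with hB
  have hB0 : 0 ≤ B := by positivity
  have hFb : ∀ x, |x| ≤ L → |FF c (T + x)| ≤ B := fun x hx => FF_bd hx
  have hidx : Integrable (fun y : ℝ => y) ν := intg measurable_id hν
  have e1 : ∀ x y : ℝ, |x| ≤ L → |y| ≤ L → |x - y| ≤ 2 * L := by
    intro x y hx hy
    have := abs_sub x y; linarith
  have e2 : ∀ x y : ℝ, |x| ≤ L → |y| ≤ L → |max (x - y) 0| ≤ 2 * L := by
    intro x y hx hy
    rw [abs_of_nonneg (le_max_right _ _)]
    exact max_le ((le_abs_self _).trans (e1 x y hx hy)) (by positivity)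
  have iA : Integrable (fun z : ℝ × ℝ => (z.1 - z.2) * FF c (T + z.1)) (ν.prod ν) := by
    apply intg (C := 2 * L * B) (by fun_prop)
    filter_upwards [ae_prod hν] with z hz
    rw [abs_mul]
    exact mul_le_mul (e1 _ _ hz.1 hz.2) (hFb _ hz.1) (abs_nonneg _) (by positivity)
  have i1 : Integrable (fun z : ℝ × ℝ => max (z.1 - z.2) 0 * FF c (T + z.1)) (ν.prod ν) := by
    apply intg (C := 2 * L * B) (by fun_prop)
    filter_upwards [ae_prod hν] with z hz
    rw [abs_mul]
    exact mul_le_mul (e2 _ _ hz.1 hz.2) (hFb _ hz.1) (abs_nonneg _) (by positivity)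
  have i2 : Integrable (fun z : ℝ × ℝ => max (z.1 - z.2) 0 * FF c (T + z.2)) (ν.prod ν) := by
    apply intg (C := 2 * L * B) (by fun_prop)
    filter_upwards [ae_prod hν] with z hz
    rw [abs_mul]
    exact mul_le_mul (e2 _ _ hz.1 hz.2) (hFb _ hz.2) (abs_nonneg _) (by positivity)
  have i3 : Integrable (fun z : ℝ × ℝ => max (z.2 - z.1) 0 * FF c (T + z.1)) (ν.prod ν) := i2.swap
  have hA : ∫ x, (x - ∫ y, y ∂ν) * FF c (T + x) ∂ν
      = ∫ z, (z.1 - z.2) * FF c (T + z.1) ∂(ν.prod ν) := by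
    rw [integral_prod _ iA]
    congr with x
    simp only [integral_mul_const]
    rw [integral_sub (by simp) hidx]
    simp
  have hs : ∫ z, max (z.2 - z.1) 0 * FF c (T + z.1) ∂(ν.prod ν)
      = ∫ z, max (z.1 - z.2) 0 * FF c (T + z.2) ∂(ν.prod ν) :=
    integral_prod_swap (fun z : ℝ × ℝ => max (z.1 - z.2) 0 * FF c (T + z.2))
  rw [hA]
  have : ∀ z : ℝ × ℝ, (z.1 - z.2) * FF c (T + z.1) = max (z.1 - z.2) 0 * FF c (T + z.1)
      - max (z.2 - z.1) 0 * FF c (T + z.1) := by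
    intro z
    rcases le_total z.1 z.2 with h | h
    · rw [max_eq_right (by linarith), max_eq_left (by linarith)]; ring
    · rw [max_eq_left (by linarith), max_eq_right (by linarith)]; ring
  simp_rw [this, mul_sub]
  rw [integral_sub i1 i3, integral_sub i1 i2, hs]

lemma B_lower (c T x y : ℝ) : (max (x - y) 0) ^ 2 * ind c (T + x)
    ≤ max (x - y) 0 * (FF c (T + x) - FF c (T + y)) := by
  unfold ind FF
  rcases le_total x y with h | h
  · rw [max_eq_right (by linarith)]; simp
  · rw [max_eq_left (by linarith)]
    have h' : 0 ≤ x - y := by linarith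
    split_ifs with h1
    · rw [min_eq_left (by linarith), min_eq_left (by linarith)]; nlinarith
    · simp only [mul_zero]
      apply mul_nonneg h'
      have : min (T + y - c) 0 ≤ min (T + x - c) 0 := min_le_min (by linarith) le_rfl
      linarith

lemma B_upper (c T x y : ℝ) : max (x - y) 0 * (FF c (T + x) - FF c (T + y)) ≤
    (max (x - y) 0) ^ 2 * ind c (T + y) := by
  unfold ind FF
  rcases le_total x y with h | h
  · rw [max_eq_right (by linarith)]; simp
  · rw [max_eq_left (by linarith)]
    have h' : 0 ≤ x - y := by linarith
    split_ifs with h1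
    · rw [min_eq_left (a := T + y - c) (by linarith), sq, mul_one]
      apply mul_le_mul_of_nonneg_left _ h'
      have := min_le_left (T + x - c) 0
      linarith
    · rw [min_eq_right (a := T + y - c) (by linarith), min_eq_right (by linarith)]; simp

lemma stein1 {ν : Measure ℝ} [IsProbabilityMeasure ν] {L : ℝ} (hν : ∀ᵐ x ∂ν, |x| ≤ L) (T c : ℝ) :
    ∫ x, up ν x * ind c (T + x) ∂ν ≤ ∫ x, (x - ∫ y, y ∂ν) * FF c (T + x) ∂ν ∧
    ∫ x, (x - ∫ y, y ∂ν) * FF c (T + x) ∂ν ≤ ∫ x, um ν x * ind c (T + x) ∂ν := by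
  have hm : Measurable fun x => ind c (T + x) := (measurable_ind c).comp (by fun_prop)
  have hFm : Measurable fun x => FF c (T + x) := (measurable_FF c).comp (by fun_prop)
  rw [steinD hν, up_eq_prod hν hm (fun _ => abs_ind_le _ _),
    um_eq_prod hν hm (fun _ => abs_ind_le _ _)]
  have j1 := int_max hν (g := fun z => ind c (T + z.1)) (by fun_prop) (fun z => abs_ind_le _ _)
  have j2 := int_max hν (g := fun z => ind c (T + z.2)) (by fun_prop) (fun z => abs_ind_le _ _)
  have j3 : Integrable (fun z : ℝ × ℝ => max (z.1 - z.2) 0 * (FF c (T + z.1) - FF c (T + z.2)))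
      (ν.prod ν) := by
    apply intg (C := 4 * L ^ 2) (by fun_prop)
    filter_upwards [ae_prod hν] with z hz
    have a1 := B_lower c T z.1 z.2
    have a2 := B_upper c T z.1 z.2
    have a3 := max_sq_le hz.1 hz.2
    have a4 := ind_nonneg c (T + z.1)
    have a5 := ind_le c (T + z.2)
    rw [abs_of_nonneg (sq_nonneg _)] at a3
    rw [abs_of_nonneg (le_trans (by positivity) a1)]
    refine a2.trans (le_trans ?_ a3)
    exact mul_le_of_le_one_right (by positivity) a5
  exact ⟨integral_mono j1 j3 fun z => B_lower c T z.1 z.2,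
    integral_mono j3 j2 fun z => B_upper c T z.1 z.2⟩

lemma abs_sum_le {n : ℕ} {L : ℝ} {x : Fin n → ℝ} (h : ∀ i, |x i| ≤ L) : |∑ i, x i| ≤ n * L := by
  refine (Finset.abs_sum_le_sum_abs _ _).trans ?_
  refine (Finset.sum_le_card_nsmul _ _ L fun i _ => h i).trans ?_
  simp

/-- splitting off a coordinate -/
lemma pi_split {ν : Measure ℝ} [IsProbabilityMeasure ν] {L : ℝ} (hν : ∀ᵐ x ∂ν, |x| ≤ L) {m : ℕ}
    (i : Fin (m + 1)) (a : ℝ → ℝ) (ha : Measurable a) (b : ℝ → ℝ) (hb : Measurable b) (K K' : ℝ)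
    (haK : ∀ x, |x| ≤ L → |a x| ≤ K) (hbK : ∀ t, |t| ≤ (m + 1 : ℕ) * L → |b t| ≤ K') :
    ∫ x, a (x i) * b (∑ j, x j) ∂(Measure.pi fun _ : Fin (m + 1) => ν)
      = ∫ y, (∫ x, a x * b (∑ j, y j + x) ∂ν) ∂(Measure.pi fun _ : Fin m => ν) ∧
    Integrable (fun y => ∫ x, a x * b (∑ j, y j + x) ∂ν) (Measure.pi fun _ : Fin m => ν) := by
  have hL : 0 ≤ L := by
    obtain ⟨x, hx⟩ := hν.exists
    exact (abs_nonneg x).trans hx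
  have hK : 0 ≤ K := (abs_nonneg _).trans (haK 0 (by simpa using hL))
  have mp := measurePreserving_piFinSuccAbove (fun _ : Fin (m + 1) => ν) i
  have hint : Integrable (fun z : ℝ × (Fin m → ℝ) => a z.1 * b (∑ j, z.2 j + z.1))
      (ν.prod (Measure.pi fun _ : Fin m => ν)) := by
    apply intg (C := K * K')
    · exact (ha.comp measurable_fst).mul (hb.comp (by fun_prop))
    · have h1 := (Measure.quasiMeasurePreserving_fst (μ := ν)
        (ν := Measure.pi fun _ : Fin m => ν)).ae hν
      have h2 := (Measure.quasiMeasurePreserving_snd (μ := ν)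
        (ν := Measure.pi fun _ : Fin m => ν)).ae (ae_pi hν m)
      filter_upwards [h1, h2] with z hz1 hz2
      rw [abs_mul]
      refine mul_le_mul (haK _ hz1) (hbK _ ?_) (abs_nonneg _) hK
      have := abs_add_le (∑ j, z.2 j) z.1
      have := abs_sum_le hz2
      push_cast
      linarith
  constructor
  · rw [← integral_prod_symm _ hint, ← mp.integral_comp']
    congr with x
    simp [MeasurableEquiv.piFinSuccAbove, Fin.insertNthEquiv, Fin.sum_univ_succAbove _ i,
      Fin.removeNth, add_comm]
  · exact hint.integral_prod_right

lemma stein2 {ν : Measure ℝ} [IsProbabilityMeasure ν] {L : ℝ} (hν : ∀ᵐ x ∂ν, |x| ≤ L) (c : ℝ)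
    {n : ℕ} (i : Fin n) :
    ∫ x, up ν (x i) * ind c (∑ j, x j) ∂(Measure.pi fun _ : Fin n => ν)
      ≤ ∫ x, (x i - ∫ y, y ∂ν) * FF c (∑ j, x j) ∂(Measure.pi fun _ : Fin n => ν) ∧
    ∫ x, (x i - ∫ y, y ∂ν) * FF c (∑ j, x j) ∂(Measure.pi fun _ : Fin n => ν)
      ≤ ∫ x, um ν (x i) * ind c (∑ j, x j) ∂(Measure.pi fun _ : Fin n => ν) := by
  obtain _ | m := n
  · exact i.elim0
  obtain ⟨a1, a2⟩ := pi_split hν i (up ν) (meas_up ν) (ind c) (measurable_ind c) (4 * L ^ 2) 1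
    (fun x hx => up_bd hν hx) (fun t _ => abs_ind_le c t)
  obtain ⟨b1, b2⟩ := pi_split hν i (um ν) (meas_um ν) (ind c) (measurable_ind c) (4 * L ^ 2) 1
    (fun x hx => um_bd hν hx) (fun t _ => abs_ind_le c t)
  obtain ⟨c1, c2⟩ := pi_split hν i (fun x => x - ∫ y, y ∂ν) (by fun_prop) (FF c) (measurable_FF c)
    (L + |∫ y, y ∂ν|) ((m + 1 : ℕ) * L + |c|)
    (fun x hx => by
      have := abs_sub x (∫ y, y ∂ν)
      linarith) (fun t ht => by
      have := FF_abs c t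
      linarith)
  rw [a1, b1, c1]
  exact ⟨integral_mono a2 c2 fun y => (stein1 hν _ c).1, integral_mono c2 b2 fun y => (stein1 hν _ c).2⟩

end CW

namespace CW
open ProbabilityTheory

lemma mean_up {ν : Measure ℝ} [IsProbabilityMeasure ν] {L : ℝ} (hν : ∀ᵐ x ∂ν, |x| ≤ L) :
    ∫ x, up ν x ∂ν = Var[id; ν] ∧ ∫ x, um ν x ∂ν = Var[id; ν] := by
  have h1 := up_eq_prod hν (g := fun _ => 1) (by fun_prop) (by simp)
  have h2 := um_eq_prod hν (g := fun _ => 1) (by fun_prop) (by simp)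
  have hi := int_max hν (g := fun _ => 1) (by fun_prop) (by simp)
  simp only [mul_one] at h1 h2 hi
  have i1 : Integrable (fun y : ℝ => y) ν := intg measurable_id hν
  have i2 : Integrable (fun y : ℝ => y ^ 2) ν := intg (C := L ^ 2) (by fun_prop) (by
    filter_upwards [hν] with x hx
    rw [abs_pow]
    exact pow_le_pow_left₀ (abs_nonneg _) hx 2)
  have hs : ∫ z, (max (z.2 - z.1) 0) ^ 2 ∂(ν.prod ν) = ∫ z, (max (z.1 - z.2) 0) ^ 2 ∂(ν.prod ν) :=
    integral_prod_swap (fun z : ℝ × ℝ => (max (z.1 - z.2) 0) ^ 2)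
  have hv : Var[id; ν] = ∫ y, y ^ 2 ∂ν - (∫ y, y ∂ν) ^ 2 := by
    rw [variance_eq_sub]
    · simp
    · exact (memLp_two_iff_integrable_sq (by fun_prop)).2 i2
  have hsum : ∫ z : ℝ × ℝ, (z.1 - z.2) ^ 2 ∂(ν.prod ν) = 2 * Var[id; ν] := by
    have hint : Integrable (fun z : ℝ × ℝ => (z.1 - z.2) ^ 2) (ν.prod ν) := by
      apply intg (C := (2 * L) ^ 2) (by fun_prop)
      filter_upwards [ae_prod hν] with z hz
      rw [abs_pow]
      have := abs_sub z.1 z.2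
      exact pow_le_pow_left₀ (abs_nonneg _) (by linarith) 2
    rw [integral_prod _ hint]
    have : ∀ x : ℝ, ∫ y, (x - y) ^ 2 ∂ν = x ^ 2 - 2 * x * (∫ y, y ∂ν) + ∫ y, y ^ 2 ∂ν := by
      intro x
      have : ∀ y : ℝ, (x - y) ^ 2 = (x ^ 2 - 2 * x * y) + y ^ 2 := fun y => by ring
      simp_rw [this]
      have i3 : Integrable (fun y => x ^ 2 - 2 * x * y) ν := (integrable_const _).sub (i1.const_mul _)
      rw [integral_add i3 i2,
        integral_sub (integrable_const _) (i1.const_mul _), integral_const_mul]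
      simp
    simp only [this]
    have i3 : Integrable (fun x => x ^ 2 - 2 * x * ∫ y, y ∂ν) ν :=
      i2.sub ((i1.const_mul 2).mul_const _)
    rw [integral_add i3 (integrable_const _),
      integral_sub i2 ((i1.const_mul 2).mul_const _), integral_mul_const,
      integral_const_mul, hv]
    simp
    ring
  have hsum2 : ∫ z : ℝ × ℝ, (z.1 - z.2) ^ 2 ∂(ν.prod ν)
      = 2 * ∫ z, (max (z.1 - z.2) 0) ^ 2 ∂(ν.prod ν) := by
    have : ∀ z : ℝ × ℝ, (z.1 - z.2) ^ 2 = (max (z.1 - z.2) 0) ^ 2 + (max (z.2 - z.1) 0) ^ 2 := by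
      intro z
      rcases le_total z.1 z.2 with h | h
      · rw [max_eq_right (by linarith), max_eq_left (by linarith)]; ring
      · rw [max_eq_left (by linarith), max_eq_right (by linarith)]; ring
    simp_rw [this]
    have hi' : Integrable (fun z : ℝ × ℝ => (max (z.2 - z.1) 0) ^ 2) (ν.prod ν) := hi.swap
    rw [integral_add hi hi', hs]; ring
  rw [h1, h2]
  constructor <;> linarith

lemma l1_bound {ν : Measure ℝ} [IsProbabilityMeasure ν] {L : ℝ} (hν : ∀ᵐ x ∂ν, |x| ≤ L) 
    {a : ℝ → ℝ} (ha : Measurable a) {K : ℝ} (hK : 0 < K) (haK : ∀ x, |x| ≤ L → |a x| ≤ K)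
    {n : ℕ} (hn : 1 ≤ n) (c : ℝ) :
    |∑ i, ∫ x, a (x i) * ind c (∑ j, x j) ∂(Measure.pi fun _ : Fin n => ν)
      - n * (∫ x, a x ∂ν) * ∫ x, ind c (∑ j, x j) ∂(Measure.pi fun _ : Fin n => ν)| ≤ K * √n := by
  set P := Measure.pi fun _ : Fin n => ν
  have hmi : Measurable fun x : Fin n → ℝ => ind c (∑ j, x j) := (measurable_ind c).comp (by fun_prop)
  have hLp : MemLp a 2 ν := by
    refine MemLp.of_bound ha.aestronglyMeasurable K ?_
    filter_upwards [hν] with x hx using haK x hx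
  have hia : Integrable a ν := hLp.integrable (by norm_num)
  have hb : ∀ᵐ x ∂P, ∀ i, |a (x i)| ≤ K := by
    filter_upwards [ae_pi hν n] with x hx i using haK _ (hx i)
  have hmean : ∀ i, ∫ x, a (x i) ∂P = ∫ x, a x ∂ν := fun i =>
    integral_comp_eval (μ := fun _ : Fin n => ν) (f := a) (i := i) ha.aestronglyMeasurable
  have hii : ∀ i : Fin n, Integrable (fun x : Fin n → ℝ => a (x i)) P := fun i =>
    intg (C := K) (by fun_prop) (by filter_upwards [hb] with x hx using hx i)
  have hij : ∀ i : Fin n, Integrable (fun x : Fin n → ℝ => a (x i) * ind c (∑ j, x j)) P := fun i =>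
    intg (C := K) ((ha.comp (measurable_pi_apply i)).mul hmi) (by
      filter_upwards [hb] with x hx
      rw [abs_mul]
      exact (mul_le_of_le_one_right (abs_nonneg _) (abs_ind_le _ _)).trans (hx i))
  have hind : Integrable (fun x : Fin n → ℝ => ind c (∑ j, x j)) P :=
    intg (C := 1) hmi (Filter.Eventually.of_forall fun x => abs_ind_le _ _)
  set A := ∫ x, a x ∂ν with hA
  have hY : MemLp (∑ i, fun x : Fin n → ℝ => a (x i)) 2 P := by
    refine memLp_finsetSum' _ fun i _ => ?_
    refine MemLp.of_bound (ha.comp (measurable_pi_apply i)).aestronglyMeasurable K ?_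
    filter_upwards [hb] with x hx using hx i
  have hvar : ∫ x, (∑ i, a (x i) - n * A) ^ 2 ∂P ≤ n * K ^ 2 := by
    have h1 := variance_sum_pi (μ := fun _ : Fin n => ν) (X := fun _ => a) (fun _ => hLp)
    rw [variance_eq_integral hY.aestronglyMeasurable.aemeasurable] at h1
    have h2 : ∫ x, (∑ i, fun x : Fin n → ℝ => a (x i)) x ∂P = n * A := by
      simp only [Finset.sum_apply]
      rw [integral_finsetSum _ fun i _ => hii i]
      simp [hmean]
    rw [h2] at h1
    simp only [Finset.sum_apply] at h1
    rw [h1]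
    simp only [Finset.sum_const, Finset.card_univ, Fintype.card_fin, nsmul_eq_mul]
    gcongr
    refine (variance_le_expectation_sq ha.aestronglyMeasurable).trans ?_
    calc ∫ x, (a ^ 2) x ∂ν ≤ ∫ x, K ^ 2 ∂ν := by
          refine integral_mono_ae hLp.integrable_sq (by simp) ?_
          filter_upwards [hν] with x hx
          exact sq_le_sq' (neg_le_of_abs_le (haK x hx)) (le_of_abs_le (haK x hx))
      _ = K ^ 2 := by simp
  have hsq : Integrable (fun x : Fin n → ℝ => (∑ i, a (x i) - n * A) ^ 2) P := by
    have : MemLp (fun x : Fin n → ℝ => ∑ i, a (x i) - n * A) 2 P := by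
      have := hY.sub (memLp_const (n * A) : MemLp (fun _ => n * A) 2 P)
      convert this using 1
      ext x; simp
    exact this.integrable_sq
  have hn0 : (0 : ℝ) < n := by exact_mod_cast hn
  have hsn : 0 < √(n : ℝ) := Real.sqrt_pos.2 hn0
  set t := K * √n with ht
  have ht0 : 0 < t := by positivity
  have key : ∑ i, ∫ x, a (x i) * ind c (∑ j, x j) ∂P - n * A * ∫ x, ind c (∑ j, x j) ∂P
      = ∫ x, (∑ i, a (x i) - n * A) * ind c (∑ j, x j) ∂P := by
    simp_rw [sub_mul, Finset.sum_mul]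
    rw [integral_sub (integrable_finsetSum _ fun i _ => hij i) (hind.const_mul _),
      integral_finsetSum _ fun i _ => hij i, integral_const_mul]
  rw [key]
  calc |∫ x, (∑ i, a (x i) - n * A) * ind c (∑ j, x j) ∂P|
      ≤ ∫ x, ((∑ i, a (x i) - n * A) ^ 2 / t + t) / 2 ∂P := by
        refine norm_integral_le_of_norm_le (f := fun x : Fin n → ℝ => (∑ i, a (x i) - n * A) * ind c (∑ j, x j)) ?_ ?_
        · exact ((hsq.div_const _).add (integrable_const _)).div_const _
        · filter_upwards with x
          rw [Real.norm_eq_abs, abs_mul]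
          refine (mul_le_of_le_one_right (abs_nonneg _) (abs_ind_le _ _)).trans ?_
          set y := ∑ i, a (x i) - n * A
          rw [div_add' _ _ _ ht0.ne', div_div, le_div_iff₀ (by positivity), ← sq_abs y]
          nlinarith [sq_nonneg (|y| - t)]
    _ = ((∫ x, (∑ i, a (x i) - n * A) ^ 2 ∂P) / t + t) / 2 := by
        rw [integral_div, integral_add (hsq.div_const _) (integrable_const _), integral_div]
        simp
    _ ≤ (n * K ^ 2 / t + t) / 2 := by gcongr
    _ = t := by
        have : (n : ℝ) * K ^ 2 = t * t := by
          rw [ht]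
          have := Real.mul_self_sqrt hn0.le
          linear_combination (-K^2) * this
        rw [this]; field_simp; ring

/-- Lemma A: the approximate Stein identity for i.i.d. bounded variables. -/
lemma steinA {ν : Measure ℝ} [IsProbabilityMeasure ν] {L : ℝ} (hL : 1 ≤ L) (hν : ∀ᵐ x ∂ν, |x| ≤ L)
    (c : ℝ) {n : ℕ} (hn : 1 ≤ n) :
    |∫ x, (∑ j, x j - n * ∫ y, y ∂ν) * FF c (∑ j, x j) ∂(Measure.pi fun _ : Fin n => ν)
      - n * Var[id; ν] * ∫ x, ind c (∑ j, x j) ∂(Measure.pi fun _ : Fin n => ν)|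
      ≤ 4 * L ^ 2 * √n := by
  have h1 := l1_bound hν (meas_up ν) (K := 4 * L ^ 2) (by positivity) (fun x hx => up_bd hν hx) hn c
  have h2 := l1_bound hν (meas_um ν) (K := 4 * L ^ 2) (by positivity) (fun x hx => um_bd hν hx) hn c
  rw [(mean_up hν).1] at h1
  rw [(mean_up hν).2] at h2
  have h3 : ∫ x, (∑ j, x j - n * ∫ y, y ∂ν) * FF c (∑ j, x j) ∂(Measure.pi fun _ : Fin n => ν)
      = ∑ i, ∫ x, (x i - ∫ y, y ∂ν) * FF c (∑ j, x j) ∂(Measure.pi fun _ : Fin n => ν) := by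
    rw [← integral_finsetSum]
    · congr with x
      rw [← Finset.sum_mul]
      simp
    · intro i _
      apply intg (C := (L + |∫ y, y ∂ν|) * (n * L + |c|))
      · exact Measurable.mul (by fun_prop) ((measurable_FF c).comp (by fun_prop))
      · filter_upwards [ae_pi hν n] with x hx
        rw [abs_mul]
        have := abs_sub (x i) (∫ y, y ∂ν)
        have := hx i
        have := FF_abs c (∑ j, x j)
        have := abs_sum_le hx
        exact mul_le_mul (by linarith) (by linarith) (abs_nonneg _) (by positivity)
  rw [h3]
  have h4 := Finset.sum_le_sum fun i (_ : i ∈ Finset.univ) => (stein2 hν c (n := n) i).1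
  have h5 := Finset.sum_le_sum fun i (_ : i ∈ Finset.univ) => (stein2 hν c (n := n) i).2
  rw [abs_le] at *
  constructor <;> linarith

end CW

namespace CW
open ProbabilityTheory

lemma exp_int {ρ : Measure ℝ} [IsProbabilityMeasure ρ] {L : ℝ} (hρ : ∀ᵐ x ∂ρ, |x| ≤ L) (s : ℝ) :
    Integrable (fun x => exp (s * x)) ρ := by
  apply intg (C := exp (|s| * L)) (by fun_prop)
  filter_upwards [hρ] with x hx
  rw [abs_of_pos (exp_pos _), exp_le_exp]
  calc s * x ≤ |s * x| := le_abs_self _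
    _ = |s| * |x| := abs_mul _ _
    _ ≤ |s| * L := by gcongr

lemma mem_int {ρ : Measure ℝ} [IsProbabilityMeasure ρ] {L : ℝ} (hρ : ∀ᵐ x ∂ρ, |x| ≤ L) (s : ℝ) :
    s ∈ interior (integrableExpSet id ρ) := by
  have : integrableExpSet id ρ = Set.univ := by
    ext t; simpa [integrableExpSet] using exp_int hρ t
  rw [this]; simp

/-- the tilted measure -/
noncomputable def til (ρ : Measure ℝ) (s : ℝ) : Measure ℝ := ρ.tilted (fun x => s * x)

lemma til_prob {ρ : Measure ℝ} [IsProbabilityMeasure ρ] {L : ℝ} (hρ : ∀ᵐ x ∂ρ, |x| ≤ L) (s : ℝ) :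
    IsProbabilityMeasure (til ρ s) := isProbabilityMeasure_tilted (exp_int hρ s)

lemma til_ae {ρ : Measure ℝ} {L : ℝ} (hρ : ∀ᵐ x ∂ρ, |x| ≤ L) (s : ℝ) :
    ∀ᵐ x ∂(til ρ s), |x| ≤ L := (tilted_absolutelyContinuous ρ _).ae_le hρ

lemma hfun_eq (ρ : Measure ℝ) : hfun ρ = fun s => s ^ 2 / 2 - cgf id ρ s := rfl

lemma hfun_smooth {ρ : Measure ℝ} [IsProbabilityMeasure ρ] {L : ℝ} (hρ : ∀ᵐ x ∂ρ, |x| ≤ L)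
    {m : WithTop ℕ∞} : ContDiff ℝ m (hfun ρ) := by
  rw [hfun_eq]
  apply ContDiff.sub (by fun_prop)
  rw [contDiff_iff_contDiffAt]
  intro x
  exact (analyticAt_cgf (mem_int hρ x)).contDiffAt

lemma cgf_smooth {ρ : Measure ℝ} [IsProbabilityMeasure ρ] {L : ℝ} (hρ : ∀ᵐ x ∂ρ, |x| ≤ L)
    {m : WithTop ℕ∞} : ContDiff ℝ m (cgf id ρ) := by
  rw [contDiff_iff_contDiffAt]
  intro x
  exact (analyticAt_cgf (mem_int hρ x)).contDiffAt

lemma deriv_hfun {ρ : Measure ℝ} [IsProbabilityMeasure ρ] {L : ℝ} (hρ : ∀ᵐ x ∂ρ, |x| ≤ L) (s : ℝ) :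
    deriv (hfun ρ) s = s - ∫ x, x ∂(til ρ s) := by
  have h := integral_tilted_mul_self (mem_int hρ s)
  simp only [id] at h
  rw [til, h, hfun_eq]
  have h1 : HasDerivAt (cgf id ρ) (deriv (cgf id ρ) s) s :=
    ((cgf_smooth hρ (m := 1)).differentiable (by norm_num) s).hasDerivAt
  have h2 : HasDerivAt (fun s : ℝ => s ^ 2 / 2) s s := by
    have := (hasDerivAt_pow 2 s).div_const 2
    exact this.congr_deriv (by norm_num)
  exact (h2.sub h1).deriv

lemma deriv2_hfun {ρ : Measure ℝ} [IsProbabilityMeasure ρ] {L : ℝ} (hρ : ∀ᵐ x ∂ρ, |x| ≤ L) (s : ℝ) :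
    deriv (deriv (hfun ρ)) s = 1 - Var[id; til ρ s] := by
  have h := variance_tilted_mul (mem_int hρ s)
  simp only [id] at h
  rw [til]
  have h0 : deriv (hfun ρ) = fun s => s - deriv (cgf id ρ) s := by
    ext t
    rw [deriv_hfun hρ, til]
    have h := integral_tilted_mul_self (mem_int hρ t)
    simp only [id] at h
    rw [h]
  rw [h0]
  change _ = 1 - Var[fun x => x; _]
  have e : (id : ℝ → ℝ) = fun x => x := rfl
  rw [e] at h
  rw [h]
  have h1 : HasDerivAt (deriv (cgf id ρ)) (deriv (deriv (cgf id ρ)) s) s := by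
    have := (cgf_smooth hρ (m := 2)).differentiable_deriv_two s
    exact this.hasDerivAt
  rw [show deriv (fun s => s - deriv (cgf id ρ) s) s = _ from ((hasDerivAt_id' s).sub h1).deriv, iteratedDeriv_succ, iteratedDeriv_one]
  rfl

lemma pi_tilted {ρ : Measure ℝ} [IsProbabilityMeasure ρ] {L : ℝ} (hρ : ∀ᵐ x ∂ρ, |x| ≤ L) (s : ℝ)
    (n : ℕ) : Measure.pi (fun _ : Fin n => til ρ s)
      = (Measure.pi fun _ : Fin n => ρ).tilted (fun x => s * ∑ j, x j) := by
  have := til_prob hρ s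
  have hexp : ∀ x : Fin n → ℝ, exp (s * ∑ j, x j) = ∏ j, exp (s * x j) := by
    intro x; rw [Finset.mul_sum, exp_sum]
  apply Measure.pi_eq
  intro t ht
  rw [tilted_apply_eq_ofReal_integral' _ (MeasurableSet.univ_pi ht)]
  have h1 : ∀ i, til ρ s (t i) = ENNReal.ofReal ((∫ x in t i, exp (s * x) ∂ρ) / ∫ x, exp (s * x) ∂ρ) := by
    intro i
    rw [til, tilted_apply_eq_ofReal_integral' _ (ht i), integral_div]
  simp_rw [h1]
  rw [← ENNReal.ofReal_prod_of_nonneg (fun i _ => by positivity), integral_div, Finset.prod_div_distrib,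
    Measure.restrict_pi_pi]
  simp_rw [hexp]
  rw [integral_fintype_prod_eq_prod (fun _ x => exp (s * x)),
    integral_fintype_prod_eq_prod (fun _ x => exp (s * x))]

/-- The (unnormalised) joint expectation -/
noncomputable def J (ρ : Measure ℝ) (n : ℕ) (G : (Fin n → ℝ) → ℝ) (s : ℝ) : ℝ :=
  ∫ x, exp (s * ∑ j, x j - n * s ^ 2 / 2) * G x ∂(Measure.pi fun _ : Fin n => ρ)

lemma J_eq {ρ : Measure ℝ} [IsProbabilityMeasure ρ] {L : ℝ} (hρ : ∀ᵐ x ∂ρ, |x| ≤ L) (s : ℝ)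
    (n : ℕ) (G : (Fin n → ℝ) → ℝ) :
    J ρ n G s = exp (-(n * hfun ρ s)) * ∫ x, G x ∂(Measure.pi fun _ : Fin n => til ρ s) := by
  rw [pi_tilted hρ, integral_tilted, J]
  have hZ : ∫ x, exp (s * ∑ j, x j) ∂(Measure.pi fun _ : Fin n => ρ)
      = exp (n * cgf id ρ s) := by
    have hexp : ∀ x : Fin n → ℝ, exp (s * ∑ j, x j) = ∏ j, exp (s * x j) := by
      intro x; rw [Finset.mul_sum, exp_sum]
    simp_rw [hexp]
    rw [integral_fintype_prod_eq_prod (fun _ x => exp (s * x))]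
    simp only [Finset.prod_const, Finset.card_univ, Fintype.card_fin]
    rw [exp_nat_mul, exp_cgf (X := id) (exp_int hρ s)]
    rfl
  rw [hZ, ← integral_const_mul]
  congr with x
  rw [smul_eq_mul, ← exp_sub, ← mul_assoc, ← exp_add, hfun_eq]
  congr 2
  ring

lemma J_one {ρ : Measure ℝ} [IsProbabilityMeasure ρ] {L : ℝ} (hρ : ∀ᵐ x ∂ρ, |x| ≤ L) (s : ℝ)
    (n : ℕ) : J ρ n (fun _ => 1) s = exp (-(n * hfun ρ s)) := by
  have := til_prob hρ s
  rw [J_eq hρ]; simp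

lemma J_lin {ρ : Measure ℝ} [IsProbabilityMeasure ρ] {L : ℝ} (hρ : ∀ᵐ x ∂ρ, |x| ≤ L) (s : ℝ)
    (n : ℕ) : J ρ n (fun x => ∑ j, x j - n * s) s
      = - (n * deriv (hfun ρ) s * exp (-(n * hfun ρ s))) := by
  have := til_prob hρ s
  have hi : Integrable (fun x : ℝ => x) (til ρ s) := intg measurable_id (til_ae hρ s)
  have hii : ∀ i : Fin n, Integrable (fun x : Fin n → ℝ => x i)
      (Measure.pi fun _ : Fin n => til ρ s) := fun i =>
    intg (C := L) (by fun_prop) (by filter_upwards [ae_pi (til_ae hρ s) n] with x hx using hx i)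
  have hmean : ∀ i : Fin n, ∫ x, x i ∂(Measure.pi fun _ : Fin n => til ρ s) = ∫ x, x ∂til ρ s :=
    fun i => integral_comp_eval (μ := fun _ : Fin n => til ρ s) (f := fun x => x) (i := i)
      hi.aestronglyMeasurable
  rw [J_eq hρ, integral_sub (integrable_finsetSum _ fun i _ => hii i) (integrable_const _),
    integral_finsetSum _ fun i _ => hii i]
  simp only [hmean, deriv_hfun hρ]
  simp
  ring

lemma J_exp {ρ : Measure ℝ} [IsProbabilityMeasure ρ] {L : ℝ} (hρ : ∀ᵐ x ∂ρ, |x| ≤ L) (s l : ℝ)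
    (n : ℕ) (hl : n * l ^ 2 = 1) : J ρ n (fun x => exp (l * (∑ j, x j - n * s))) s
      = exp (1 / 2) * exp (-(n * hfun ρ (s + l))) := by
  rw [← J_one hρ, J, J, ← integral_const_mul]
  congr with x
  rw [mul_one, ← exp_add, ← exp_add]
  congr 1
  linear_combination (1/2) * hl

/-- Lemma A in tilted form -/
lemma J_stein {ρ : Measure ℝ} [IsProbabilityMeasure ρ] {L : ℝ} (hL : 1 ≤ L) (hρ : ∀ᵐ x ∂ρ, |x| ≤ L)
    (s c : ℝ) {n : ℕ} (hn : 1 ≤ n) :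
    |J ρ n (fun x => (∑ j, x j - n * (s - deriv (hfun ρ) s)) * FF c (∑ j, x j)) s
      - n * (1 - deriv (deriv (hfun ρ)) s) * J ρ n (fun x => ind c (∑ j, x j)) s|
      ≤ 4 * L ^ 2 * √n * exp (-(n * hfun ρ s)) := by
  have := til_prob hρ s
  have h := steinA hL (til_ae hρ s) c hn
  rw [J_eq hρ, J_eq hρ, deriv_hfun hρ, deriv2_hfun hρ]
  simp only [sub_sub_cancel]
  have e := exp_pos (-(n * hfun ρ s))
  set E := exp (-(n * hfun ρ s))
  rw [show ∀ a b d f : ℝ, E * a - b * d * (E * f) = E * (a - b * d * f) by intros; ring,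
    abs_mul, abs_of_pos e, mul_comm]
  gcongr

end CW

namespace CW
open ProbabilityTheory
open scoped ContDiff

lemma int_step {f f' : ℝ → ℝ} (hf : ∀ s, HasDerivAt f (f' s) s) (h0 : f 0 = 0) {C : ℝ} {j : ℕ}
    (hC : 0 ≤ C) (hb : ∀ s, |s| ≤ 1 → |f' s| ≤ C * |s| ^ j) :
    ∀ s, |s| ≤ 1 → |f s| ≤ C * |s| ^ (j + 1) := by
  intro s hs
  have hseg : ∀ x ∈ Set.Icc (-|s|) |s|, |x| ≤ |s| := fun x hx => abs_le.2 hx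
  have := (convex_Icc (-|s|) |s|).norm_image_sub_le_of_norm_hasDerivWithin_le (f := f) (f' := f')
    (C := C * |s| ^ j) (x := 0) (y := s) (fun x _ => (hf x).hasDerivWithinAt)
    (fun x hx => by
      refine (hb x ((hseg x hx).trans hs)).trans ?_
      have := hseg x hx
      gcongr)
    ⟨by simp, by simp⟩ ⟨neg_abs_le s, le_abs_self s⟩
  rw [h0] at this
  simp only [sub_zero, Real.norm_eq_abs] at this
  rw [pow_succ]; linarith

lemma taylor0 (m : ℕ) : ∀ g : ℝ → ℝ, ContDiff ℝ ∞ g → (∀ i < m, iteratedDeriv i g 0 = 0) →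
    ∃ C, 0 ≤ C ∧ ∀ s, |s| ≤ 1 → |g s| ≤ C * |s| ^ m := by
  induction m with
  | zero =>
    intro g hg _
    obtain ⟨C, hC⟩ := (isCompact_Icc (a := (-1 : ℝ)) (b := 1)).exists_bound_of_continuousOn
      hg.continuous.continuousOn
    refine ⟨C, (norm_nonneg _).trans (hC 0 (by simp)), fun s hs => ?_⟩
    simpa using hC s (abs_le.1 hs)
  | succ m ih =>
    intro g hg h0
    have hg' : ContDiff ℝ ∞ (deriv g) := ((contDiff_infty_iff_deriv).1 hg).2
    obtain ⟨C, hC0, hC⟩ := ih (deriv g) hg' (fun i hi => by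
      rw [← iteratedDeriv_succ']; exact h0 (i + 1) (by omega))
    refine ⟨C, hC0, int_step (f' := deriv g) (fun s => ?_) ?_ hC0 hC⟩
    · exact (hg.differentiable (by simp) s).hasDerivAt
    · simpa using h0 0 (by omega)

lemma taylor2 (m : ℕ) : ∀ g : ℝ → ℝ, ContDiff ℝ ∞ g → (∀ i < m, iteratedDeriv i g 0 = 0) →
    iteratedDeriv (m + 1) g 0 = 0 →
    ∃ C, 0 ≤ C ∧ ∀ s, |s| ≤ 1 → |g s - iteratedDeriv m g 0 / (Nat.factorial m) * s ^ m|
      ≤ C * |s| ^ (m + 2) := by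
  induction m with
  | zero =>
    intro g hg _ h1
    have : ContDiff ℝ ∞ (fun s => g s - g 0) := hg.sub contDiff_const
    obtain ⟨C, hC0, hC⟩ := taylor0 2 _ this (fun i hi => by
      interval_cases i
      · simp
      · rw [iteratedDeriv_one, deriv_sub_const]
        simpa using h1)
    exact ⟨C, hC0, fun s hs => by simpa using hC s hs⟩
  | succ m ih =>
    intro g hg h0 h1
    have hg' : ContDiff ℝ ∞ (deriv g) := ((contDiff_infty_iff_deriv).1 hg).2
    obtain ⟨C, hC0, hC⟩ := ih (deriv g) hg' (fun i hi => by
      rw [← iteratedDeriv_succ']; exact h0 (i + 1) (by omega)) (by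
      rw [← iteratedDeriv_succ']; exact h1)
    refine ⟨C, hC0, int_step (fun s => ?_) ?_ hC0 hC⟩
    · have e1 : HasDerivAt g (deriv g s) s := (hg.differentiable (by simp) s).hasDerivAt
      have e2 := (hasDerivAt_pow (m + 1) s).const_mul
        (iteratedDeriv (m + 1) g 0 / (Nat.factorial (m + 1)))
      refine (e1.sub e2).congr_deriv ?_
      rw [← iteratedDeriv_succ', Nat.factorial_succ]
      push_cast
      have : (m.factorial : ℝ) ≠ 0 := by positivity
      field_simp
    · simpa using h0 0 (by omega)

section
variable {ρ : Measure ℝ} [IsProbabilityMeasure ρ] {L : ℝ}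

lemma cgf_abs (hρ : ∀ᵐ x ∂ρ, |x| ≤ L) (s : ℝ) : |cgf id ρ s| ≤ L * |s| := by
  have hb : ∀ x, |x| ≤ L → |s * x| ≤ L * |s| := fun x hx => by
    rw [abs_mul, mul_comm]; gcongr
  have h1 : mgf id ρ s ≤ exp (L * |s|) := by
    calc mgf id ρ s = ∫ x, exp (s * x) ∂ρ := rfl
      _ ≤ ∫ x, exp (L * |s|) ∂ρ := by
        refine integral_mono_ae (exp_int hρ s) (by simp) ?_
        filter_upwards [hρ] with x hx
        exact exp_le_exp.2 (le_of_abs_le (hb x hx))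
      _ = _ := by simp
  have h2 : exp (-(L * |s|)) ≤ mgf id ρ s := by
    calc exp (-(L * |s|)) = ∫ x, exp (-(L * |s|)) ∂ρ := by simp
      _ ≤ ∫ x, exp (s * x) ∂ρ := by
        refine integral_mono_ae (by simp) (exp_int hρ s) ?_
        filter_upwards [hρ] with x hx
        exact exp_le_exp.2 (neg_le_of_abs_le (hb x hx))
      _ = mgf id ρ s := rfl
  have hp : 0 < mgf id ρ s := lt_of_lt_of_le (exp_pos _) h2
  rw [cgf, abs_le]
  exact ⟨(le_log_iff_exp_le hp).2 h2, (log_le_iff_le_exp hp).2 h1⟩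

lemma hfun_even (hsym : ρ.map (fun x => -x) = ρ) (s : ℝ) : hfun ρ (-s) = hfun ρ s := by
  unfold hfun
  have : ∫ x, exp (-s * x) ∂ρ = ∫ x, exp (s * x) ∂ρ := by
    conv_rhs => rw [← hsym]
    rw [integral_map (by fun_prop) (by fun_prop)]
    congr with x
    ring_nf
  rw [this]; ring

lemma hfun_odd_deriv (hsym : ρ.map (fun x => -x) = ρ) {m : ℕ} (hm : Odd m) :
    iteratedDeriv m (hfun ρ) 0 = 0 := by
  have h := iteratedDeriv_comp_neg m (hfun ρ) 0
  simp_rw [hfun_even hsym] at h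
  rw [hm.neg_one_pow] at h
  simp at h
  change iteratedDeriv m (hfun ρ) 0 = _ at h
  linarith

lemma one_le_abs_pow {s : ℝ} (hs : 1 ≤ |s|) {i j : ℕ} (h : i ≤ j) : |s| ^ i ≤ |s| ^ j :=
  pow_le_pow_right₀ hs h

lemma H1 (hL : 1 ≤ L) (hρ : ∀ᵐ x ∂ρ, |x| ≤ L) {k : ℕ} (hk : 2 ≤ k)
    (hder : ∀ i : ℕ, i ≤ 2 * k - 1 → iteratedDeriv i (hfun ρ) 0 = 0) :
    ∃ C, 0 ≤ C ∧ ∀ s, |deriv (hfun ρ) s| ≤ C * |s| ^ (2 * k - 1) := by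
  have hs := hfun_smooth hρ (m := ∞)
  obtain ⟨C, hC0, hC⟩ := taylor0 (2 * k - 1) (deriv (hfun ρ)) ((contDiff_infty_iff_deriv).1 hs).2
    (fun i hi => by rw [← iteratedDeriv_succ']; exact hder _ (by omega))
  refine ⟨C + (1 + L), by positivity, fun s => ?_⟩
  rcases le_total |s| 1 with h | h
  · have := hC s h
    have : 0 ≤ (1 + L) * |s| ^ (2 * k - 1) := by positivity
    linarith
  · have := til_prob hρ s
    have hb : |∫ x, x ∂(til ρ s)| ≤ L := by
      have := norm_integral_le_of_norm_le_const (μ := til ρ s) (f := fun y => y)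
        (C := L) (til_ae hρ s)
      simpa using this
    rw [deriv_hfun hρ]
    have h1 := abs_sub s (∫ x, x ∂(til ρ s))
    have h2 := one_le_abs_pow h (i := 1) (j := 2 * k - 1) (by omega)
    have h3 := one_le_abs_pow h (i := 0) (j := 2 * k - 1) (by omega)
    simp only [pow_one, pow_zero] at h2 h3
    have : 0 ≤ C * |s| ^ (2 * k - 1) := by positivity
    nlinarith

lemma H2 (hL : 1 ≤ L) (hρ : ∀ᵐ x ∂ρ, |x| ≤ L) {k : ℕ} (hk : 2 ≤ k)
    (hder : ∀ i : ℕ, i ≤ 2 * k - 1 → iteratedDeriv i (hfun ρ) 0 = 0) :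
    ∃ C, 0 ≤ C ∧ ∀ s, |deriv (deriv (hfun ρ)) s| ≤ C * |s| ^ 2 := by
  have hs := hfun_smooth hρ (m := ∞)
  obtain ⟨C, hC0, hC⟩ := taylor0 2 (deriv (deriv (hfun ρ)))
    ((contDiff_infty_iff_deriv).1 ((contDiff_infty_iff_deriv).1 hs).2).2
    (fun i hi => by
      rw [← iteratedDeriv_succ', ← iteratedDeriv_succ']; exact hder _ (by omega))
  refine ⟨C + (1 + L ^ 2), by positivity, fun s => ?_⟩
  rcases le_total |s| 1 with h | h
  · have := hC s h
    have : 0 ≤ (1 + L ^ 2) * |s| ^ 2 := by positivity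
    linarith
  · have := til_prob hρ s
    have hv : Var[id; til ρ s] ≤ L ^ 2 := by
      refine (variance_le_expectation_sq (by fun_prop)).trans ?_
      have := norm_integral_le_of_norm_le_const (μ := til ρ s) (f := fun y => y ^ 2)
        (C := L ^ 2) (by
          filter_upwards [til_ae hρ s] with x hx
          rw [norm_pow]
          exact pow_le_pow_left₀ (abs_nonneg _) hx 2)
      have h2 : (∫ y, y ^ 2 ∂(til ρ s)) ≤ L ^ 2 := by
        refine (le_abs_self _).trans ?_
        simpa using this
      simpa using h2
    have hv0 := variance_nonneg id (til ρ s)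
    rw [deriv2_hfun hρ]
    have h3 := one_le_abs_pow h (i := 0) (j := 2) (by omega)
    simp only [pow_zero] at h3
    have : |1 - Var[id; til ρ s]| ≤ 1 + L ^ 2 := abs_le.2 ⟨by linarith, by nlinarith⟩
    have : 0 ≤ C * |s| ^ 2 := by positivity
    nlinarith [sq_nonneg L]

lemma H3 (hL : 1 ≤ L) (hρ : ∀ᵐ x ∂ρ, |x| ≤ L) (hsym : ρ.map (fun x => -x) = ρ) {k : ℕ} (hk : 2 ≤ k)
    (hder : ∀ i : ℕ, i ≤ 2 * k - 1 → iteratedDeriv i (hfun ρ) 0 = 0) :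
    ∃ C, 0 ≤ C ∧ ∀ s, |hfun ρ s - iteratedDeriv (2 * k) (hfun ρ) 0 / (Nat.factorial (2 * k))
      * s ^ (2 * k)| ≤ C * |s| ^ (2 * k + 2) := by
  have hs := hfun_smooth hρ (m := ∞)
  obtain ⟨C, hC0, hC⟩ := taylor2 (2 * k) (hfun ρ) hs (fun i hi => hder _ (by omega))
    (hfun_odd_deriv hsym ⟨k, rfl⟩)
  set a := iteratedDeriv (2 * k) (hfun ρ) 0 / (Nat.factorial (2 * k))
  refine ⟨C + (1 + L + |a|), by positivity, fun s => ?_⟩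
  rcases le_total |s| 1 with h | h
  · have := hC s h
    have : 0 ≤ (1 + L + |a|) * |s| ^ (2 * k + 2) := by positivity
    linarith
  · have h1 := cgf_abs hρ s
    have h2 := one_le_abs_pow h (i := 1) (j := 2 * k + 2) (by omega)
    have h3 := one_le_abs_pow h (i := 2) (j := 2 * k + 2) (by omega)
    have h4 := one_le_abs_pow h (i := 2 * k) (j := 2 * k + 2) (by omega)
    simp only [pow_one] at h2
    have e1 : |hfun ρ s| ≤ |s| ^ 2 + L * |s| := by
      rw [hfun_eq]
      have := abs_sub (s ^ 2 / 2) (cgf id ρ s)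
      have e : |s ^ 2 / 2| = |s| ^ 2 / 2 := by rw [abs_div, abs_pow]; simp
      have := sq_nonneg |s|
      linarith
    have e2 := abs_sub (hfun ρ s) (a * s ^ (2 * k))
    rw [abs_mul, abs_pow] at e2
    have e3 : |a| * |s| ^ (2 * k) ≤ |a| * |s| ^ (2 * k + 2) := by gcongr
    have e4 : L * |s| ≤ L * |s| ^ (2 * k + 2) := by gcongr
    have : 0 ≤ C * |s| ^ (2 * k + 2) := by positivity
    linarith

lemma H4 (hL : 1 ≤ L) (hρ : ∀ᵐ x ∂ρ, |x| ≤ L) (hsym : ρ.map (fun x => -x) = ρ) {k : ℕ} (hk : 2 ≤ k)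
    (hroot : ∀ s : ℝ, deriv (hfun ρ) s = 0 ↔ s = 0)
    (hder : ∀ i : ℕ, i ≤ 2 * k - 1 → iteratedDeriv i (hfun ρ) 0 = 0)
    (hpos : 0 < iteratedDeriv (2 * k) (hfun ρ) 0) :
    ∃ c, 0 < c ∧ ∀ s, c * min (s ^ 2) (s ^ (2 * k)) ≤ hfun ρ s := by
  obtain ⟨C, hC0, hC⟩ := H3 hL hρ hsym hk hder
  set a := iteratedDeriv (2 * k) (hfun ρ) 0 / (Nat.factorial (2 * k)) with ha
  have ha0 : 0 < a := by positivity
  have hcont : Continuous (hfun ρ) := (hfun_smooth hρ (m := 0)).continuous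
  -- small s
  obtain ⟨d, hd0, hd1⟩ : ∃ d, 0 < d ∧ C * d ^ 2 ≤ a / 2 := by
    refine ⟨√(a / 2 / (C + 1)), by positivity, ?_⟩
    rw [Real.sq_sqrt (by positivity), mul_div_assoc', div_le_iff₀ (by positivity)]
    nlinarith
  have hsmall : ∀ s, |s| ≤ d → a / 2 * s ^ (2 * k) ≤ hfun ρ s := by
    intro s hs
    have h1 := hC s
    have h2 : C * |s| ^ (2 * k + 2) ≤ a / 2 * s ^ (2 * k) := by
      rw [pow_add, ← (even_two_mul k).pow_abs s]
      have : C * |s| ^ 2 ≤ a / 2 := le_trans (by gcongr) hd1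
      have h0 : 0 ≤ |s| ^ (2 * k) := by positivity
      nlinarith
    have := (abs_le.1 h1).1
    linarith
  have h00 : hfun ρ 0 = 0 := by simpa using hder 0 (by omega)
  have hposi : ∀ s, 0 < s → 0 < hfun ρ s := by
    intro s hs
    by_contra! hneg
    set e := min d (s / 2) with he
    have he0 : 0 < e := by positivity
    have hes : e < s := lt_of_le_of_lt (min_le_right _ _) (by linarith)
    have hpe : 0 < hfun ρ e := lt_of_lt_of_le (by positivity)
      (hsmall e (by rw [abs_of_pos he0]; exact min_le_left _ _))
    obtain ⟨t, ht, ht0⟩ := intermediate_value_Icc' hes.le hcont.continuousOn ⟨hneg, hpe.le⟩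
    have ht1 : 0 < t := lt_of_lt_of_le he0 ht.1
    obtain ⟨u, hu, hu0⟩ := exists_deriv_eq_zero ht1 hcont.continuousOn (h00.trans ht0.symm)
    have := (hroot u).1 hu0
    linarith [hu.1]
  obtain ⟨x0, hx0, hmin⟩ := (isCompact_Icc (a := d) (b := d + 4 * L)).exists_isMinOn
    ⟨d, by simp; positivity⟩ hcont.continuousOn
  have hm0 : 0 < hfun ρ x0 := hposi x0 (lt_of_lt_of_le hd0 hx0.1)
  set M := (d + 4 * L) ^ 2 with hM
  have hM0 : 0 < M := by positivity
  set c := min (a / 2) (min (1 / 4) (hfun ρ x0 / M)) with hc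
  have c1 : c ≤ a / 2 := min_le_left _ _
  have c2 : c ≤ 1 / 4 := (min_le_right _ _).trans (min_le_left _ _)
  have c3 : c ≤ hfun ρ x0 / M := (min_le_right _ _).trans (min_le_right _ _)
  have hc0 : 0 < c := by positivity
  have main : ∀ s, 0 ≤ s → c * min (s ^ 2) (s ^ (2 * k)) ≤ hfun ρ s := by
    intro s hs
    have e1 : c * min (s ^ 2) (s ^ (2 * k)) ≤ c * s ^ (2 * k) := by
      gcongr; exact min_le_right _ _
    have e2 : c * min (s ^ 2) (s ^ (2 * k)) ≤ c * s ^ 2 := by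
      gcongr; exact min_le_left _ _
    rcases le_total s d with h | h
    · refine e1.trans (le_trans ?_ (hsmall s (by rwa [abs_of_nonneg hs])))
      gcongr
    · rcases le_total s (d + 4 * L) with h' | h'
      · have h1 : hfun ρ x0 ≤ hfun ρ s := hmin ⟨h, h'⟩
        refine e2.trans (le_trans ?_ h1)
        calc c * s ^ 2 ≤ hfun ρ x0 / M * M := by
              rw [hM]; gcongr
          _ = hfun ρ x0 := by field_simp
      · have h1 := (abs_le.1 (cgf_abs hρ s)).2
        rw [abs_of_nonneg hs] at h1
        refine e2.trans ?_
        rw [hfun_eq]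
        nlinarith
  refine ⟨c, hc0, fun s => ?_⟩
  rcases le_total 0 s with h | h
  · exact main s h
  · have := main (-s) (by linarith)
    rwa [hfun_even hsym, neg_sq, (even_two_mul k).neg_pow] at this

end
end CW

namespace CW
open ProbabilityTheory

section
variable {ρ : Measure ℝ} [IsProbabilityMeasure ρ] {L : ℝ}

lemma expo_bd {n : ℕ} (hn : 1 ≤ n) (m : ℝ) (s S : ℝ) (hS : |S| ≤ n * L) :
    s * S - n * s ^ 2 / 2 + m * |s| ≤ (n * L + m) ^ 2 + -(1/4) * s ^ 2 := by
  have h1 : s * S ≤ |s| * (n * L) := by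
    calc s * S ≤ |s * S| := le_abs_self _
      _ = |s| * |S| := abs_mul _ _
      _ ≤ _ := by gcongr
  have hn' : (1 : ℝ) ≤ n := by exact_mod_cast hn
  have h2 : s ^ 2 ≤ n * s ^ 2 := by nlinarith [sq_nonneg s]
  nlinarith [sq_nonneg (|s| / 2 - (n * L + m)), sq_abs s]

lemma int_prod (hL : 1 ≤ L) (hρ : ∀ᵐ x ∂ρ, |x| ≤ L) {n : ℕ} (hn : 1 ≤ n)
    (G : ℝ → (Fin n → ℝ) → ℝ) (hG : Measurable (Function.uncurry G)) {K m : ℝ}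
    (hb : ∀ s x, (∀ i, |x i| ≤ L) → |G s x| ≤ K * exp (m * |s|)) :
    Integrable (Function.uncurry fun (s : ℝ) (x : Fin n → ℝ) =>
      exp (s * ∑ j, x j - n * s ^ 2 / 2) * G s x)
      ((volume : Measure ℝ).prod (Measure.pi fun _ : Fin n => ρ)) := by
  have h1 : Integrable (fun s : ℝ => K * exp ((n * L + m) ^ 2) * exp (-(1/4) * s ^ 2)) :=
    (integrable_exp_neg_mul_sq (by norm_num)).const_mul _
  have h2 := h1.comp_fst (Measure.pi fun _ : Fin n => ρ)
  refine h2.mono' ?_ ?_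
  · refine Measurable.aestronglyMeasurable ?_
    simp only [Function.uncurry_def] at hG ⊢
    exact Measurable.mul (by fun_prop) hG
  · have h3 : ∀ᵐ q ∂((volume : Measure ℝ).prod (Measure.pi fun _ : Fin n => ρ)),
        ∀ i, |q.2 i| ≤ L := Measure.quasiMeasurePreserving_snd.ae (ae_pi hρ n)
    filter_upwards [h3] with q hq
    obtain ⟨s, x⟩ := q
    simp only [Function.uncurry_apply_pair] at hq ⊢
    rw [norm_eq_abs, abs_mul, abs_of_pos (exp_pos _)]
    have hK : 0 ≤ K := by
      have := (abs_nonneg _).trans (hb s x hq)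
      exact nonneg_of_mul_nonneg_left this (exp_pos _)
    calc _ ≤ exp (s * ∑ j, x j - n * s ^ 2 / 2) * (K * exp (m * |s|)) := by
          gcongr; exact hb s x hq
      _ = K * exp (s * ∑ j, x j - n * s ^ 2 / 2 + m * |s|) := by rw [exp_add]; ring
      _ ≤ K * exp ((n * L + m) ^ 2 + -(1/4) * s ^ 2) := by
          exact mul_le_mul_of_nonneg_left (exp_le_exp.2 (expo_bd hn m s _ (abs_sum_le hq))) hK
      _ = _ := by rw [exp_add]; ring

lemma J_int (hL : 1 ≤ L) (hρ : ∀ᵐ x ∂ρ, |x| ≤ L) {n : ℕ} (hn : 1 ≤ n)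
    (G : ℝ → (Fin n → ℝ) → ℝ) (hG : Measurable (Function.uncurry G)) {K m : ℝ}
    (hb : ∀ s x, (∀ i, |x i| ≤ L) → |G s x| ≤ K * exp (m * |s|)) :
    Integrable (fun s => J ρ n (G s) s) :=
  (int_prod hL hρ hn G hG hb).integral_prod_left

lemma J_swap (hL : 1 ≤ L) (hρ : ∀ᵐ x ∂ρ, |x| ≤ L) {n : ℕ} (hn : 1 ≤ n)
    (G : ℝ → (Fin n → ℝ) → ℝ) (hG : Measurable (Function.uncurry G)) {K m : ℝ}
    (hb : ∀ s x, (∀ i, |x i| ≤ L) → |G s x| ≤ K * exp (m * |s|)) :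
    ∫ s, J ρ n (G s) s = ∫ x, (∫ s : ℝ, exp (s * ∑ j, x j - n * s ^ 2 / 2) * G s x)
      ∂(Measure.pi fun _ : Fin n => ρ) :=
  integral_integral_swap (int_prod hL hρ hn G hG hb)

lemma J_pi_int (hρ : ∀ᵐ x ∂ρ, |x| ≤ L) {n : ℕ} (s : ℝ)
    (G : (Fin n → ℝ) → ℝ) (hG : Measurable G) {K : ℝ}
    (hb : ∀ x, (∀ i, |x i| ≤ L) → |G x| ≤ K) :
    Integrable (fun x : Fin n → ℝ => exp (s * ∑ j, x j - n * s ^ 2 / 2) * G x)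
      (Measure.pi fun _ : Fin n => ρ) := by
  refine intg (C := exp (|s| * (n * L)) * K) (by fun_prop) ?_
  filter_upwards [ae_pi hρ n] with x hx
  rw [abs_mul, abs_of_pos (exp_pos _)]
  gcongr
  · have h1 : s * (∑ j, x j) ≤ |s| * (n * L) := by
      calc s * (∑ j, x j) ≤ |s * (∑ j, x j)| := le_abs_self _
        _ = |s| * |∑ j, x j| := abs_mul _ _
        _ ≤ _ := by gcongr; exact abs_sum_le hx
    have : 0 ≤ n * s ^ 2 / 2 := by positivity
    linarith
  · exact hb x hx

lemma gauss_s {n : ℕ} (hn : 1 ≤ n) (S : ℝ) :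
    ∫ s : ℝ, exp (s * S - n * s ^ 2 / 2) = √(2 * π / n) * exp (S ^ 2 / (2 * n)) := by
  have hn' : (n : ℝ) ≠ 0 := by positivity
  have : ∀ s : ℝ, exp (s * S - n * s ^ 2 / 2)
      = exp (S ^ 2 / (2 * n)) * exp (-((n : ℝ) / 2) * (s - S / n) ^ 2) := by
    intro s; rw [← exp_add]; congr 1; field_simp; ring
  simp_rw [this]
  rw [integral_const_mul, integral_sub_right_eq_self (fun s => exp (-((n : ℝ) / 2) * s ^ 2)),
    integral_gaussian, mul_comm]
  congr 2; field_simp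

lemma gauss_int {n : ℕ} (hn : 1 ≤ n) (S : ℝ) (j : ℕ) :
    Integrable (fun s : ℝ => (S - n * s) ^ j * exp (s * S - n * s ^ 2 / 2)) := by
  have hn' : (n : ℝ) ≠ 0 := by positivity
  have : ∀ s : ℝ, (S - n * s) ^ j * exp (s * S - n * s ^ 2 / 2)
      = exp (S ^ 2 / (2 * n)) * (-n) ^ j * ((s - S / n) ^ (j : ℝ) * exp (-((n : ℝ) / 2) * (s - S / n) ^ 2)) := by
    intro s
    rw [rpow_natCast, show S - n * s = (-n) * (s - S / n) by field_simp; ring, mul_pow,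
      show s * S - n * s ^ 2 / 2 = S ^ 2 / (2 * n) + -((n : ℝ) / 2) * (s - S / n) ^ 2 by
        field_simp; ring, exp_add]
    ring
  simp_rw [this]
  refine Integrable.const_mul ?_ _
  exact (integrable_rpow_mul_exp_neg_mul_sq (b := (n : ℝ) / 2) (by positivity) (s := (j : ℝ))
    (by have : (0 : ℝ) ≤ j := by positivity
        linarith)).comp_sub_right (S / n)

lemma gauss_zero {n : ℕ} (hn : 1 ≤ n) (S : ℝ) :
    ∫ s : ℝ, (S - n * s) * exp (s * S - n * s ^ 2 / 2) = 0 := by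
  refine integral_eq_zero_of_hasDerivAt_of_integrable (f := fun s => exp (s * S - n * s ^ 2 / 2))
    (fun s => ?_) ?_ ?_
  · have h1 : HasDerivAt (fun s : ℝ => s * S - n * s ^ 2 / 2) (S - n * s) s := by
      have := ((hasDerivAt_id s).mul_const S).sub
        (((hasDerivAt_pow 2 s).const_mul (n : ℝ)).div_const 2)
      refine this.congr_deriv ?_
      simp; ring
    refine h1.exp.congr_deriv (by ring)
  · simpa using gauss_int hn S 1
  · simpa using gauss_int hn S 0

/-- step 3 -/
lemma J_zero (hL : 1 ≤ L) (hρ : ∀ᵐ x ∂ρ, |x| ≤ L) {n : ℕ} (hn : 1 ≤ n) (c : ℝ) :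
    Integrable (fun s => J ρ n (fun x => (∑ j, x j - n * s) * FF c (∑ j, x j)) s) ∧
    ∫ s, J ρ n (fun x => (∑ j, x j - n * s) * FF c (∑ j, x j)) s = 0 := by
  have hm : Measurable (Function.uncurry fun (s : ℝ) (x : Fin n → ℝ) =>
      (∑ j, x j - n * s) * FF c (∑ j, x j)) := by
    simp only [Function.uncurry_def]
    have := measurable_FF c
    fun_prop
  have hb : ∀ (s : ℝ) (x : Fin n → ℝ), (∀ i, |x i| ≤ L) →
      |(∑ j, x j - n * s) * FF c (∑ j, x j)| ≤ (n * L * (n * L + |c|)) * exp (1 * |s|) := by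
    intro s x hx
    have h1 := abs_sum_le hx
    have h2 := FF_abs c (∑ j, x j)
    have h3 : |∑ j, x j - n * s| ≤ n * L * exp (1 * |s|) := by
      calc |∑ j, x j - n * s| ≤ |∑ j, x j| + |n * s| := abs_sub _ _
        _ ≤ n * L + n * |s| := by rw [abs_mul, Nat.abs_cast]; gcongr
        _ ≤ n * L * (|s| + 1) := by
          have : (0:ℝ) ≤ n * |s| := by positivity
          nlinarith
        _ ≤ _ := by gcongr; simpa using add_one_le_exp |s|
    rw [abs_mul]
    calc _ ≤ (n * L * exp (1 * |s|)) * (n * L + |c|) := by gcongr; linarith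
      _ = _ := by ring
  refine ⟨J_int hL hρ hn _ hm hb, ?_⟩
  rw [J_swap hL hρ hn _ hm hb]
  have : ∀ x : Fin n → ℝ, ∫ s : ℝ, exp (s * ∑ j, x j - n * s ^ 2 / 2) *
      ((∑ j, x j - n * s) * FF c (∑ j, x j)) = 0 := by
    intro x
    have := gauss_zero hn (∑ j, x j)
    calc _ = ∫ s : ℝ, FF c (∑ j, x j) * ((∑ j, x j - n * s) *
          exp (s * ∑ j, x j - n * s ^ 2 / 2)) := by congr with s; ring
      _ = 0 := by rw [integral_const_mul, this, mul_zero]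
  simp [this]

/-- step 2 -/
lemma J_ind (hL : 1 ≤ L) (hρ : ∀ᵐ x ∂ρ, |x| ≤ L) {n : ℕ} (hn : 1 ≤ n)
    (g : (Fin n → ℝ) → ℝ) (hg : Measurable g) (hg1 : ∀ x, |g x| ≤ 1) :
    Integrable (fun s => J ρ n g s) ∧
    ∫ s, J ρ n g s = √(2 * π / n) * ∫ x, exp ((∑ j, x j) ^ 2 / (2 * n)) * g x
      ∂(Measure.pi fun _ : Fin n => ρ) := by
  have hm : Measurable (Function.uncurry fun (_ : ℝ) (x : Fin n → ℝ) => g x) := by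
    simp only [Function.uncurry_def]
    fun_prop
  have hb : ∀ (s : ℝ) (x : Fin n → ℝ), (∀ i, |x i| ≤ L) →
      |g x| ≤ 1 * exp (0 * |s|) := by
    intro s x hx
    simpa using hg1 x
  refine ⟨J_int hL hρ hn _ hm hb, ?_⟩
  rw [J_swap hL hρ hn _ hm hb, ← integral_const_mul]
  congr with x
  rw [integral_mul_const, gauss_s hn]
  ring

lemma cw_law (hL : 1 ≤ L) (hρ : ∀ᵐ x ∂ρ, |x| ≤ L) {n : ℕ} (hn : 1 ≤ n) (c : ℝ) :
    (cwMeasure ρ n {x | ∑ j, x j ≤ c}).toReal * ∫ s, exp (-(n * hfun ρ s))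
      = ∫ s, J ρ n (fun x => ind c (∑ j, x j)) s := by
  have h1 := J_ind hL hρ hn (fun _ => 1) (by fun_prop) (by simp)
  have hmi : Measurable (fun x : Fin n → ℝ => ind c (∑ j, x j)) := by
    have := measurable_ind c
    fun_prop
  have h2 := J_ind hL hρ hn (fun x => ind c (∑ j, x j)) hmi (fun x => abs_ind_le _ _)
  simp_rw [J_one hρ, mul_one] at h1
  rw [h1.2, h2.2]
  set μ := Measure.pi fun _ : Fin n => ρ
  set Z := ∫ x, exp ((∑ j, x j) ^ 2 / (2 * n)) ∂μ with hZ
  have hms : MeasurableSet {x : Fin n → ℝ | ∑ j, x j ≤ c} :=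
    measurableSet_le (by fun_prop) (by fun_prop)
  have hint : Integrable (fun x : Fin n → ℝ => exp ((∑ j, x j) ^ 2 / (2 * n))) μ := by
    refine intg (C := exp ((n * L) ^ 2 / (2 * n))) (by fun_prop) ?_
    filter_upwards [ae_pi hρ n] with x hx
    rw [abs_of_pos (exp_pos _)]
    have := abs_sum_le hx
    gcongr exp (?_ / _)
    exact sq_le_sq' (abs_le.1 this).1 (abs_le.1 this).2
  have hZ0 : 0 < Z := integral_exp_pos hint
  have key : (cwMeasure ρ n {x | ∑ j, x j ≤ c}).toReal
      = (∫ x, exp ((∑ j, x j) ^ 2 / (2 * n)) * ind c (∑ j, x j) ∂μ) / Z := by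
    rw [cwMeasure, withDensity_apply _ hms, ← ofReal_integral_eq_lintegral_ofReal,
      ENNReal.toReal_ofReal, ← integral_indicator hms, ← integral_div]
    · congr with x
      by_cases hx : ∑ j, x j ≤ c
      · rw [Set.indicator_of_mem (by exact hx), ind, if_pos hx, mul_one]
      · rw [Set.indicator_of_notMem (by exact hx), ind, if_neg hx, mul_zero, zero_div]
    · exact integral_nonneg fun x => div_nonneg (exp_pos _).le hZ0.le
    · exact (hint.div_const _).integrableOn
    · exact Filter.Eventually.of_forall fun x => div_nonneg (exp_pos _).le hZ0.le
  rw [key]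
  field_simp

end
end CW

namespace CW
open ProbabilityTheory

lemma r_bd0 (c t u : ℝ) (h : |t - u| < |u - c|) : FF c t - FF c u - ind c u * (t - u) = 0 := by
  unfold FF ind
  have h1 := abs_lt.1 h
  rcases le_total u c with h2 | h2
  · rw [abs_of_nonpos (by linarith)] at h1
    rw [min_eq_left (by linarith), min_eq_left (by linarith), if_pos h2]; ring
  · rw [abs_of_nonneg (by linarith)] at h1
    rw [min_eq_right (by linarith), min_eq_right (by linarith)]
    split_ifs with h3
    · exfalso; linarith
    · ring

lemma r_bd1 (c t u : ℝ) : |FF c t - FF c u - ind c u * (t - u)| ≤ |t - u| := by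
  unfold FF ind
  rw [abs_le]
  rcases abs_cases (t - u) with ⟨e, _⟩ | ⟨e, _⟩ <;> rw [e] <;>
  rcases min_cases (t - c) 0 with ⟨e1, _⟩ | ⟨e1, _⟩ <;> rw [e1] <;>
  rcases min_cases (u - c) 0 with ⟨e2, _⟩ | ⟨e2, _⟩ <;> rw [e2] <;>
  split_ifs <;> constructor <;> linarith

lemma x_bd (x : ℝ) : |x| * (1 + x ^ 2) ≤ 7 * (exp x + exp (-x)) := by
  have h1 := pow_div_factorial_le_exp |x| (abs_nonneg x) 1
  have h3 := pow_div_factorial_le_exp |x| (abs_nonneg x) 3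
  have h4 : exp |x| ≤ exp x + exp (-x) := by
    rcases abs_cases x with ⟨e, _⟩ | ⟨e, _⟩ <;> rw [e]
    · linarith [exp_pos (-x)]
    · linarith [exp_pos x]
  norm_num [Nat.factorial] at h1 h3
  have : |x| * (1 + x ^ 2) = |x| + |x| ^ 3 := by rw [← sq_abs]; ring
  linarith

lemma r_bd (c t u : ℝ) {l : ℝ} (hl : 0 < l) : |FF c t - FF c u - ind c u * (t - u)| ≤
    7 / l / (1 + l ^ 2 * (u - c) ^ 2) * (exp (l * (t - u)) + exp (-l * (t - u))) := by
  rcases lt_or_ge |t - u| |u - c| with h | h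
  · rw [r_bd0 c t u h, abs_zero]; positivity
  · refine (r_bd1 c t u).trans ?_
    have h1 := x_bd (l * (t - u))
    have h2 : (u - c) ^ 2 ≤ (t - u) ^ 2 := sq_le_sq.2 h
    rw [div_div, div_mul_eq_mul_div, le_div_iff₀ (by positivity), neg_mul]
    refine le_trans ?_ h1
    rw [abs_mul, abs_of_pos hl, mul_pow]
    calc |t - u| * (l * (1 + l ^ 2 * (u - c) ^ 2))
        ≤ |t - u| * (l * (1 + l ^ 2 * (t - u) ^ 2)) := by gcongr
      _ = _ := by ring

section
variable {ρ : Measure ℝ} [IsProbabilityMeasure ρ] {L : ℝ}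

lemma J_const_mul (n : ℕ) (a s : ℝ) (G : (Fin n → ℝ) → ℝ) :
    J ρ n (fun x => a * G x) s = a * J ρ n G s := by
  rw [J, J, ← integral_const_mul]; congr with x; ring

lemma J_add (hρ : ∀ᵐ x ∂ρ, |x| ≤ L) {n : ℕ} (s : ℝ)
    (F G : (Fin n → ℝ) → ℝ) (hF : Measurable F) (hG : Measurable G) {K K' : ℝ}
    (hbF : ∀ x, (∀ i, |x i| ≤ L) → |F x| ≤ K) (hb : ∀ x, (∀ i, |x i| ≤ L) → |G x| ≤ K') :
    J ρ n (fun x => F x + G x) s = J ρ n F s + J ρ n G s := by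
  rw [J, J, J, ← integral_add (J_pi_int hρ s F hF hbF) (J_pi_int hρ s G hG hb)]
  congr with x; ring

lemma J_abs_le (hρ : ∀ᵐ x ∂ρ, |x| ≤ L) {n : ℕ} (s : ℝ)
    (F G : (Fin n → ℝ) → ℝ) (hG : Measurable G) {K' : ℝ}
    (hb : ∀ x, (∀ i, |x i| ≤ L) → |G x| ≤ K') (hFG : ∀ x, |F x| ≤ G x) :
    |J ρ n F s| ≤ J ρ n G s := by
  rw [J, J, ← norm_eq_abs]
  refine norm_integral_le_of_norm_le (J_pi_int hρ s G hG hb) (Filter.Eventually.of_forall fun x => ?_)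
  rw [norm_eq_abs, abs_mul, abs_of_pos (exp_pos _)]
  gcongr
  exact hFG x

lemma J_ind_le (hρ : ∀ᵐ x ∂ρ, |x| ≤ L) {n : ℕ} (s c : ℝ) :
    |J ρ n (fun x => ind c (∑ j, x j)) s| ≤ exp (-(n * hfun ρ s)) := by
  rw [← J_one hρ]
  exact J_abs_le hρ s _ _ (by fun_prop) (K' := 1) (by simp) (fun x => abs_ind_le _ _)

lemma lin_bd {n : ℕ} (u : ℝ) (x : Fin n → ℝ) (h : ∀ i, |x i| ≤ L) :
    |∑ j, x j - u| ≤ n * L + |u| :=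
  (abs_sub _ _).trans (by gcongr; exact abs_sum_le h)

lemma J_r (hρ : ∀ᵐ x ∂ρ, |x| ≤ L) {n : ℕ} (s c : ℝ) {l : ℝ} (hl : 0 < l) (hnl : n * l ^ 2 = 1) :
    |J ρ n (fun x => FF c (∑ j, x j)) s - exp (-(n * hfun ρ s)) * FF c (n * s)
      + ind c (n * s) * (n * deriv (hfun ρ) s * exp (-(n * hfun ρ s)))| ≤
    7 / l / (1 + l ^ 2 * (n * s - c) ^ 2) * exp (1 / 2) *
      (exp (-(n * hfun ρ (s + l))) + exp (-(n * hfun ρ (s - l)))) := by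
  have hmF := measurable_FF c
  have e1 : J ρ n (fun x => FF c (∑ j, x j)) s = J ρ n (fun x =>
      (FF c (∑ j, x j) - FF c (n * s) - ind c (n * s) * (∑ j, x j - n * s))
      + (FF c (n * s) * 1 + ind c (n * s) * (∑ j, x j - n * s))) s := by
    congr with x; ring
  have hb2 : ∀ x : Fin n → ℝ, (∀ i, |x i| ≤ L) → |ind c (n * s) * (∑ j, x j - n * s)|
      ≤ n * L + |n * s| := fun x h => by
    rw [abs_mul]
    have := lin_bd (n * s) x h
    have h2 := abs_ind_le c (n * s)
    nlinarith [abs_nonneg (∑ j, x j - n * s)]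
  have hb3 : ∀ x : Fin n → ℝ, (∀ i, |x i| ≤ L) → |FF c (n * s) * 1|
      ≤ |FF c (n * s)| := fun x h => by simp
  rw [J_add hρ s (fun x => FF c (∑ j, x j) - FF c (n * s) - ind c (n * s) * (∑ j, x j - n * s))
    (fun x => FF c (n * s) * 1 + ind c (n * s) * (∑ j, x j - n * s)) (by fun_prop) (by fun_prop)
    (K := n * L + |n * s|) (K' := |FF c (n * s)| + (n * L + |n * s|))
    (fun x h => (r_bd1 c _ _).trans (lin_bd (n * s) x h))
    (fun x h => (abs_add_le _ _).trans (add_le_add (hb3 x h) (hb2 x h))),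
    J_add hρ s (fun x => FF c (n * s) * 1) (fun x => ind c (n * s) * (∑ j, x j - n * s))
      (by fun_prop) (by fun_prop) hb3 hb2, J_const_mul, J_const_mul, J_one hρ, J_lin hρ] at e1
  rw [e1]
  have e2 : ∀ A B C D E : ℝ, A + (C * B + D * (-E)) - B * C + D * E = A := by intros; ring
  rw [e2]
  have hbe : ∀ a : ℝ, ∀ x : Fin n → ℝ, (∀ i, |x i| ≤ L) → |exp (a * (∑ j, x j - n * s))|
      ≤ exp (|a| * (n * L + |n * s|)) := fun a x h => by
    rw [abs_of_pos (exp_pos _), exp_le_exp]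
    refine (le_abs_self _).trans ?_
    rw [abs_mul]
    gcongr
    exact lin_bd (n * s) x h
  have e3 := J_abs_le hρ s (fun x => FF c (∑ j, x j) - FF c (n * s) - ind c (n * s) * (∑ j, x j - n * s))
    (fun x => 7 / l / (1 + l ^ 2 * (n * s - c) ^ 2) *
      (exp (l * (∑ j, x j - n * s)) + exp (-l * (∑ j, x j - n * s)))) (by fun_prop)
    (K' := |7 / l / (1 + l ^ 2 * (n * s - c) ^ 2)| *
      (exp (|l| * (n * L + |n * s|)) + exp (|-l| * (n * L + |n * s|))))
    (fun x h => by
      rw [abs_mul]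
      gcongr
      exact (abs_add_le _ _).trans (add_le_add (hbe l x h) (hbe (-l) x h)))
    (fun x => r_bd c _ _ hl)
  refine e3.trans (le_of_eq ?_)
  rw [J_const_mul, J_add hρ s _ _ (by fun_prop) (by fun_prop) (hbe l) (hbe (-l)),
    J_exp hρ s l n hnl, J_exp hρ s (-l) n (by rw [neg_sq, hnl]), ← sub_eq_add_neg]
  ring

lemma J_point (hL : 1 ≤ L) (hρ : ∀ᵐ x ∂ρ, |x| ≤ L) {n : ℕ} (hn : 1 ≤ n) (s c : ℝ) {l : ℝ}
    (hl : 0 < l) (hnl : n * l ^ 2 = 1) :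
    |n * J ρ n (fun x => ind c (∑ j, x j)) s
      - J ρ n (fun x => (∑ j, x j - n * s) * FF c (∑ j, x j)) s
      - n * deriv (hfun ρ) s * exp (-(n * hfun ρ s)) * FF c (n * s)| ≤
    n * (n * deriv (hfun ρ) s ^ 2 * exp (-(n * hfun ρ s))
      + |deriv (hfun ρ) s| * (7 / l / (1 + l ^ 2 * (n * s - c) ^ 2) * exp (1 / 2) *
      (exp (-(n * hfun ρ (s + l))) + exp (-(n * hfun ρ (s - l)))))
      + |deriv (deriv (hfun ρ)) s| * exp (-(n * hfun ρ s))
      + 4 * L ^ 2 * l * exp (-(n * hfun ρ s))) := by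
  have h1 := J_stein hL hρ s c hn
  have h2 := J_r hρ s c hl hnl
  have h3 := J_ind_le hρ (n := n) s c
  have hmF := measurable_FF c
  have hbF : ∀ x : Fin n → ℝ, (∀ i, |x i| ≤ L) → |FF c (∑ j, x j)| ≤ n * L + |c| := fun x h =>
    (FF_abs _ _).trans (by gcongr; exact abs_sum_le h)
  have hn0 : (0 : ℝ) < n := by exact_mod_cast hn
  have e1 : J ρ n (fun x => (∑ j, x j - n * (s - deriv (hfun ρ) s)) * FF c (∑ j, x j)) s
      = J ρ n (fun x => (∑ j, x j - n * s) * FF c (∑ j, x j)) s +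
        n * deriv (hfun ρ) s * J ρ n (fun x => FF c (∑ j, x j)) s := by
    rw [← J_const_mul, ← J_add hρ s (fun x => (∑ j, x j - n * s) * FF c (∑ j, x j))
      (fun x => n * deriv (hfun ρ) s * FF c (∑ j, x j)) (by fun_prop) (by fun_prop)
      (K := (n * L + |n * s|) * (n * L + |c|)) (K' := |n * deriv (hfun ρ) s| * (n * L + |c|))]
    · congr with x; ring
    · intro x h; rw [abs_mul]; gcongr
      · exact lin_bd _ x h
      · exact hbF x h
    · intro x h; rw [abs_mul]; gcongr
      exact hbF x h
  rw [e1] at h1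
  have hsq : √(n : ℝ) = n * l := by
    rw [sqrt_eq_iff_mul_self_eq hn0.le (by positivity)]
    symm
    calc n * l * (n * l) = n * (n * l ^ 2) := by ring
      _ = n := by rw [hnl, mul_one]
  rw [hsq] at h1
  set A := J ρ n (fun x => ind c (∑ j, x j)) s
  set B := J ρ n (fun x => (∑ j, x j - n * s) * FF c (∑ j, x j)) s
  set D := J ρ n (fun x => FF c (∑ j, x j)) s
  set p := exp (-(n * hfun ρ s))
  have hp : 0 < p := exp_pos _
  set R := 7 / l / (1 + l ^ 2 * (n * s - c) ^ 2) * exp (1 / 2) *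
      (exp (-(n * hfun ρ (s + l))) + exp (-(n * hfun ρ (s - l))))
  set h' := deriv (hfun ρ) s
  set h'' := deriv (deriv (hfun ρ)) s
  set q := ind c (n * s) with hq
  have hq0 : 0 ≤ q := ind_nonneg _ _
  have hq1 : q ≤ 1 := ind_le _ _
  set f := FF c (n * s)
  have e : n * A - B - n * h' * p * f = - (B + n * h' * D - n * (1 - h'') * A)
    + n * h' * (D - p * f + q * (n * h' * p)) + n * h'' * A - n * (n * h' ^ 2 * p) * q := by ring
  rw [e]
  have t1 : |n * h' * (D - p * f + q * (n * h' * p))| ≤ n * (|h'| * R) := by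
    rw [abs_mul, abs_mul, Nat.abs_cast, mul_assoc]; gcongr
  have t2 : |n * h'' * A| ≤ n * (|h''| * p) := by
    rw [abs_mul, abs_mul, Nat.abs_cast, mul_assoc]; gcongr
  have t3 : |n * (n * h' ^ 2 * p) * q| ≤ n * (n * h' ^ 2 * p) := by
    rw [abs_of_nonneg (by positivity)]
    exact mul_le_of_le_one_right (by positivity) hq1
  have t0 : |-(B + n * h' * D - n * (1 - h'') * A)| ≤ n * (4 * L ^ 2 * l * p) := by
    rw [abs_neg]; linarith
  have := abs_sub (-(B + n * h' * D - n * (1 - h'') * A)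
    + n * h' * (D - p * f + q * (n * h' * p)) + n * h'' * A) (n * (n * h' ^ 2 * p) * q)
  have := abs_add_three (-(B + n * h' * D - n * (1 - h'') * A))
    (n * h' * (D - p * f + q * (n * h' * p))) (n * h'' * A)
  linarith
end
end CW

namespace CW
open ProbabilityTheory

section
variable {ρ : Measure ℝ} [IsProbabilityMeasure ρ] {L : ℝ}

lemma p_int (hρ : ∀ᵐ x ∂ρ, |x| ≤ L) {n : ℕ} (hn : 1 ≤ n)
    (g : ℝ → ℝ) (hg : Measurable g) {K m : ℝ} (hb : ∀ s, |g s| ≤ K * exp (m * |s|)) :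
    Integrable (fun s => g s * exp (-(n * hfun ρ s))) := by
  have hρ' : ∀ᵐ x ∂ρ, |x| ≤ max L 1 := by
    filter_upwards [hρ] with x hx using hx.trans (le_max_left _ _)
  have h := J_int (le_max_right L 1) hρ' hn (fun s (_ : Fin n → ℝ) => g s * 1)
    (by simp only [Function.uncurry_def]; fun_prop) (K := K) (m := m)
    (fun s x _ => by simpa using hb s)
  simp_rw [J_const_mul, J_one hρ] at h
  exact h

lemma step4 (hρ : ∀ᵐ x ∂ρ, |x| ≤ L) {n : ℕ} (hn : 1 ≤ n) (w : ℝ) {C : ℝ} {j : ℕ} (hC : 0 ≤ C)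
    (H1 : ∀ s, |deriv (hfun ρ) s| ≤ C * |s| ^ j) :
    Integrable (fun s => n * deriv (hfun ρ) s * exp (-(n * hfun ρ s)) * FF (n * w) (n * s)) ∧
    ∫ s, n * deriv (hfun ρ) s * exp (-(n * hfun ρ s)) * FF (n * w) (n * s)
      = n * ∫ s in Set.Iic w, exp (-(n * hfun ρ s)) := by
  have hn0 : (0 : ℝ) < n := by exact_mod_cast hn
  have hd : ∀ s, HasDerivAt (hfun ρ) (deriv (hfun ρ) s) s := fun s =>
    ((hfun_smooth hρ (m := 1)).differentiable (by simp) s).hasDerivAt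
  have hcd : Continuous (deriv (hfun ρ)) := (hfun_smooth hρ (m := 1)).continuous_deriv (by simp)
  have hmd : Measurable (deriv (hfun ρ)) := hcd.measurable
  have hlin : ∀ s, |n * s - n * w| ≤ (n * (1 + |w|)) * exp |s| := fun s => by
    calc |n * s - n * w| = n * |s - w| := by rw [← mul_sub, abs_mul, Nat.abs_cast]
      _ ≤ n * (|s| + |w|) := by gcongr; exact abs_sub _ _
      _ ≤ n * ((1 + |w|) * (|s| + 1)) := by
        gcongr; nlinarith [abs_nonneg s, abs_nonneg w, mul_nonneg (abs_nonneg s) (abs_nonneg w)]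
      _ ≤ n * ((1 + |w|) * exp |s|) := by gcongr; exact add_one_le_exp _
      _ = _ := by ring
  have hFF : ∀ s, |FF (n * w) (n * s)| ≤ |n * s - n * w| := fun s => by
    unfold FF
    rcases min_cases (n * s - n * w) 0 with ⟨e, _⟩ | ⟨e, _⟩ <;> rw [e]
    simp
  have hD : ∀ s, |deriv (hfun ρ) s| ≤ C * j.factorial * exp |s| := fun s => by
    refine (H1 s).trans ?_
    rw [mul_assoc]; gcongr
    have := pow_div_factorial_le_exp |s| (abs_nonneg s) j
    rwa [div_le_iff₀ (by positivity), mul_comm] at this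
  have hexp : ∀ s : ℝ, exp |s| * exp |s| = exp (2 * |s|) := fun s => by rw [← exp_add]; ring_nf
  have i0 : Integrable (fun s => exp (-(n * hfun ρ s))) := by
    have := p_int hρ hn (fun _ => 1) (by fun_prop) (K := 1) (m := 0) (by simp)
    simpa using this
  have hprod : ∀ s g, |g| ≤ |n * s - n * w| → |n * deriv (hfun ρ) s * g| ≤
      (n * (C * j.factorial) * (n * (1 + |w|))) * exp (2 * |s|) := fun s g hg => by
    rw [abs_mul, abs_mul, Nat.abs_cast, ← hexp]
    calc _ ≤ n * (C * j.factorial * exp |s|) * ((n * (1 + |w|)) * exp |s|) := by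
          gcongr
          · exact hD s
          · exact hg.trans (hlin s)
      _ = _ := by ring
  have i1 : Integrable (fun s => n * deriv (hfun ρ) s * exp (-(n * hfun ρ s)) * FF (n * w) (n * s)) := by
    have := p_int hρ hn (fun s => n * deriv (hfun ρ) s * FF (n * w) (n * s))
      (by have := measurable_FF (n * w); fun_prop) (fun s => hprod s _ (hFF s))
    refine this.congr (Filter.Eventually.of_forall fun s => ?_)
    simp only; ring
  have i2 : Integrable (fun s => n * deriv (hfun ρ) s * exp (-(n * hfun ρ s)) * (n * s - n * w)) := by
    have := p_int hρ hn (fun s => n * deriv (hfun ρ) s * (n * s - n * w))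
      (by fun_prop) (fun s => hprod s _ le_rfl)
    refine this.congr (Filter.Eventually.of_forall fun s => ?_)
    simp only; ring
  have i3 : Integrable (fun s => (n * s - n * w) * exp (-(n * hfun ρ s))) :=
    p_int hρ hn (fun s => (n * s - n * w)) (by fun_prop) (m := 1) (fun s => by simpa using hlin s)
  refine ⟨i1, ?_⟩
  have hder : ∀ s, HasDerivAt (fun s => (n * s - n * w) * exp (-(n * hfun ρ s)))
      (n * exp (-(n * hfun ρ s)) - n * deriv (hfun ρ) s * exp (-(n * hfun ρ s)) * (n * s - n * w)) s := by
    intro s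
    have h1 : HasDerivAt (fun s : ℝ => n * s - n * w) n s := by
      simpa using ((hasDerivAt_id s).const_mul (n : ℝ)).sub_const (n * w)
    have h2 := ((hd s).const_mul (n : ℝ)).neg.exp
    refine (h1.mul h2).congr_deriv ?_
    simp only [Pi.neg_apply]; ring
  have hi' := (i0.const_mul (n : ℝ)).sub i2
  have ht := tendsto_zero_of_hasDerivAt_of_integrableOn_Iic (a := w) (fun s _ => hder s)
    hi'.integrableOn i3.integrableOn
  have hI := integral_Iic_of_hasDerivAt_of_tendsto' (a := w) (fun s _ => hder s) hi'.integrableOn ht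
  rw [integral_sub (i0.const_mul (n : ℝ)).integrableOn i2.integrableOn, integral_const_mul] at hI
  have e : ∫ s, n * deriv (hfun ρ) s * exp (-(n * hfun ρ s)) * FF (n * w) (n * s)
    = ∫ s in Set.Iic w, n * deriv (hfun ρ) s * exp (-(n * hfun ρ s)) * (n * s - n * w) := by
    rw [← integral_indicator measurableSet_Iic]
    congr with s
    by_cases hs : s ≤ w
    · rw [Set.indicator_of_mem (by exact hs), FF, min_eq_left]
      have : n * s ≤ n * w := by gcongr
      linarith
    · rw [Set.indicator_of_notMem (by exact hs), FF, min_eq_right, mul_zero]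
      have : n * w ≤ n * s := by gcongr; linarith
      linarith
  rw [e]
  simp at hI
  linarith

lemma main_int (hL : 1 ≤ L) (hρ : ∀ᵐ x ∂ρ, |x| ≤ L) {n : ℕ} (hn : 1 ≤ n) (w : ℝ) {C : ℝ} {j : ℕ}
    (hC : 0 ≤ C) (H1 : ∀ s, |deriv (hfun ρ) s| ≤ C * |s| ^ j) {l : ℝ}
    (hl : 0 < l) (hnl : n * l ^ 2 = 1) (E : ℝ → ℝ) (hE : Integrable E)
    (hb : ∀ s, n * deriv (hfun ρ) s ^ 2 * exp (-(n * hfun ρ s))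
      + |deriv (hfun ρ) s| * (7 / l / (1 + l ^ 2 * (n * s - n * w) ^ 2) * exp (1 / 2) *
      (exp (-(n * hfun ρ (s + l))) + exp (-(n * hfun ρ (s - l)))))
      + |deriv (deriv (hfun ρ)) s| * exp (-(n * hfun ρ s))
      + 4 * L ^ 2 * l * exp (-(n * hfun ρ s)) ≤ E s) :
    |(∫ s, J ρ n (fun x => ind (n * w) (∑ j, x j)) s) - ∫ s in Set.Iic w, exp (-(n * hfun ρ s))|
      ≤ ∫ s, E s := by
  have hn0 : (0 : ℝ) < n := by exact_mod_cast hn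
  obtain ⟨i1, e1⟩ := step4 hρ hn w hC H1
  obtain ⟨i2, e2⟩ := J_zero hL hρ hn (n * w)
  have hmi : Measurable (fun x : Fin n → ℝ => ind (n * w) (∑ j, x j)) := by
    have := measurable_ind (n * w)
    fun_prop
  obtain ⟨i3, -⟩ := J_ind hL hρ hn (fun x => ind (n * w) (∑ j, x j)) hmi (fun x => abs_ind_le _ _)
  have key : |∫ s, (n * J ρ n (fun x => ind (n * w) (∑ j, x j)) s
      - J ρ n (fun x => (∑ j, x j - n * s) * FF (n * w) (∑ j, x j)) s
      - n * deriv (hfun ρ) s * exp (-(n * hfun ρ s)) * FF (n * w) (n * s))| ≤ ∫ s, n * E s := by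
    rw [← norm_eq_abs]
    refine norm_integral_le_of_norm_le (hE.const_mul _) (Filter.Eventually.of_forall fun s => ?_)
    rw [norm_eq_abs]
    refine (J_point hL hρ hn s (n * w) hl hnl).trans ?_
    gcongr
    exact hb s
  have i4 : Integrable (fun s => n * J ρ n (fun x => ind (n * w) (∑ j, x j)) s
      - J ρ n (fun x => (∑ j, x j - n * s) * FF (n * w) (∑ j, x j)) s) := (i3.const_mul _).sub i2
  rw [integral_sub i4 i1, integral_sub (i3.const_mul _) i2, e1, e2,
    integral_const_mul, integral_const_mul, sub_zero, ← mul_sub, abs_mul, Nat.abs_cast] at key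
  exact le_of_mul_le_mul_left key hn0
end
end CW

namespace CW
open ProbabilityTheory

lemma gauss_dom {c : ℝ} (hc : 0 < c) (m : ℕ) : ∃ M, 0 < M ∧ ∀ j ≤ m, ∀ y : ℝ,
    (1 + |y|) ^ j * exp (-c * y ^ 2) ≤ M * exp (-(c / 2) * y ^ 2) := by
  refine ⟨m.factorial * exp (1 + 1 / (2 * c)), by positivity, fun j hj y => ?_⟩
  have h0 : (1 + |y|) ^ j ≤ (1 + |y|) ^ m := pow_le_pow_right₀ (by linarith [abs_nonneg y]) hj
  have h1 := pow_div_factorial_le_exp (1 + |y|) (by positivity) m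
  rw [div_le_iff₀ (by positivity)] at h1
  have h2 : 1 + |y| + -c * y ^ 2 ≤ 1 + 1 / (2 * c) + -(c / 2) * y ^ 2 := by
    have : c * (1 / (2 * c)) = 1 / 2 := by field_simp
    have h3 : 0 ≤ c * (1 / (2 * c) - |y| + c / 2 * |y| ^ 2) := by
      nlinarith [sq_nonneg (c * |y| - 1)]
    have h4 := nonneg_of_mul_nonneg_right h3 hc
    rw [sq_abs] at h4
    linarith
  calc (1 + |y|) ^ j * exp (-c * y ^ 2) ≤ (exp (1 + |y|) * m.factorial) * exp (-c * y ^ 2) := by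
        gcongr; exact h0.trans h1
    _ = m.factorial * exp (1 + |y| + -c * y ^ 2) := by rw [exp_add (1 + |y|)]; ring
    _ ≤ m.factorial * exp (1 + 1 / (2 * c) + -(c / 2) * y ^ 2) := by gcongr
    _ = _ := by rw [exp_add (1 + 1 / (2 * c))]; ring

lemma pow_ge {k : ℕ} (hk : 1 ≤ k) (y : ℝ) : y ^ 2 - 1 ≤ y ^ (2 * k) := by
  rw [pow_mul]
  rcases le_total (y ^ 2) 1 with h | h
  · have : 0 ≤ (y ^ 2) ^ k := by positivity
    linarith
  · have := le_self_pow₀ h (by omega : k ≠ 0)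
    linarith

lemma G_int {c b : ℝ} (hc : 0 < c) (hb : 0 < b) :
    Integrable (fun s : ℝ => exp (-(c / 2) * (s / b) ^ 2)) ∧
    ∫ s : ℝ, exp (-(c / 2) * (s / b) ^ 2) = b * √(π / (c / 2)) := by
  refine ⟨(integrable_exp_neg_mul_sq (by positivity : 0 < c / 2)).comp_div hb.ne', ?_⟩
  rw [Measure.integral_comp_div (fun s => exp (-(c / 2) * s ^ 2)), integral_gaussian,
    smul_eq_mul, abs_of_pos hb]

lemma cauchy_int (w : ℝ) {l : ℝ} (hl : 0 < l) :
    Integrable (fun s : ℝ => 1 / l * (1 + ((s - w) / l) ^ 2)⁻¹) ∧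
    ∫ s : ℝ, 1 / l * (1 + ((s - w) / l) ^ 2)⁻¹ = π := by
  refine ⟨((integrable_inv_one_add_sq.comp_div hl.ne').comp_sub_right w).const_mul _, ?_⟩
  rw [integral_const_mul, integral_sub_right_eq_self (fun s : ℝ => (1 + (s / l) ^ 2)⁻¹),
    Measure.integral_comp_div (fun s : ℝ => (1 + s ^ 2)⁻¹), integral_univ_inv_one_add_sq,
    smul_eq_mul, abs_of_pos hl]
  field_simp

section
variable {ρ : Measure ℝ} {L : ℝ}

lemma p_gauss {k n : ℕ} (hk : 2 ≤ k) {b c : ℝ} (hb0 : 0 < b) (hb1 : b ≤ 1) (hnb : n * b ^ (2 * k) = 1)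
    (hc : 0 < c) (H4 : ∀ s, c * min (s ^ 2) (s ^ (2 * k)) ≤ hfun ρ s) (s : ℝ) :
    exp (-(n * hfun ρ s)) ≤ exp c * exp (-c * (s / b) ^ 2) := by
  rw [← exp_add, exp_le_exp]
  have hs : s = b * (s / b) := by field_simp
  set y := s / b
  have h4 := H4 s
  have h1 := pow_ge (show 1 ≤ k by omega) y
  have hnb2 : 1 ≤ n * b ^ 2 := by
    rw [← hnb]; gcongr ?_ * ?_
    exact pow_le_pow_of_le_one hb0.le hb1 (by omega)
  have h2 : y ^ 2 - 1 ≤ n * min (s ^ 2) (s ^ (2 * k)) := by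
    rcases min_cases (s ^ 2) (s ^ (2 * k)) with ⟨e, _⟩ | ⟨e, _⟩ <;> rw [e, hs, mul_pow, ← mul_assoc]
    · nlinarith [sq_nonneg y]
    · rw [hnb]; linarith
  have h3 : (n : ℝ) * (c * min (s ^ 2) (s ^ (2 * k))) ≤ n * hfun ρ s := by gcongr
  nlinarith
end

section
variable {ρ : Measure ℝ} [IsProbabilityMeasure ρ] {L : ℝ}

lemma bA (hL : 1 ≤ L) (hρ : ∀ᵐ x ∂ρ, |x| ≤ L) {k : ℕ} (hk : 2 ≤ k) {c C1 C2 : ℝ} (hc : 0 < c)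
    (H4 : ∀ s, c * min (s ^ 2) (s ^ (2 * k)) ≤ hfun ρ s) (hC1 : 0 ≤ C1) (hC2 : 0 ≤ C2)
    (H1 : ∀ s, |deriv (hfun ρ) s| ≤ C1 * |s| ^ (2 * k - 1))
    (H2 : ∀ s, |deriv (deriv (hfun ρ)) s| ≤ C2 * |s| ^ 2) :
    ∃ D, 0 ≤ D ∧ ∀ n : ℕ, 1 ≤ n → ∀ b : ℝ, 0 < b → b ≤ 1 → n * b ^ (2 * k) = 1 → ∀ w : ℝ,
      |(∫ s, J ρ n (fun x => ind (n * w) (∑ j, x j)) s) - ∫ s in Set.Iic w, exp (-(n * hfun ρ s))|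
      ≤ D * b ^ 3 := by
  obtain ⟨M, hM0, hM⟩ := gauss_dom hc (4 * k)
  set K := exp c * M with hK
  have hK0 : 0 < K := by positivity
  refine ⟨(C1 ^ 2 * K + C2 * K + 4 * L ^ 2 * K) * √(π / (c / 2)) + (C1 * K * 14 * exp (1 / 2)) * π,
    by positivity, fun n hn b hb0 hb1 hnb w => ?_⟩
  have hn0 : (0 : ℝ) < n := by exact_mod_cast hn
  have hpg := p_gauss (ρ := ρ) hk hb0 hb1 hnb hc H4
  have hpj : ∀ j ≤ 4 * k, ∀ s, (1 + |s / b|) ^ j * exp (-(n * hfun ρ s))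
      ≤ K * exp (-(c / 2) * (s / b) ^ 2) := fun j hj s => by
    calc _ ≤ (1 + |s / b|) ^ j * (exp c * exp (-c * (s / b) ^ 2)) := by gcongr; exact hpg s
      _ = exp c * ((1 + |s / b|) ^ j * exp (-c * (s / b) ^ 2)) := by ring
      _ ≤ exp c * (M * exp (-(c / 2) * (s / b) ^ 2)) := by
          gcongr exp c * ?_
          exact hM j hj _
      _ = _ := by ring
  have hl0 : 0 < b ^ k := by positivity
  have hnl : n * (b ^ k) ^ 2 = 1 := by rw [← pow_mul, mul_comm k]; exact hnb
  obtain ⟨gi, ge⟩ := G_int hc hb0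
  obtain ⟨ci, ce⟩ := cauchy_int w hl0
  have habs : ∀ s : ℝ, |s| = b * |s / b| := fun s => by
    rw [abs_div, abs_of_pos hb0]; field_simp
  have hlb2 : b ^ k ≤ b ^ 2 := pow_le_pow_of_le_one hb0.le hb1 hk
  have hlb : b ^ k ≤ b := pow_le_of_le_one hb0.le hb1 (by omega)
  -- shifted term
  have hsh : ∀ s e : ℝ, |e| ≤ b → |deriv (hfun ρ) s| * exp (-(n * hfun ρ (s + e)))
      ≤ C1 * K * b ^ 3 := fun s e he => by
    have h1 : |s| ≤ b * (1 + |(s + e) / b|) := by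
      have h2 := habs (s + e)
      have h3 : |s| ≤ |s + e| + |e| := by
        calc |s| = |s + e - e| := by ring_nf
          _ ≤ _ := abs_sub _ _
      linarith
    calc _ ≤ (C1 * |s| ^ (2 * k - 1)) * exp (-(n * hfun ρ (s + e))) := by gcongr; exact H1 s
      _ ≤ (C1 * (b * (1 + |(s + e) / b|)) ^ (2 * k - 1)) * exp (-(n * hfun ρ (s + e))) := by gcongr
      _ = C1 * b ^ (2 * k - 1) * ((1 + |(s + e) / b|) ^ (2 * k - 1) *
            exp (-(n * hfun ρ (s + e)))) := by rw [mul_pow]; ring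
      _ ≤ C1 * b ^ 3 * (K * 1) := by
          gcongr ?_ * ?_ * ?_
          · exact pow_le_pow_of_le_one hb0.le hb1 (by omega)
          · refine (hpj _ (by omega) _).trans ?_
            gcongr
            rw [exp_le_one_iff]
            have : 0 ≤ (c / 2) * ((s + e) / b) ^ 2 := by positivity
            linarith
      _ = _ := by ring
  have hI := main_int hL hρ hn w hC1 H1 hl0 hnl
    (fun s => b ^ 2 * (C1 ^ 2 * K + C2 * K + 4 * L ^ 2 * K) * exp (-(c / 2) * (s / b) ^ 2)
      + (C1 * K * 14 * exp (1 / 2)) * b ^ 3 * (1 / b ^ k * (1 + ((s - w) / b ^ k) ^ 2)⁻¹))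
    ((gi.const_mul _).add (ci.const_mul _)) (fun s => ?_)
  · rw [integral_add (gi.const_mul _) (ci.const_mul _), integral_const_mul, integral_const_mul,
      ge, ce] at hI
    refine hI.trans (le_of_eq ?_)
    ring
  · set p := exp (-(n * hfun ρ s))
    have hp : 0 < p := exp_pos _
    set G := exp (-(c / 2) * (s / b) ^ 2)
    have hy : |s / b| ≤ 1 + |s / b| := by linarith
    have t1 : n * deriv (hfun ρ) s ^ 2 * p ≤ b ^ 2 * (C1 ^ 2 * K) * G := by
      calc n * deriv (hfun ρ) s ^ 2 * p = n * |deriv (hfun ρ) s| ^ 2 * p := by rw [sq_abs]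
        _ ≤ n * (C1 * |s| ^ (2 * k - 1)) ^ 2 * p := by gcongr; exact H1 s
        _ ≤ n * (C1 * (b * (1 + |s / b|)) ^ (2 * k - 1)) ^ 2 * p := by
            rw [habs s]; gcongr
        _ = C1 ^ 2 * (n * b ^ (2 * k)) * b ^ (2 * k - 2) * ((1 + |s / b|) ^ (2 * (2 * k - 1)) * p) := by
            rw [mul_pow, mul_pow, mul_pow, ← pow_mul, ← pow_mul, mul_comm (2 * k - 1) 2,
              show 2 * (2 * k - 1) = 2 * k + (2 * k - 2) by omega, pow_add b]
            ring
        _ ≤ C1 ^ 2 * 1 * b ^ 2 * (K * G) := by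
            rw [hnb]
            gcongr ?_ * ?_ * ?_ * ?_
            · exact pow_le_pow_of_le_one hb0.le hb1 (by omega)
            · exact hpj _ (by omega) s
        _ = _ := by ring
    have t3 : |deriv (deriv (hfun ρ)) s| * p ≤ b ^ 2 * (C2 * K) * G := by
      calc _ ≤ (C2 * |s| ^ 2) * p := by gcongr; exact H2 s
        _ ≤ (C2 * (b * (1 + |s / b|)) ^ 2) * p := by rw [habs s]; gcongr
        _ = C2 * b ^ 2 * ((1 + |s / b|) ^ 2 * p) := by rw [mul_pow]; ring
        _ ≤ C2 * b ^ 2 * (K * G) := by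
            gcongr ?_ * ?_
            exact hpj _ (by omega) s
        _ = _ := by ring
    have t4 : 4 * L ^ 2 * b ^ k * p ≤ b ^ 2 * (4 * L ^ 2 * K) * G := by
      have := hpj 0 (by omega) s
      rw [pow_zero, one_mul] at this
      calc _ ≤ 4 * L ^ 2 * b ^ 2 * (K * G) := by gcongr
        _ = _ := by ring
    have t2 : |deriv (hfun ρ) s| * (7 / b ^ k / (1 + (b ^ k) ^ 2 * (n * s - n * w) ^ 2) * exp (1 / 2) *
      (exp (-(n * hfun ρ (s + b ^ k))) + exp (-(n * hfun ρ (s - b ^ k))))) ≤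
      (C1 * K * 14 * exp (1 / 2)) * b ^ 3 * (1 / b ^ k * (1 + ((s - w) / b ^ k) ^ 2)⁻¹) := by
      have u1 := hsh s (b ^ k) (by rwa [abs_of_pos hl0])
      have u2 := hsh s (-b ^ k) (by rwa [abs_neg, abs_of_pos hl0])
      rw [← sub_eq_add_neg] at u2
      have e1 : (b ^ k) ^ 2 * (n * s - n * w) ^ 2 = ((s - w) / b ^ k) ^ 2 := by
        rw [div_pow, eq_div_iff (by positivity), ← mul_sub, mul_pow]
        calc _ = (n * (b ^ k) ^ 2) ^ 2 * (s - w) ^ 2 := by ring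
          _ = _ := by rw [hnl]; ring
      rw [e1]
      set R := (1 + ((s - w) / b ^ k) ^ 2)⁻¹ with hR
      have hR0 : 0 < R := by positivity
      calc _ = (|deriv (hfun ρ) s| * exp (-(n * hfun ρ (s + b ^ k))) +
              |deriv (hfun ρ) s| * exp (-(n * hfun ρ (s - b ^ k)))) * (7 * exp (1 / 2) * (1 / b ^ k * R)) := by
            rw [hR]; ring
        _ ≤ (C1 * K * b ^ 3 + C1 * K * b ^ 3) * (7 * exp (1 / 2) * (1 / b ^ k * R)) := by
            gcongr
        _ = _ := by ring
    linarith

lemma abs_exp_sub (u v : ℝ) : |exp (-u) - exp (-v)| ≤ |u - v| * (exp (-u) + exp (-v)) := by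
  have key : ∀ u v : ℝ, u ≤ v → |exp (-u) - exp (-v)| ≤ |u - v| * (exp (-u) + exp (-v)) := by
    intro u v h
    have h1 : exp (-v) ≤ exp (-u) := exp_le_exp.2 (by linarith)
    have h2 := add_one_le_exp (u - v)
    have h3 : exp (-v) = exp (-u) * exp (u - v) := by rw [← exp_add]; ring_nf
    rw [abs_of_nonneg (by linarith), abs_of_nonpos (by linarith)]
    have h4 := exp_pos (-u)
    have h5 := exp_pos (-v)
    have : exp (-u) * (u - v + 1) ≤ exp (-v) := by rw [h3]; gcongr
    nlinarith
  rcases le_total u v with h | h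
  · exact key u v h
  · rw [abs_sub_comm, abs_sub_comm u, add_comm]; exact key v u h

lemma bB (hρ : ∀ᵐ x ∂ρ, |x| ≤ L) {k : ℕ} (hk : 2 ≤ k) {a c C3 : ℝ} (hc : 0 < c) (hca : c ≤ a)
    (H4 : ∀ s, c * min (s ^ 2) (s ^ (2 * k)) ≤ hfun ρ s) (hC3 : 0 ≤ C3)
    (H3 : ∀ s, |hfun ρ s - a * s ^ (2 * k)| ≤ C3 * |s| ^ (2 * k + 2)) :
    Integrable (fun y : ℝ => exp (-(a * y ^ (2 * k)))) ∧
    ∃ D, 0 ≤ D ∧ ∀ n : ℕ, 1 ≤ n → ∀ b : ℝ, 0 < b → b ≤ 1 → n * b ^ (2 * k) = 1 →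
      |(∫ s, exp (-(n * hfun ρ s))) - b * ∫ y : ℝ, exp (-(a * y ^ (2 * k)))| ≤ D * b ^ 3 ∧
      ∀ z : ℝ, |(∫ s in Set.Iic (b * z), exp (-(n * hfun ρ s)))
        - b * ∫ y in Set.Iic z, exp (-(a * y ^ (2 * k)))| ≤ D * b ^ 3 := by
  obtain ⟨M, hM0, hM⟩ := gauss_dom hc (4 * k)
  have hfb : ∀ y : ℝ, exp (-(a * y ^ (2 * k))) ≤ exp c * exp (-c * y ^ 2) := fun y => by
    rw [← exp_add, exp_le_exp]
    have h1 := pow_ge (show 1 ≤ k by omega) y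
    have h2 : 0 ≤ y ^ (2 * k) := by rw [pow_mul]; positivity
    nlinarith
  have hfi : Integrable (fun y : ℝ => exp (-(a * y ^ (2 * k)))) := by
    refine ((integrable_exp_neg_mul_sq hc).const_mul (exp c)).mono' (by fun_prop)
      (Filter.Eventually.of_forall fun y => ?_)
    rw [norm_eq_abs, abs_of_pos (exp_pos _)]
    exact hfb y
  refine ⟨hfi, C3 * (2 * exp c * M) * √(π / (c / 2)), by positivity, fun n hn b hb0 hb1 hnb => ?_⟩
  have hpg := p_gauss (ρ := ρ) hk hb0 hb1 hnb hc H4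
  have hn0 : (0 : ℝ) < n := by exact_mod_cast hn
  obtain ⟨gi, ge⟩ := G_int hc hb0
  have habs : ∀ s : ℝ, |s| = b * |s / b| := fun s => by
    rw [abs_div, abs_of_pos hb0]; field_simp
  have ip : Integrable (fun s => exp (-(n * hfun ρ s))) := by
    have := p_int hρ hn (fun _ => 1) (by fun_prop) (K := 1) (m := 0) (by simp)
    simpa using this
  have ifb : Integrable (fun s : ℝ => exp (-(a * (s / b) ^ (2 * k)))) := hfi.comp_div hb0.ne'
  have hpt : ∀ s, |exp (-(n * hfun ρ s)) - exp (-(a * (s / b) ^ (2 * k)))|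
      ≤ b ^ 2 * (C3 * (2 * exp c * M)) * exp (-(c / 2) * (s / b) ^ 2) := fun s => by
    have e1 : n * hfun ρ s - a * (s / b) ^ (2 * k) = n * (hfun ρ s - a * s ^ (2 * k)) := by
      rw [div_pow]
      have : (s ^ (2 * k) / b ^ (2 * k)) = n * s ^ (2 * k) := by
        rw [div_eq_iff (by positivity)]
        linear_combination (-s ^ (2 * k)) * hnb
      rw [this]; ring
    have h1 : |n * hfun ρ s - a * (s / b) ^ (2 * k)| ≤ C3 * b ^ 2 * (1 + |s / b|) ^ (2 * k + 2) := by
      rw [e1, abs_mul, Nat.abs_cast]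
      calc _ ≤ n * (C3 * |s| ^ (2 * k + 2)) := by gcongr; exact H3 s
        _ ≤ n * (C3 * (b * (1 + |s / b|)) ^ (2 * k + 2)) := by
            rw [habs s]; gcongr; linarith
        _ = (n * b ^ (2 * k)) * (C3 * b ^ 2 * (1 + |s / b|) ^ (2 * k + 2)) := by
            rw [mul_pow, pow_add b]; ring
        _ = _ := by rw [hnb, one_mul]
    calc _ ≤ |n * hfun ρ s - a * (s / b) ^ (2 * k)| * (exp (-(n * hfun ρ s)) +
            exp (-(a * (s / b) ^ (2 * k)))) := abs_exp_sub _ _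
      _ ≤ (C3 * b ^ 2 * (1 + |s / b|) ^ (2 * k + 2)) * (exp c * exp (-c * (s / b) ^ 2)
            + exp c * exp (-c * (s / b) ^ 2)) := by
          gcongr
          · exact hpg s
          · exact hfb _
      _ = b ^ 2 * C3 * (2 * exp c) * ((1 + |s / b|) ^ (2 * k + 2) * exp (-c * (s / b) ^ 2)) := by ring
      _ ≤ b ^ 2 * C3 * (2 * exp c) * (M * exp (-(c / 2) * (s / b) ^ 2)) := by
          gcongr ?_ * ?_
          exact hM _ (by omega) _
      _ = _ := by ring
  have hset : ∀ T : Set ℝ, |(∫ s in T, exp (-(n * hfun ρ s))) - ∫ s in T, exp (-(a * (s / b) ^ (2 * k)))|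
      ≤ C3 * (2 * exp c * M) * √(π / (c / 2)) * b ^ 3 := fun T => by
    rw [← integral_sub ip.integrableOn ifb.integrableOn, ← norm_eq_abs]
    have h1 := norm_integral_le_of_norm_le (μ := volume.restrict T)
      (f := fun s => exp (-(n * hfun ρ s)) - exp (-(a * (s / b) ^ (2 * k)))) (gi.const_mul
      (b ^ 2 * (C3 * (2 * exp c * M)))).integrableOn (Filter.Eventually.of_forall fun s => hpt s)
    refine h1.trans ?_
    have h2 := setIntegral_le_integral (s := T) (gi.const_mul (b ^ 2 * (C3 * (2 * exp c * M))))
      (Filter.Eventually.of_forall fun s => by positivity)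
    refine h2.trans (le_of_eq ?_)
    rw [integral_const_mul, ge]; ring
  constructor
  · have := hset Set.univ
    simp only [setIntegral_univ] at this
    rwa [Measure.integral_comp_div (fun y => exp (-(a * y ^ (2 * k)))), smul_eq_mul,
      abs_of_pos hb0] at this
  · intro z
    have h1 := hset (Set.Iic (b * z))
    have e : ∫ s in Set.Iic (b * z), exp (-(a * (s / b) ^ (2 * k)))
        = b * ∫ y in Set.Iic z, exp (-(a * y ^ (2 * k))) := by
      rw [← integral_indicator measurableSet_Iic, ← integral_indicator measurableSet_Iic]
      have := Measure.integral_comp_div ((Set.Iic z).indicator fun y => exp (-(a * y ^ (2 * k)))) b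
      rw [smul_eq_mul, abs_of_pos hb0] at this
      rw [← this]
      congr with s
      by_cases hs : s ≤ b * z
      · rw [Set.indicator_of_mem (by exact hs), Set.indicator_of_mem]
        rw [Set.mem_Iic, div_le_iff₀ hb0, mul_comm]; exact hs
      · rw [Set.indicator_of_notMem (by exact hs), Set.indicator_of_notMem]
        rw [Set.mem_Iic, div_le_iff₀ hb0, mul_comm]; exact hs
    rwa [e] at h1

lemma bC (hρ : ∀ᵐ x ∂ρ, |x| ≤ L) {k : ℕ} {a C3 : ℝ} (ha : 0 < a) (hC3 : 0 ≤ C3)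
    (H3 : ∀ s, |hfun ρ s - a * s ^ (2 * k)| ≤ C3 * |s| ^ (2 * k + 2))
    {n : ℕ} (hn : 1 ≤ n) {b : ℝ} (hb0 : 0 < b) (hb1 : b ≤ 1) (hnb : n * b ^ (2 * k) = 1) :
    exp (-(a + C3)) * b ≤ ∫ s, exp (-(n * hfun ρ s)) := by
  have hn0 : (0 : ℝ) < n := by exact_mod_cast hn
  have ip : Integrable (fun s => exp (-(n * hfun ρ s))) := by
    have := p_int hρ hn (fun _ => 1) (by fun_prop) (K := 1) (m := 0) (by simp)
    simpa using this
  have h1 := setIntegral_le_integral (s := Set.Icc 0 b) ip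
      (Filter.Eventually.of_forall fun s => (exp_pos _).le)
  refine le_trans ?_ h1
  have h2 := setIntegral_ge_of_const_le_real (μ := volume) (s := Set.Icc 0 b)
    (f := fun s => exp (-(n * hfun ρ s))) (c := exp (-(a + C3))) measurableSet_Icc (by simp)
    (fun s hs => ?_) ip.integrableOn
  · simpa [Measure.real, hb0.le] using h2
  · rw [exp_le_exp, neg_le_neg_iff]
    have h3 := (abs_le.1 (H3 s)).2
    rw [abs_of_nonneg hs.1] at h3
    have h4 : hfun ρ s ≤ a * b ^ (2 * k) + C3 * b ^ (2 * k) := by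
      have u1 : s ^ (2 * k) ≤ b ^ (2 * k) := pow_le_pow_left₀ hs.1 hs.2 _
      have u2 : s ^ (2 * k + 2) ≤ b ^ (2 * k) :=
        (pow_le_pow_left₀ hs.1 hs.2 _).trans (pow_le_pow_of_le_one hb0.le hb1 (by omega))
      nlinarith
    calc n * hfun ρ s ≤ n * (a * b ^ (2 * k) + C3 * b ^ (2 * k)) := by gcongr
      _ = (n * b ^ (2 * k)) * (a + C3) := by ring
      _ = _ := by rw [hnb, one_mul]
end
end CW

theorem stmt_5 (ρ : Measure ℝ) [IsProbabilityMeasure ρ] (L : ℝ) (k : ℕ) (c₁ : ℝ)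
    -- `ρ` is symmetric
    (hsym : ρ.map (fun x => -x) = ρ)
    -- `∫ x² dρ = 1`
    (hvar : (∫ x, x ^ 2 ∂ρ) = 1)
    -- compact support: `ρ([-L, L]) = 1`
    (hL : ρ (Set.Icc (-L) L) = 1)
    -- `h'(s) = 0` has the unique root `s = 0`
    (hroot : ∀ s : ℝ, deriv (hfun ρ) s = 0 ↔ s = 0)
    (hk : 2 ≤ k)
    (hder : ∀ i : ℕ, i ≤ 2 * k - 1 → iteratedDeriv i (hfun ρ) 0 = 0)
    (hpos : 0 < iteratedDeriv (2 * k) (hfun ρ) 0)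
    -- `c₁` is the normalizing constant of the density of `Y`
    (hc₁ : (∫ y : ℝ, c₁ * Real.exp (-(iteratedDeriv (2 * k) (hfun ρ) 0 * y ^ (2 * k)
        / (Nat.factorial (2 * k))))) = 1) :
    ∃ C : ℝ, 0 < C ∧ ∀ n : ℕ, 1 ≤ n → ∀ z : ℝ,
      |(cwMeasure ρ n {x | (n : ℝ) ^ ((1 : ℝ) / (2 * (k : ℝ))) * ((∑ i, x i) / n) ≤ z}).toReal
          - (∫ y in Set.Iic z, c₁ * Real.exp (-(iteratedDeriv (2 * k) (hfun ρ) 0 * y ^ (2 * k)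
              / (Nat.factorial (2 * k)))))|
        ≤ C * (n : ℝ) ^ (-(1 : ℝ) / (k : ℝ)) := by
  have hρ : ∀ᵐ x ∂ρ, |x| ≤ max L 1 := by
    have h1 : ∀ᵐ x ∂ρ, x ∈ Set.Icc (-L) L := by
      rw [← prob_compl_eq_zero_iff measurableSet_Icc] at hL
      exact hL
    filter_upwards [h1] with x hx
    exact (abs_le.2 hx).trans (le_max_left _ _)
  have hL1 : 1 ≤ max L 1 := le_max_right _ _
  obtain ⟨C1, hC1, H1⟩ := CW.H1 hL1 hρ hk hder
  obtain ⟨C2, hC2, H2⟩ := CW.H2 hL1 hρ hk hder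
  obtain ⟨C3, hC3, H3⟩ := CW.H3 hL1 hρ hsym hk hder
  obtain ⟨c0, hc0, H4⟩ := CW.H4 hL1 hρ hsym hk hroot hder hpos
  simp only [← div_mul_eq_mul_div] at hc₁ ⊢
  set a := iteratedDeriv (2 * k) (hfun ρ) 0 / (Nat.factorial (2 * k)) with ha
  have ha0 : 0 < a := by positivity
  have hc : 0 < min c0 a := lt_min hc0 ha0
  have H4' : ∀ s, min c0 a * min (s ^ 2) (s ^ (2 * k)) ≤ hfun ρ s := fun s => by
    refine le_trans ?_ (H4 s)
    have : 0 ≤ min (s ^ 2) (s ^ (2 * k)) :=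
      le_min (by positivity) (by rw [pow_mul]; positivity)
    gcongr
    exact min_le_left _ _
  obtain ⟨DA, hDA, hA⟩ := CW.bA hL1 hρ hk hc H4' hC1 hC2 H1 H2
  obtain ⟨hfi, DB, hDB, hB⟩ := CW.bB hρ hk hc (min_le_right _ _) H4' hC3 H3
  rw [integral_const_mul] at hc₁
  simp only [integral_const_mul]
  set Za := ∫ y : ℝ, exp (-(a * y ^ (2 * k))) with hZa
  have hZa0 : 0 < Za := integral_exp_pos hfi
  have hc1 : c₁ = 1 / Za := by rw [eq_div_iff hZa0.ne']; exact hc₁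
  set κ := exp (-(a + C3)) with hκ
  have hκ0 : 0 < κ := exp_pos _
  refine ⟨(DA + DB + DB) / κ + 1, by positivity, fun n hn z => ?_⟩
  have hn0 : (0 : ℝ) < n := by exact_mod_cast hn
  have hk0 : (k : ℝ) ≠ 0 := by have : 0 < k := by omega
                               positivity
  set b := (n : ℝ) ^ (-((1 : ℝ) / (2 * (k : ℝ)))) with hb
  have hb0 : 0 < b := rpow_pos_of_pos hn0 _
  have hb1 : b ≤ 1 := rpow_le_one_of_one_le_of_nonpos (by exact_mod_cast hn)
    (by rw [neg_nonpos]; positivity)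
  have hnb : n * b ^ (2 * k) = 1 := by
    rw [hb, ← rpow_natCast, ← rpow_mul hn0.le]
    have : -((1 : ℝ) / (2 * (k : ℝ))) * ((2 * k : ℕ) : ℝ) = -1 := by push_cast; field_simp
    rw [this, rpow_neg_one]; field_simp
  have hb2 : (n : ℝ) ^ (-(1 : ℝ) / (k : ℝ)) = b ^ 2 := by
    rw [hb, ← rpow_natCast, ← rpow_mul hn0.le]
    congr 1; push_cast; field_simp
  have hset : {x : Fin n → ℝ | (n : ℝ) ^ ((1 : ℝ) / (2 * (k : ℝ))) * ((∑ i, x i) / n) ≤ z}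
      = {x | ∑ i, x i ≤ n * (b * z)} := by
    have e : (n : ℝ) ^ ((1 : ℝ) / (2 * (k : ℝ))) = b⁻¹ := by rw [hb, rpow_neg hn0.le, inv_inv]
    ext x
    simp only [Set.mem_setOf_eq]
    rw [e, inv_mul_le_iff₀ hb0, div_le_iff₀ hn0, mul_comm (b * z)]
  rw [hset, hb2]
  have hlaw := CW.cw_law hL1 hρ hn (n * (b * z))
  have hA' := hA n hn b hb0 hb1 hnb (b * z)
  obtain ⟨hB1, hB2⟩ := hB n hn b hb0 hb1 hnb
  have hB3 := hB2 z
  have hZl := CW.bC hρ ha0 hC3 H3 hn hb0 hb1 hnb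
  rw [← hlaw] at hA'
  set P := (cwMeasure ρ n {x | ∑ i, x i ≤ n * (b * z)}).toReal
  set Z := ∫ s, exp (-(n * hfun ρ s))
  set Vn := ∫ s in Set.Iic (b * z), exp (-(n * hfun ρ s))
  set V := ∫ y in Set.Iic z, exp (-(a * y ^ (2 * k))) with hV
  have hV0 : 0 ≤ V := integral_nonneg fun y => (exp_pos _).le
  have hV1 : V ≤ Za := setIntegral_le_integral hfi
    (Filter.Eventually.of_forall fun s => (exp_pos _).le)
  rw [hc1]
  have hZ0 : 0 < Z := lt_of_lt_of_le (by positivity) hZl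
  have hr1 : 1 / Za * V ≤ 1 := by
    rw [one_div_mul_eq_div, div_le_one hZa0]; exact hV1
  have hr0 : 0 ≤ 1 / Za * V := by positivity
  set r := 1 / Za * V with hr
  have hVr : V = r * Za := by rw [hr]; field_simp
  have hmain : |P - r| * Z ≤ (DA + DB + DB) * b ^ 3 := by
    have e : (P - r) * Z = (P * Z - Vn) + (Vn - b * V) - r * (Z - b * Za) := by
      rw [hVr]; ring
    have h1 : |r * (Z - b * Za)| ≤ DB * b ^ 3 := by
      rw [abs_mul, abs_of_nonneg hr0]
      exact (mul_le_of_le_one_left (abs_nonneg _) hr1).trans hB1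
    calc |P - r| * Z = |(P - r) * Z| := by rw [abs_mul, abs_of_pos hZ0]
      _ ≤ |P * Z - Vn| + |Vn - b * V| + |r * (Z - b * Za)| := by
          rw [e]
          exact (abs_sub _ _).trans (add_le_add_left (abs_add_le _ _) _)
      _ ≤ _ := by linarith
  have h2 : |P - r| * (κ * b) ≤ (DA + DB + DB) * b ^ 3 :=
    (mul_le_mul_of_nonneg_left hZl (abs_nonneg _)).trans hmain
  have h3 : |P - r| ≤ (DA + DB + DB) / κ * b ^ 2 := by
    rw [← mul_le_mul_iff_left₀ (by positivity : 0 < κ * b)]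
    refine h2.trans (le_of_eq ?_)
    field_simp
  have : 0 ≤ b ^ 2 := by positivity
  linarith
end
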